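/- arXiv:2002.07925 — 2 statements merged into one kernel-verified Lean document; each statement's English description precedes it below -/
import Mathlib

section
/- If G is a planar triangulation on n vertices different from K4, then ν(G) ≥ (2/3)(n − 2). -/
open SimpleGraph

variable {V : Type*}

/-- A triangle transversal of `G`: a set of edges of `G` meeting every triangle of `G`
(so that its removal leaves a triangle-free graph). -/
def IsTriangleTransversal (G : SimpleGraph V) (X : Finset (Sym2 V)) : Prop :=
  ↑X ⊆ G.edgeSet ∧
    ∀ t : Finset V, G.IsNClique 3 t → ∃ e ∈ X, ∀ v ∈ e, v ∈ t

/-- A triangle packing of `G`: a set of pairwise edge-disjoint triangles of `G`. -/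
def IsTrianglePacking (G : SimpleGraph V) (Y : Finset (Finset V)) : Prop :=
  (∀ t ∈ Y, G.IsNClique 3 t) ∧
    ∀ s ∈ Y, ∀ t ∈ Y, s ≠ t →
      ∀ e ∈ G.edgeSet, ¬ ((∀ v ∈ e, v ∈ s) ∧ (∀ v ∈ e, v ∈ t))

/-- `tau G` is the minimum size of a triangle transversal of `G`. -/
noncomputable def tau (G : SimpleGraph V) : ℕ :=
  sInf {n | ∃ X : Finset (Sym2 V), IsTriangleTransversal G X ∧ X.card = n}

/-- `nu G` is the maximum size of a triangle packing of `G`. -/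
noncomputable def nu (G : SimpleGraph V) : ℕ :=
  sSup {n | ∃ Y : Finset (Finset V), IsTrianglePacking G Y ∧ Y.card = n}

/-- A drawing of the graph `G` in the plane (identified with `ℂ`): vertices are mapped to
distinct points, each edge is realized by a simple continuous arc joining the images of its
endpoints, arcs of distinct edges meet only in common endpoints, and no arc passes through
the image of any other vertex. -/
structure PlaneEmbedding (G : SimpleGraph V) where
  vtx : V → ℂ
  arc : V → V → Set ℂ
  vtx_inj : Function.Injective vtx
  arc_symm : ∀ u v : V, arc u v = arc v u
  arc_curve : ∀ ⦃u v : V⦄, G.Adj u v → ∃ γ : ℝ → ℂ,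
    ContinuousOn γ (Set.Icc 0 1) ∧ Set.InjOn γ (Set.Icc 0 1) ∧
    γ 0 = vtx u ∧ γ 1 = vtx v ∧ arc u v = γ '' Set.Icc 0 1
  arc_inter : ∀ ⦃u v x y : V⦄, G.Adj u v → G.Adj x y → s(u, v) ≠ s(x, y) →
    arc u v ∩ arc x y ⊆ ({vtx u, vtx v} : Set ℂ) ∩ ({vtx x, vtx y} : Set ℂ)
  arc_vtx : ∀ ⦃u v : V⦄, G.Adj u v → ∀ w : V, vtx w ∈ arc u v → w = u ∨ w = v

/-- The set of points of the plane used by a plane embedding. -/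
def PlaneEmbedding.drawing {G : SimpleGraph V} (E : PlaneEmbedding G) : Set ℂ :=
  Set.range E.vtx ∪ ⋃ (u : V) (v : V) (_ : G.Adj u v), E.arc u v

/-- A graph is planar if it admits a plane embedding. -/
def PlanarGraph (G : SimpleGraph V) : Prop := Nonempty (PlaneEmbedding G)

/-- A maximal planar graph (planar triangulation): a planar graph such that adding any
edge between nonadjacent vertices destroys planarity. -/
def MaximalPlanar (G : SimpleGraph V) : Prop :=
  PlanarGraph G ∧ ∀ u v : V, u ≠ v → ¬ G.Adj u v →
    ¬ PlanarGraph (G ⊔ SimpleGraph.fromEdgeSet {s(u, v)})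

/-!
The faces of a polygonal drawing of `G` triangulate a closed surface. Two vertices on the boundary
of a face can be joined by a polygonal arc inside the face, so they are adjacent by maximality.
Four vertices `a`, `b`, `c`, `d` cannot all lie on the boundary of a face `f`: each of the cycles
`abc`, `abd` and `acd` would have `f` and the fourth vertex on the same side, while of the three
edges leaving `a` some two separate the third from `f`. Sides of a cycle are told apart by winding
numbers, read off from the jumps of an argument at `a`, without the Jordan curve theorem.

Homology over `𝔽₂` bounds the Euler characteristic by two, which gives at least `2(n - 2)` faces.
The dual graph has maximum degree at most three and contains a `K₄` only if `G = K₄`, so otherwise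
it is `3`-colorable by Brooks' theorem. The faces of one color are edge-disjoint triangles, and
some color is used for at least a third of the faces.
-/

section Brooks

open Finset

variable {W : Type*} {Γ : SimpleGraph W} {k : ℕ}

/-- `c` is a proper coloring of the subgraph of `Γ` induced on `S`. Colorings of subgraphs are total
functions whose values off the subgraph are ignored, so that they can be extended by
`Function.update`. -/
def IsProperOn (Γ : SimpleGraph W) (S : Finset W) (c : W → Fin k) : Prop :=
  ∀ x ∈ S, ∀ y ∈ S, Γ.Adj x y → c x ≠ c y

namespace IsProperOn

variable {S U R : Finset W} {c : W → Fin k} {x : W}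

theorem update [DecidableEq W] (hc : IsProperOn Γ S c) (hx : x ∉ S) {a : Fin k}
    (ha : ∀ y ∈ S, Γ.Adj x y → c y ≠ a) :
    IsProperOn Γ (insert x S) (Function.update c x a) := by
  have hne : ∀ y ∈ S, y ≠ x := fun y hy => ne_of_mem_of_not_mem hy hx
  intro y hy z hz hyz
  rcases mem_insert.1 hy with rfl | hyS <;> rcases mem_insert.1 hz with rfl | hzS
  · exact (Γ.loopless.irrefl _ hyz).elim
  · rw [Function.update_self, Function.update_of_ne (hne z hzS)]
    exact (ha z hzS hyz).symm
  · rw [Function.update_self, Function.update_of_ne (hne y hyS)]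
    exact ha y hyS hyz.symm
  · rw [Function.update_of_ne (hne z hzS), Function.update_of_ne (hne y hyS)]
    exact hc y hyS z hzS hyz

theorem exists_update [DecidableEq W] [DecidableRel Γ.Adj] (hc : IsProperOn Γ S c) (hx : x ∉ S)
    (hcard : #({y ∈ S | Γ.Adj x y}.image c) < k) :
    ∃ a, IsProperOn Γ (insert x S) (Function.update c x a) := by
  obtain ⟨a, ha⟩ : ∃ a, a ∉ {y ∈ S | Γ.Adj x y}.image c := by
    by_contra! hall
    rw [eq_univ_iff_forall.2 hall, card_univ, Fintype.card_fin] at hcard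
    exact hcard.false
  exact ⟨a, hc.update hx fun y hy hxy h => ha (mem_image.2 ⟨y, mem_filter.2 ⟨hy, hxy⟩, h⟩)⟩

theorem union [DecidableEq W] (hsep : ∀ x ∈ S, ∀ y ∈ U \ S, ¬ Γ.Adj x y)
    (hc : IsProperOn Γ S c) {d : W → Fin k} (hd : IsProperOn Γ (U \ S) d) :
    IsProperOn Γ U fun x => if x ∈ S then c x else d x := by
  intro x hx y hy hxy
  dsimp only
  split_ifs with hxS hyS hyS
  · exact hc x hxS y hyS hxy
  · exact (hsep x hxS y (mem_sdiff.2 ⟨hy, hyS⟩) hxy).elim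
  · exact (hsep y hyS x (mem_sdiff.2 ⟨hx, hxS⟩) hxy.symm).elim
  · exact hd x (mem_sdiff.2 ⟨hx, hxS⟩) y (mem_sdiff.2 ⟨hy, hyS⟩) hxy

theorem exists_of_common_color [DecidableEq W] [DecidableRel Γ.Adj] {r u y : W} (hr : r ∈ U)
    (hdeg : #{z ∈ U | Γ.Adj r z} ≤ k) (hu : u ∈ U) (hy : y ∈ U) (huy : u ≠ y) (hru : Γ.Adj r u)
    (hry : Γ.Adj r y) (hc : IsProperOn Γ (U \ {r}) c) (hcuy : c u = c y) :
    ∃ c' : W → Fin k, IsProperOn Γ U c' := by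
  have himage : {z ∈ U \ {r} | Γ.Adj r z}.image c ⊆ ({z ∈ U | Γ.Adj r z}.erase u).image c := by
    intro a ha
    obtain ⟨z, hz, rfl⟩ := mem_image.1 ha
    simp only [mem_filter, mem_sdiff] at hz
    by_cases hzu : z = u
    · exact mem_image.2 ⟨y, by simp [huy.symm, hy, hry], by rw [hzu, hcuy]⟩
    · exact mem_image_of_mem c (by simp [hzu, hz])
  have hcard : #({z ∈ U \ {r} | Γ.Adj r z}.image c) < k :=
    calc _ ≤ #({z ∈ U | Γ.Adj r z}.erase u) := (card_le_card himage).trans card_image_le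
      _ < #{z ∈ U | Γ.Adj r z} := card_erase_lt_of_mem (by simp [hu, hru])
      _ ≤ k := hdeg
  obtain ⟨a, ha⟩ := hc.exists_update (by simp) hcard
  rw [sdiff_singleton_eq_erase, insert_erase hr] at ha
  exact ⟨_, ha⟩

theorem exists_update_of_adj [DecidableEq W] [DecidableRel Γ.Adj] {T : Finset W} {z : W}
    (hTU : T ⊆ U) (hdeg : #{y ∈ U | Γ.Adj x y} ≤ k) (hx : x ∈ U) (hxT : x ∉ T) (hz : z ∈ T)
    (hxz : Γ.Adj x z) (hc : IsProperOn Γ (U \ insert x T) c) :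
    ∃ a, IsProperOn Γ (U \ T) (Function.update c x a) := by
  have hsub : {y ∈ U \ insert x T | Γ.Adj x y} ⊆ {y ∈ U | Γ.Adj x y}.erase z := by
    intro y hy
    simp only [mem_filter, mem_sdiff, mem_insert, not_or, mem_erase] at hy ⊢
    exact ⟨fun h => hy.1.2.2 (h ▸ hz), hy.1.1, hy.2⟩
  have hcard : #({y ∈ U \ insert x T | Γ.Adj x y}.image c) < k :=
    calc _ ≤ #({y ∈ U | Γ.Adj x y}.erase z) := card_image_le.trans (card_le_card hsub)
      _ < #{y ∈ U | Γ.Adj x y} := card_erase_lt_of_mem (by simp [hTU hz, hxz])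
      _ ≤ k := hdeg
  obtain ⟨a, ha⟩ := hc.exists_update (by simp) hcard
  have hUT : insert x (U \ insert x T) = U \ T := by
    rw [sdiff_insert, insert_erase (mem_sdiff.2 ⟨hx, hxT⟩)]
  exact ⟨a, hUT ▸ ha⟩

/-- The vertices of `R` are colored towards `r`, so that each of them but `r` still has an uncolored
neighbor when its turn comes, while `r` sees a color twice. -/
theorem exists_of_preconnected [DecidableEq W] [DecidableRel Γ.Adj] (hRU : R ⊆ U)
    (hdeg : ∀ x ∈ R, #{y ∈ U | Γ.Adj x y} ≤ k) (hR : (Γ.induce (R : Set W)).Preconnected)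
    {r u y : W} (hr : r ∈ R) (hu : u ∈ U \ R) (hy : y ∈ U \ R) (huy : u ≠ y) (hru : Γ.Adj r u)
    (hry : Γ.Adj r y) (hc : IsProperOn Γ (U \ R) c) (hcuy : c u = c y) :
    ∃ c' : W → Fin k, IsProperOn Γ U c' := by
  classical
  rw [mem_sdiff] at hu hy
  let Extends (T : Finset W) : Prop := ∀ d : W → Fin k, IsProperOn Γ (U \ T) d → d u = d y →
    ∃ d' : W → Fin k, IsProperOn Γ U d'
  have hbase : Extends {r} := fun d hd hduy =>
    hd.exists_of_common_color (hRU hr) (hdeg r hr) hu.1 hy.1 huy hru hry hduy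
  obtain ⟨T, hT, hmax⟩ := exists_max_image {T ∈ R.powerset | r ∈ T ∧ Extends T} card
    ⟨{r}, by simp [hr, hbase]⟩
  obtain ⟨hTR, hrT, hext⟩ : T ⊆ R ∧ r ∈ T ∧ Extends T := by simpa using hT
  suffices hRT : R ⊆ T by
    rw [hRT.antisymm hTR] at hc
    exact hext c hc hcuy
  intro w hw
  by_contra hwT
  obtain ⟨p⟩ := hR ⟨w, hw⟩ ⟨r, hr⟩
  obtain ⟨⟨⟨⟨x, hx⟩, ⟨z, _⟩⟩, hxz⟩, -, hxT, hzT⟩ :=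
    p.exists_boundary_dart {a | a.1 ∉ T} hwT (by simpa using hrT)
  have hxz : Γ.Adj x z := hxz
  have hxT : x ∉ T := hxT
  have hzT : z ∈ T := by simpa using hzT
  have hins : Extends (insert x T) := fun d hd hduy => by
    obtain ⟨a, ha⟩ := hd.exists_update_of_adj (hTR.trans hRU) (hdeg x hx) (hRU hx) hxT hzT hxz
    refine hext _ ha ?_
    rwa [Function.update_of_ne (ne_of_mem_of_not_mem hx hu.2).symm,
      Function.update_of_ne (ne_of_mem_of_not_mem hx hy.2).symm]
  have hle := hmax (insert x T)
    (mem_filter.2 ⟨mem_powerset.2 (insert_subset hx hTR), mem_insert_of_mem hrT, hins⟩)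
  rw [card_insert_of_notMem hxT] at hle
  omega

end IsProperOn

/-- `p 0, …, p m` are the vertices of a path of `Γ` inside `U`; the values of `p` beyond `m` are
ignored. -/
structure IsPathIn (Γ : SimpleGraph W) (U : Finset W) (p : ℕ → W) (m : ℕ) : Prop where
  mem : ∀ i ≤ m, p i ∈ U
  adj : ∀ i < m, Γ.Adj (p i) (p (i + 1))
  injOn : Set.InjOn p (Set.Iic m)

namespace IsPathIn

variable {U : Finset W} {p : ℕ → W} {m : ℕ}

theorem ne (h : IsPathIn Γ U p m) {i j : ℕ} (hi : i ≤ m) (hj : j ≤ m) (hij : i ≠ j) : p i ≠ p j :=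
  h.injOn.ne hi hj hij

theorem length_lt_card (h : IsPathIn Γ U p m) : m < #U := by
  have hle := card_le_card_of_injOn (s := range (m + 1)) (t := U) p
    (fun i hi => h.mem i (by simpa [Nat.lt_succ_iff] using hi))
    (h.injOn.mono fun i hi => by simpa [Nat.lt_succ_iff] using hi)
  simpa [Nat.succ_le_iff] using hle

theorem snoc (h : IsPathIn Γ U p m) {w : W} (hwU : w ∈ U) (hw : Γ.Adj (p m) w)
    (hne : ∀ i ≤ m, p i ≠ w) : IsPathIn Γ U (Function.update p (m + 1) w) (m + 1) := by
  have hold : ∀ i ≤ m, Function.update p (m + 1) w i = p i := fun i hi =>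
    Function.update_of_ne (by omega) _ _
  refine ⟨fun i hi => ?_, fun i hi => ?_, fun i hi j hj hij => ?_⟩
  · rcases Nat.le_succ_iff.1 hi with hi | rfl
    · rw [hold i hi]
      exact h.mem i hi
    · rwa [Function.update_self]
  · rcases Nat.lt_succ_iff_lt_or_eq.1 hi with hi | rfl
    · rw [hold i hi.le, hold (i + 1) hi]
      exact h.adj i hi
    · rwa [hold i le_rfl, Function.update_self]
  · rcases Nat.le_succ_iff.1 hi with hi | rfl <;> rcases Nat.le_succ_iff.1 hj with hj | rfl
    · rw [hold i hi, hold j hj] at hij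
      exact h.injOn hi hj hij
    · rw [hold i hi, Function.update_self] at hij
      exact (hne i hi hij).elim
    · rw [hold j hj, Function.update_self] at hij
      exact (hne j hj hij.symm).elim
    · rfl

theorem exists_maximal (h : IsPathIn Γ U p m) : ∃ n ≥ m, ∃ q, IsPathIn Γ U q n ∧
    (∀ i ≤ m, q i = p i) ∧ ∀ w ∈ U, Γ.Adj (q n) w → ∃ i < n, q i = w := by
  induction hd : #U - m generalizing m p with
  | zero => exact absurd h.length_lt_card (by omega)
  | succ d ih =>
    by_cases hmax : ∀ w ∈ U, Γ.Adj (p m) w → ∃ i < m, p i = w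
    · exact ⟨m, le_rfl, p, h, fun _ _ => rfl, hmax⟩
    push Not at hmax
    obtain ⟨w, hwU, hw, hne⟩ := hmax
    obtain ⟨n, hn, q, hq, hqp, hqmax⟩ := ih (h.snoc hwU hw fun i hi => by
      rcases hi.lt_or_eq with hi | rfl
      exacts [hne i hi, hw.ne]) (by omega)
    refine ⟨n, by omega, q, hq, fun i hi => ?_, hqmax⟩
    rw [hqp i (by omega), Function.update_of_ne (by omega)]

theorem reachable_induce (h : IsPathIn Γ U p m) {R : Set W} {i j : ℕ} (hij : i ≤ j) (hj : j ≤ m)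
    (hR : ∀ l, i ≤ l → l ≤ j → p l ∈ R) :
    (Γ.induce R).Reachable ⟨p i, hR i le_rfl hij⟩ ⟨p j, hR j hij le_rfl⟩ := by
  induction j, hij using Nat.le_induction with
  | base => rfl
  | succ j hij ih =>
    refine (ih (by omega) fun l hil hlj => hR l hil (by omega)).trans (SimpleGraph.Adj.reachable ?_)
    exact h.adj j (by omega)

theorem preconnected_induce_cycle_erase [DecidableEq W] (h : IsPathIn Γ U p m) {i j : ℕ}
    (hji : j ≤ i) (him : i < m) (hmj : Γ.Adj (p m) (p j)) :
    (Γ.induce (((Icc j m).image p).erase (p (i + 1)) : Set W)).Preconnected := by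
  set R : Set W := ↑(((Icc j m).image p).erase (p (i + 1)))
  have hpR : ∀ l, j ≤ l → l ≤ m → l ≠ i + 1 → p l ∈ R := fun l hjl hlm hl =>
    mem_erase.2 ⟨h.ne hlm him hl, mem_image_of_mem _ (mem_Icc.2 ⟨hjl, hlm⟩)⟩
  have hup : ∀ l (hjl : j ≤ l) (hli : l ≤ i), (Γ.induce R).Reachable
      ⟨p l, hpR l hjl (by omega) (by omega)⟩ ⟨p i, hpR i hji him.le (by omega)⟩ :=
    fun l hjl hli => h.reachable_induce hli him.le fun t _ _ =>
      hpR t (by omega) (by omega) (by omega)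
  have hreach : ∀ x : R, (Γ.induce R).Reachable x ⟨p i, hpR i hji him.le (by omega)⟩ := by
    rintro ⟨x, hx⟩
    obtain ⟨hxi, hx'⟩ := mem_erase.1 hx
    obtain ⟨l, hl, rfl⟩ := mem_image.1 hx'
    obtain ⟨hjl, hlm⟩ := mem_Icc.1 hl
    have hli : l ≠ i + 1 := fun hli => hxi (by rw [hli])
    rcases le_or_gt l i with hle | hgt
    · exact hup l hjl hle
    · refine (h.reachable_induce hlm le_rfl fun t _ _ =>
        hpR t (by omega) (by omega) (by omega)).trans (Reachable.trans ?_ (hup j le_rfl hji))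
      exact SimpleGraph.Adj.reachable hmj
  exact fun x y => (hreach x).trans (hreach y).symm

theorem exists_cycle [DecidableEq W] (h : IsPathIn Γ U p m) (hm : 0 < m)
    (hmax : ∀ w ∈ U, Γ.Adj (p m) w → ∃ i < m, p i = w) :
    ∃ j < m, Γ.Adj (p m) (p j) ∧ ∀ w ∈ U, Γ.Adj (p m) w → w ∈ (Icc j m).image p := by
  classical
  have hex : ∃ j, j < m ∧ Γ.Adj (p m) (p j) := by
    refine ⟨m - 1, by omega, ?_⟩
    have hadj := h.adj (m - 1) (by omega)
    rw [Nat.sub_add_cancel hm] at hadj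
    exact hadj.symm
  obtain ⟨hjm, hmj⟩ := Nat.find_spec hex
  refine ⟨Nat.find hex, hjm, hmj, fun w hwU hw => ?_⟩
  obtain ⟨i, him, rfl⟩ := hmax w hwU hw
  exact mem_image_of_mem _ (mem_Icc.2 ⟨Nat.find_min' hex ⟨him, hw⟩, him.le⟩)

/-- The cycle `p j, …, p m` is colored around from `p (i + 2)` to `p i`, after `p (i + 1)` has
received the color of `u`. -/
theorem exists_isProperOn_of_cycle [DecidableEq W] [DecidableRel Γ.Adj] (h : IsPathIn Γ U p m)
    (hdeg : ∀ x ∈ U, #{y ∈ U | Γ.Adj x y} ≤ k) {i j : ℕ} (hji : j ≤ i)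
    (him : i < m) (hmj : Γ.Adj (p m) (p j)) {u : W} (hu : u ∈ U \ (Icc j m).image p)
    (hiu : Γ.Adj (p i) u) (hsucc : ∀ w ∈ U \ (Icc j m).image p, ¬ Γ.Adj (p (i + 1)) w)
    {c : W → Fin k} (hc : IsProperOn Γ (U \ (Icc j m).image p) c) :
    ∃ c' : W → Fin k, IsProperOn Γ U c' := by
  have hconn := h.preconnected_induce_cycle_erase hji him hmj
  set C := (Icc j m).image p with hC
  have hpC : ∀ l, j ≤ l → l ≤ m → p l ∈ C := fun l hjl hlm =>
    mem_image_of_mem _ (mem_Icc.2 ⟨hjl, hlm⟩)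
  have hCU : C ⊆ U := image_subset_iff.2 fun l hl => h.mem l (mem_Icc.1 hl).2
  have hUR : U \ C.erase (p (i + 1)) = insert (p (i + 1)) (U \ C) := by
    rw [sdiff_erase (h.mem _ him)]
  have hnotMem : p (i + 1) ∉ U \ C := by simp [hpC (i + 1) (by omega) him]
  have hune : u ≠ p (i + 1) := ne_of_mem_of_not_mem hu hnotMem
  have hc' : IsProperOn Γ (U \ C.erase (p (i + 1))) (Function.update c (p (i + 1)) (c u)) :=
    hUR ▸ hc.update hnotMem fun w hw hadj => (hsucc w hw hadj).elim
  exact hc'.exists_of_preconnected ((erase_subset _ _).trans hCU)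
    (fun x hx => hdeg x (hCU (mem_of_mem_erase hx))) (by rwa [coe_erase] at hconn ⊢)
    (mem_erase.2 ⟨h.ne him.le him (by omega), hpC i hji him.le⟩) (hUR ▸ mem_insert_of_mem hu)
    (hUR ▸ mem_insert_self _ _) hune hiu (h.adj i him)
    (by rw [Function.update_self, Function.update_of_ne hune])

theorem exists_isProperOn_of_exit [DecidableEq W] [DecidableRel Γ.Adj] (h : IsPathIn Γ U p m)
    (hdeg : ∀ x ∈ U, #{y ∈ U | Γ.Adj x y} ≤ k) {j : ℕ} (hmj : Γ.Adj (p m) (p j))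
    (hend : ∀ w ∈ U, Γ.Adj (p m) w → w ∈ (Icc j m).image p)
    (hexit : ∃ x ∈ (Icc j m).image p, ∃ w ∈ U \ (Icc j m).image p, Γ.Adj x w)
    {c : W → Fin k} (hc : IsProperOn Γ (U \ (Icc j m).image p) c) :
    ∃ c' : W → Fin k, IsProperOn Γ U c' := by
  obtain ⟨x, hx, hxexit⟩ := hexit
  obtain ⟨i₀, hi₀, rfl⟩ := mem_image.1 hx
  obtain ⟨i, hi, hlast⟩ :=
    exists_max_image {i ∈ Icc j m | ∃ w ∈ U \ (Icc j m).image p, Γ.Adj (p i) w} id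
      ⟨i₀, mem_filter.2 ⟨hi₀, hxexit⟩⟩
  obtain ⟨hi, u, hu, hiu⟩ := mem_filter.1 hi
  obtain ⟨hji, him⟩ := mem_Icc.1 hi
  have him : i < m := him.lt_of_ne <| by
    rintro rfl
    exact (mem_sdiff.1 hu).2 (hend u (mem_sdiff.1 hu).1 hiu)
  refine h.exists_isProperOn_of_cycle hdeg hji him hmj hu hiu (fun w hw hadj => ?_) hc
  have hle := hlast (i + 1) (mem_filter.2 ⟨mem_Icc.2 ⟨by omega, him⟩, w, hw, hadj⟩)
  exact absurd hle (by simp)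

theorem preconnected_induce_sdiff_pair (h : IsPathIn Γ U p m)
    (hU : ∀ x ∈ U, ∃ l ≤ m, p l = x) {l : ℕ} (hl : 3 ≤ l) (hlm : l ≤ m)
    (hadj : Γ.Adj (p 1) (p l)) : (Γ.induce (U \ {p 0, p 2} : Set W)).Preconnected := by
  set R : Set W := U \ {p 0, p 2} with hR
  have hpR : ∀ t ≤ m, t ≠ 0 → t ≠ 2 → p t ∈ R := fun t ht h0 h2 =>
    ⟨h.mem t ht, by simp [h.ne ht (Nat.zero_le m) h0, h.ne ht (by omega : 2 ≤ m) h2]⟩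
  have hreach : ∀ x : R, (Γ.induce R).Reachable x ⟨p l, hpR l hlm (by omega) (by omega)⟩ := by
    rintro ⟨x, hx⟩
    obtain ⟨t, htm, rfl⟩ := hU x hx.1
    have h02 : t ≠ 0 ∧ t ≠ 2 := ⟨by rintro rfl; simp [hR] at hx, by rintro rfl; simp [hR] at hx⟩
    rcases lt_or_ge t 3 with ht3 | ht3
    · obtain rfl : t = 1 := by omega
      exact SimpleGraph.Adj.reachable hadj
    · rcases le_total t l with htl | hlt
      · exact h.reachable_induce htl hlm fun s _ _ => hpR s (by omega) (by omega) (by omega)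
      · exact (h.reachable_induce hlt htm fun s _ _ =>
          hpR s (by omega) (by omega) (by omega)).symm
  exact fun x y => (hreach x).trans (hreach y).symm

theorem exists_isProperOn_of_spanning [DecidableRel Γ.Adj] [NeZero k] (h : IsPathIn Γ U p m)
    (hdeg : ∀ x ∈ U, #{y ∈ U | Γ.Adj x y} ≤ k)
    (hU : ∀ x ∈ U, ∃ l ≤ m, p l = x) (h02 : ¬ Γ.Adj (p 0) (p 2)) {l : ℕ} (hl : 3 ≤ l)
    (hlm : l ≤ m) (hadj : Γ.Adj (p 1) (p l)) : ∃ c : W → Fin k, IsProperOn Γ U c := by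
  classical
  have hconn : (Γ.induce (↑(U \ {p 0, p 2}) : Set W)).Preconnected := by
    rw [coe_sdiff, coe_pair]
    exact h.preconnected_induce_sdiff_pair hU hl hlm hadj
  have hne : ∀ {s t : ℕ}, s ≤ 2 → t ≤ 2 → s ≠ t → p s ≠ p t := fun hs ht =>
    h.ne (by omega) (by omega)
  have hpair : U \ (U \ {p 0, p 2}) = {p 0, p 2} := by
    refine Finset.sdiff_sdiff_eq_self ?_
    simp [insert_subset_iff, h.mem 0 (by omega), h.mem 2 (by omega)]
  have hproper : IsProperOn Γ (U \ (U \ {p 0, p 2})) fun _ => (0 : Fin k) := by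
    rw [hpair]
    intro x hx y hy hxy
    simp only [mem_insert, mem_singleton] at hx hy
    rcases hx with rfl | rfl <;> rcases hy with rfl | rfl
    exacts [(hxy.ne rfl).elim, (h02 hxy).elim, (h02 hxy.symm).elim, (hxy.ne rfl).elim]
  exact hproper.exists_of_preconnected sdiff_subset (fun x hx => hdeg x (sdiff_subset hx))
    hconn (r := p 1) (u := p 0) (y := p 2)
    (by simp [h.mem 1 (by omega), hne one_le_two zero_le_two one_ne_zero,
      hne one_le_two le_rfl (by decide : 1 ≠ 2)])
    (by simp [hpair]) (by simp [hpair]) (hne zero_le_two le_rfl (by decide))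
    (h.adj 0 (by omega)).symm (h.adj 1 (by omega)) rfl

end IsPathIn

theorem exists_adj_adj_not_adj_of_cliqueFree [DecidableRel Γ.Adj] {U : Finset W} {v : W}
    (hfree : Γ.CliqueFree (k + 1)) (hv : k ≤ #{x ∈ U | Γ.Adj v x}) :
    ∃ a ∈ U, ∃ b ∈ U, Γ.Adj v a ∧ Γ.Adj v b ∧ a ≠ b ∧ ¬ Γ.Adj a b := by
  classical
  by_contra! hcon
  obtain ⟨t, htU, ht⟩ := exists_subset_card_eq hv
  have htv : ∀ x ∈ t, x ∈ U ∧ Γ.Adj v x := fun x hx => mem_filter.1 (htU hx)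
  have hclique : Γ.IsNClique k t := ⟨fun x hx y hy hxy =>
    hcon x (htv x hx).1 y (htv y hy).1 (htv x hx).2 (htv y hy).2 hxy, ht⟩
  exact hfree _ (hclique.insert fun x hx => (htv x hx).2)

theorem isPathIn_two {U : Finset W} {a v b : W} (ha : a ∈ U) (hv : v ∈ U) (hb : b ∈ U)
    (hav : Γ.Adj a v) (hvb : Γ.Adj v b) (hab : a ≠ b) :
    IsPathIn Γ U (fun i => if i = 0 then a else if i = 1 then v else b) 2 := by
  refine ⟨fun i _ => ?_, fun i hi => ?_, fun i hi j hj hij => ?_⟩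
  · split_ifs <;> assumption
  · interval_cases i <;> simpa
  · rw [Set.mem_Iic] at hi hj
    have := hav.ne
    have := hvb.ne
    interval_cases i <;> interval_cases j <;> simp_all

/-- Zając's argument: a maximal path starting with `a, v, b` closes up to a cycle at its end. If the
cycle has an edge to the rest of `U`, color the rest first; if it spans `U`, color `a` and `b` alike
and everything else towards `v`. -/
theorem exists_isProperOn_of_forall_card_eq [DecidableRel Γ.Adj] (hk : 3 ≤ k)
    (hfree : Γ.CliqueFree (k + 1)) {U : Finset W} (hU : U.Nonempty)
    (hdeg : ∀ x ∈ U, #{y ∈ U | Γ.Adj x y} = k)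
    (ih : ∀ S ⊂ U, ∃ c : W → Fin k, IsProperOn Γ S c) : ∃ c : W → Fin k, IsProperOn Γ U c := by
  classical
  have : NeZero k := ⟨by omega⟩
  obtain ⟨v, hv⟩ := hU
  obtain ⟨a, ha, b, hb, hva, hvb, hab, hnab⟩ :=
    exists_adj_adj_not_adj_of_cliqueFree hfree (hdeg v hv).ge
  obtain ⟨m, hm, p, hp, hpeq, hmax⟩ := (isPathIn_two ha hv hb hva.symm hvb hab).exists_maximal
  obtain rfl : p 0 = a := by simpa using hpeq 0 (by omega)
  obtain rfl : p 1 = v := by simpa using hpeq 1 (by omega)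
  obtain rfl : p 2 = b := by simpa using hpeq 2 le_rfl
  obtain ⟨j, hjm, hmj, hend⟩ := hp.exists_cycle (by omega) hmax
  have hCU : (Icc j m).image p ⊆ U := image_subset_iff.2 fun l hl => hp.mem l (mem_Icc.1 hl).2
  obtain ⟨c, hc⟩ := ih (U \ (Icc j m).image p)
    (sdiff_ssubset hCU ((nonempty_Icc.2 hjm.le).image p))
  by_cases hexit : ∃ x ∈ (Icc j m).image p, ∃ w ∈ U \ (Icc j m).image p, Γ.Adj x w
  · exact hp.exists_isProperOn_of_exit (fun x hx => (hdeg x hx).le) hmj hend hexit hc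
  push Not at hexit
  rcases hCU.eq_or_ssubset with hspan | hssub
  · have hU : ∀ x ∈ U, ∃ l ≤ m, p l = x := fun x hx => by
      obtain ⟨l, hl, rfl⟩ := mem_image.1 (hspan ▸ hx)
      exact ⟨l, (mem_Icc.1 hl).2, rfl⟩
    obtain ⟨w, hw, hw02⟩ := exists_mem_notMem_of_card_lt_card (s := {p 0, p 2})
      (t := {y ∈ U | Γ.Adj (p 1) y}) (card_le_two.trans_lt (by rw [hdeg _ hv]; omega))
    obtain ⟨hwU, hw1⟩ := mem_filter.1 hw
    obtain ⟨l, hlm, rfl⟩ := hU w hwU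
    have hl : l ≠ 0 ∧ l ≠ 1 ∧ l ≠ 2 :=
      ⟨by rintro rfl; simp at hw02, by rintro rfl; exact hw1.ne rfl, by rintro rfl; simp at hw02⟩
    exact hp.exists_isProperOn_of_spanning (fun x hx => (hdeg x hx).le) hU hnab (by omega) hlm hw1
  · obtain ⟨d, hd⟩ := ih _ hssub
    exact ⟨_, hd.union hexit hc⟩

theorem exists_isProperOn [DecidableRel Γ.Adj] (hk : 3 ≤ k) (hfree : Γ.CliqueFree (k + 1))
    (U : Finset W) (hdeg : ∀ x ∈ U, #{y ∈ U | Γ.Adj x y} ≤ k) :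
    ∃ c : W → Fin k, IsProperOn Γ U c := by
  classical
  induction U using Finset.strongInduction with
  | H U ih =>
    have hdeg' : ∀ S ⊂ U, ∀ x ∈ S, #{y ∈ S | Γ.Adj x y} ≤ k := fun S hS x hx =>
      (card_le_card (filter_subset_filter _ hS.subset)).trans (hdeg x (hS.subset hx))
    by_cases hlow : ∃ x ∈ U, #{y ∈ U | Γ.Adj x y} < k
    · obtain ⟨x, hx, hxk⟩ := hlow
      have hsub := erase_ssubset hx
      obtain ⟨c, hc⟩ := ih _ hsub (hdeg' _ hsub)
      obtain ⟨a, ha⟩ := hc.exists_update (notMem_erase x U) <| (card_image_le.trans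
        (card_le_card (filter_subset_filter _ (erase_subset x U)))).trans_lt hxk
      exact ⟨_, insert_erase hx ▸ ha⟩
    · push Not at hlow
      rcases U.eq_empty_or_nonempty with rfl | hne
      · exact ⟨fun _ => ⟨0, by omega⟩, by simp [IsProperOn]⟩
      · exact exists_isProperOn_of_forall_card_eq hk hfree hne
          (fun x hx => (hdeg x hx).antisymm (hlow x hx)) fun S hS => ih S hS (hdeg' S hS)

/-- **Brooks' theorem**, without the case `k = 2` of odd cycles. -/
theorem colorable_of_degree_le_of_cliqueFree [Fintype W] [DecidableRel Γ.Adj] (hk : 3 ≤ k)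
    (hdeg : ∀ x, Γ.degree x ≤ k) (hfree : Γ.CliqueFree (k + 1)) : Γ.Colorable k := by
  obtain ⟨c, hc⟩ := exists_isProperOn hk hfree univ fun x _ => by
    rw [← neighborFinset_eq_filter]
    exact hdeg x
  exact ⟨Coloring.mk c fun {x y} => hc x (mem_univ x) y (mem_univ y)⟩

theorem exists_isIndepSet_of_colorable [Fintype W] (hΓ : Γ.Colorable k) :
    ∃ I : Finset W, Γ.IsIndepSet I ∧ Fintype.card W ≤ k * #I := by
  classical
  obtain ⟨C⟩ := hΓ
  obtain hW | ⟨⟨w⟩⟩ := isEmpty_or_nonempty W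
  · exact ⟨∅, by simp⟩
  obtain ⟨a, -, ha⟩ := exists_max_image univ (fun a => #{x | C x = a}) ⟨C w, mem_univ _⟩
  refine ⟨({x | C x = a} : Finset W), fun x hx y hy _ hxy => ?_, ?_⟩
  · simp only [coe_filter, mem_univ, true_and, Set.mem_ofPred_eq] at hx hy
    exact C.valid hxy (hx.trans hy.symm)
  · calc Fintype.card W = ∑ b, #{x | C x = b} := card_eq_sum_card_fiberwise (by simp)
      _ ≤ #(univ : Finset (Fin k)) • #{x | C x = a} := sum_le_card_nsmul _ _ _ ha
      _ = k * #{x | C x = a} := by simp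

end Brooks

section Clique

open Finset

variable {G : SimpleGraph V} {t : Finset V}

theorem card_edges_subset_of_isNClique [Fintype G.edgeSet] {n : ℕ} [DecidableEq V]
    (ht : G.IsNClique n t) : #{e : G.edgeSet | e.1 ∈ t.sym2} = n.choose 2 := by
  rw [← ht.card_eq, ← Sym2.card_image_offDiag]
  refine card_bij (fun e _ => e.1) (fun e he => ?_) (fun _ _ _ _ => Subtype.ext) fun e he => ?_
  · obtain ⟨⟨u, v⟩, huv⟩ := e
    exact mem_image.2 ⟨(u, v), by simpa [huv.ne] using he, rfl⟩
  · obtain ⟨⟨u, v⟩, huv, rfl⟩ := mem_image.1 he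
    obtain ⟨hu, hv, hne⟩ := mem_offDiag.1 huv
    exact ⟨⟨s(u, v), ht.isClique hu hv hne⟩, by simp [hu, hv], rfl⟩

theorem card_edges_subset_incident_of_isClique [Fintype G.edgeSet] [DecidableEq V]
    (ht : G.IsClique t) {v : V} (hv : v ∈ t) :
    #{e : G.edgeSet | e.1 ∈ t.sym2 ∧ v ∈ e.1} = #t - 1 := by
  rw [← card_erase_of_mem hv]
  symm
  refine card_bij (fun w hw => ⟨s(v, w), ht hv (mem_of_mem_erase hw) (ne_of_mem_erase hw).symm⟩)
    (fun w hw => ?_)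
    (fun w _ x _ hwx => Sym2.congr_right.1 (congrArg Subtype.val hwx)) fun e he => ?_
  · simp [hv, mem_of_mem_erase hw]
  · obtain ⟨e, hadj⟩ := e
    obtain ⟨het, hve⟩ := (mem_filter.1 he).2
    obtain ⟨w, rfl⟩ := Sym2.mem_iff_exists.1 hve
    exact ⟨w, mem_erase.2 ⟨(G.ne_of_adj hadj).symm, (mk_mem_sym2_iff.1 het).2⟩, rfl⟩

theorem eq_univ_of_isNClique_of_degree_le [Fintype V] [DecidableRel G.Adj] {k : ℕ}
    (hG : G.Preconnected) (hdeg : ∀ v, G.degree v ≤ k) (ht : G.IsNClique (k + 1) t) :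
    t = univ := by
  classical
  obtain ⟨u, hu⟩ : t.Nonempty := card_pos.1 (by rw [ht.card_eq]; omega)
  refine eq_univ_of_forall fun v => by_contra fun hv => ?_
  obtain ⟨w⟩ := hG u v
  obtain ⟨⟨⟨x, y⟩, hxy⟩, -, hx, hy⟩ := w.exists_boundary_dart t hu hv
  have hsub : insert y (t.erase x) ⊆ G.neighborFinset x := by
    refine insert_subset (by simpa using hxy) fun z hz => ?_
    exact (mem_neighborFinset _ _ _).2
      (ht.isClique hx (mem_of_mem_erase hz) (ne_of_mem_erase hz).symm)
  have hcard := (card_le_card hsub).trans (hdeg x)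
  rw [card_insert_of_notMem fun h => hy (mem_of_mem_erase h), card_erase_of_mem hx,
    ht.card_eq] at hcard
  omega

end Clique

section RelMatrix

open Finset

variable {α β γ : Type*}

open Classical in
/-- The matrix over `𝔽₂` of a relation between two types. For the incidence relations of a surface
these are its cellular boundary maps with coefficients in `𝔽₂`. -/
noncomputable def relMatrix (r : α → β → Prop) : Matrix α β (ZMod 2) :=
  Matrix.of fun a b => if r a b then 1 else 0

theorem relMatrix_transpose (r : α → β → Prop) : (relMatrix r).transpose = relMatrix (flip r) :=
  rfl

theorem relMatrix_mul_relMatrix_eq_zero [Fintype β] {r : α → β → Prop}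
    {s : β → γ → Prop} [∀ a, DecidablePred (r a)] [∀ c, DecidablePred (s · c)]
    (h : ∀ a c, Even #{b | r a b ∧ s b c}) : relMatrix r * relMatrix s = 0 := by
  ext a c
  calc (relMatrix r * relMatrix s) a c = ∑ b, if r a b ∧ s b c then 1 else 0 := by
        simp only [Matrix.mul_apply, relMatrix, Matrix.of_apply, mul_ite, mul_one, mul_zero]
        exact sum_congr rfl fun b _ => by split_ifs <;> simp_all
    _ = 0 := by
        rw [sum_boole]
        exact (ZMod.natCast_eq_zero_iff_even).2 (h a c)

/-- The kernel of the matrix consists of constant functions. -/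
theorem card_le_rank_relMatrix_add_one [Fintype β] {r : α → β → Prop}
    (hr : ∀ a, {b | r a b}.ncard = 2) {Γ : SimpleGraph β}
    (hΓ : Γ.Preconnected) (hadj : ∀ b b', Γ.Adj b b' → ∃ a, r a b ∧ r a b') :
    Fintype.card β ≤ (relMatrix r).rank + 1 := by
  classical
  have hconst : ∀ f ∈ LinearMap.ker (relMatrix r).mulVecLin, ∀ b b', f b = f b' := by
    intro f hf b b'
    obtain ⟨w⟩ := hΓ b b'
    induction w with
    | nil => rfl
    | @cons x y _ hxy _ ih =>
      obtain ⟨a, hx, hy⟩ := hadj x y hxy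
      have hpair : ({x, y} : Finset β) = ({b | r a b} : Finset β) :=
        eq_of_subset_of_card_le (by simp [insert_subset_iff, hx, hy])
          (by rw [card_pair hxy.ne, ← hr a, ← Set.ncard_coe_finset]; simp)
      have hsum : f x + f y = 0 := by
        rw [← sum_pair hxy.ne, hpair, sum_filter]
        simpa [Matrix.mulVec, dotProduct, relMatrix] using congrFun hf a
      rw [← ih]
      exact CharTwo.add_eq_zero.1 hsum
  have hker : Module.finrank (ZMod 2) (LinearMap.ker (relMatrix r).mulVecLin) ≤ 1 := by
    obtain hβ | ⟨⟨b⟩⟩ := isEmpty_or_nonempty β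
    · simp [Module.finrank_zero_of_subsingleton]
    · refine (LinearMap.finrank_le_finrank_of_injective
        (f := (LinearMap.proj b).domRestrict (LinearMap.ker (relMatrix r).mulVecLin))
        fun f g hfg => Subtype.ext (funext fun b' => ?_)).trans (Module.finrank_self _).le
      rw [hconst f f.2 b' b, hconst g g.2 b' b]
      exact hfg
  have hrank := (relMatrix r).mulVecLin.finrank_range_add_finrank_ker
  rw [Module.finrank_fintype_fun_eq_card] at hrank
  rw [Matrix.rank]
  omega

theorem card_vertices_le_rank_relMatrix_add_one [Fintype V] {G : SimpleGraph V}
    (hG : G.Preconnected) :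
    Fintype.card V ≤ (relMatrix fun (e : G.edgeSet) v => v ∈ e.1).rank + 1 := by
  refine card_le_rank_relMatrix_add_one (fun e => ?_) hG fun u v huv =>
    ⟨⟨s(u, v), huv⟩, Sym2.mem_mk_left u v, Sym2.mem_mk_right u v⟩
  obtain ⟨⟨u, v⟩, huv⟩ := e
  rw [← Set.ncard_pair (G.ne_of_adj huv)]
  exact congrArg Set.ncard (Set.ext fun w => by simp)

end RelMatrix

section Triangulation

open Finset

variable {Φ : Type*} {G : SimpleGraph V} {T : Φ → Finset V}

theorem IsTrianglePacking.card_le_nu [Finite V] {Y : Finset (Finset V)}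
    (hY : IsTrianglePacking G Y) : #Y ≤ nu G := by
  have := Fintype.ofFinite V
  refine le_csSup ⟨Fintype.card (Finset V), ?_⟩ ⟨Y, hY, rfl⟩
  rintro _ ⟨Z, -, rfl⟩
  exact card_le_univ Z

/-- The dual graph of a family of triangles `T φ`, given by their vertex sets: two triangles are
adjacent if they share an edge. Distinct indices of the same triangle are adjacent. -/
def dualGraph (T : Φ → Finset V) : SimpleGraph Φ where
  Adj φ ψ := φ ≠ ψ ∧ ∃ u v, u ≠ v ∧ u ∈ T φ ∧ v ∈ T φ ∧ u ∈ T ψ ∧ v ∈ T ψ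
  symm := ⟨fun _ _ ⟨h, u, v, huv, h1, h2, h3, h4⟩ => ⟨h.symm, u, v, huv, h3, h4, h1, h2⟩⟩
  loopless := ⟨fun _ h => h.1 rfl⟩

/-- `T φ` is the set of vertices of the triangle bounding the face `φ` of a triangulated closed
surface with `1`-skeleton `G`. Links of vertices are not required to be connected, so the surface
may be pinched at vertices. -/
structure IsTriangulation (G : SimpleGraph V) (T : Φ → Finset V) : Prop where
  isNClique : ∀ φ, G.IsNClique 3 (T φ)
  ncard_faces : ∀ u v, G.Adj u v → {φ | u ∈ T φ ∧ v ∈ T φ}.ncard = 2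
  preconnected_dualGraph : (dualGraph T).Preconnected

namespace IsTriangulation

theorem isTrianglePacking_image [DecidableEq V] (hT : IsTriangulation G T) {I : Finset Φ}
    (hI : (dualGraph T).IsIndepSet I) : IsTrianglePacking G (I.image T) := by
  refine ⟨fun t ht => ?_, fun s hs t ht hst e he => ?_⟩
  · obtain ⟨φ, -, rfl⟩ := mem_image.1 ht
    exact hT.isNClique φ
  · obtain ⟨φ, hφ, rfl⟩ := mem_image.1 hs
    obtain ⟨ψ, hψ, rfl⟩ := mem_image.1 ht
    obtain ⟨u, v⟩ := e
    rintro ⟨hφe, hψe⟩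
    have hne : φ ≠ ψ := fun h => hst (h ▸ rfl)
    exact hI hφ hψ hne ⟨hne, u, v, G.ne_of_adj he, hφe u (by simp), hφe v (by simp),
      hψe u (by simp), hψe v (by simp)⟩

theorem injOn_of_isIndepSet (hT : IsTriangulation G T) {I : Set Φ}
    (hI : (dualGraph T).IsIndepSet I) : Set.InjOn T I := by
  intro φ hφ ψ hψ h
  by_contra hne
  obtain ⟨u, hu, v, hv, huv⟩ := one_lt_card.1 (by rw [(hT.isNClique φ).card_eq]; norm_num)
  exact hI hφ hψ hne ⟨hne, u, v, huv, hu, hv, h ▸ hu, h ▸ hv⟩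

theorem ncard_faces_of_edge (hT : IsTriangulation G T) (e : G.edgeSet) :
    {φ | e.1 ∈ (T φ).sym2}.ncard = 2 := by
  obtain ⟨⟨u, v⟩, huv⟩ := e
  simpa using hT.ncard_faces u v huv

theorem three_mul_card_faces [Fintype Φ] [Fintype G.edgeSet] (hT : IsTriangulation G T) :
    3 * Fintype.card Φ = 2 * Fintype.card G.edgeSet := by
  classical
  have h := card_mul_eq_card_mul (s := univ) (t := univ)
    (fun (φ : Φ) (e : G.edgeSet) => e.1 ∈ (T φ).sym2) (m := 3) (n := 2)
    (fun φ _ => card_edges_subset_of_isNClique (hT.isNClique φ))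
    fun e _ => by
      simpa [← Set.ncard_coe_finset] using hT.ncard_faces_of_edge e
  rwa [mul_comm 3, mul_comm 2]

theorem card_faces_le_rank_relMatrix_add_one [Fintype Φ] [Fintype G.edgeSet]
    (hT : IsTriangulation G T) :
    Fintype.card Φ ≤ (relMatrix fun φ (e : G.edgeSet) => e.1 ∈ (T φ).sym2).rank + 1 := by
  rw [← Matrix.rank_transpose, relMatrix_transpose]
  refine card_le_rank_relMatrix_add_one (fun e => hT.ncard_faces_of_edge e)
    hT.preconnected_dualGraph ?_
  rintro φ ψ ⟨-, u, v, huv, hu, hv, hu', hv'⟩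
  exact ⟨⟨s(u, v), (hT.isNClique φ).isClique hu hv huv⟩, by simp [flip, hu', hv', hu, hv]⟩

/-- The Euler characteristic `|V| - |E| + |Φ|` is at most two since the composition of the two
boundary maps over `𝔽₂` vanishes. -/
theorem two_mul_card_vertices_le [Fintype Φ] [Fintype V] (hT : IsTriangulation G T)
    (hG : G.Preconnected) : 2 * Fintype.card V ≤ Fintype.card Φ + 4 := by
  classical
  have hmul : (relMatrix fun φ (e : G.edgeSet) => e.1 ∈ (T φ).sym2) *
      (relMatrix fun (e : G.edgeSet) v => v ∈ e.1) = 0 := by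
    refine relMatrix_mul_relMatrix_eq_zero fun φ v => ?_
    by_cases hv : v ∈ T φ
    · rw [card_edges_subset_incident_of_isClique (hT.isNClique φ).isClique hv,
        (hT.isNClique φ).card_eq]
      exact even_two
    · rw [filter_eq_empty_iff.2 fun e _ he => hv (mem_sym2_iff.1 he.1 v he.2)]
      exact Even.zero
  have hrank := Matrix.rank_add_rank_le_card_of_mul_eq_zero hmul
  have hV := card_vertices_le_rank_relMatrix_add_one hG
  have hΦ := hT.card_faces_le_rank_relMatrix_add_one
  have hE := hT.three_mul_card_faces
  omega

theorem degree_dualGraph_le [Fintype Φ] [DecidableRel (dualGraph T).Adj]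
    (hT : IsTriangulation G T) (φ : Φ) : (dualGraph T).degree φ ≤ 3 := by
  classical
  have hsub : (dualGraph T).neighborFinset φ ⊆ ((T φ).powersetCard 2).biUnion
      fun e => ({ψ | e ⊆ T ψ} : Finset Φ).erase φ := by
    intro ψ hψ
    obtain ⟨hne, u, v, huv, hu, hv, hu', hv'⟩ := (mem_neighborFinset _ _ _).1 hψ
    exact mem_biUnion.2 ⟨{u, v}, by simp [mem_powersetCard, insert_subset_iff, hu, hv, huv],
      by simp [insert_subset_iff, hne.symm, hu', hv']⟩
  refine (card_le_card hsub).trans <|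
    (card_biUnion_le_card_mul _ _ 1 fun e he => ?_).trans_eq ?_
  · obtain ⟨heφ, he⟩ := mem_powersetCard.1 he
    obtain ⟨u, v, huv, rfl⟩ := card_eq_two.1 he
    obtain ⟨hu, hv⟩ : u ∈ T φ ∧ v ∈ T φ := by simpa [insert_subset_iff] using heφ
    rw [card_erase_of_mem (by simpa using heφ), ← Set.ncard_coe_finset]
    simp [insert_subset_iff, hT.ncard_faces u v ((hT.isNClique φ).isClique hu hv huv)]
  · rw [card_powersetCard, (hT.isNClique φ).card_eq]
    rfl

theorem nonempty_iso_completeGraph [Fintype Φ] [Finite V] (hT : IsTriangulation G T)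
    (hG : G.Preconnected) (hΦ : Fintype.card Φ = 4) :
    Nonempty (G ≃g (⊤ : SimpleGraph (Fin 4))) := by
  classical
  have := Fintype.ofFinite V
  have hV := hT.two_mul_card_vertices_le hG
  have hE := hT.three_mul_card_faces
  have hle := card_le_card (edgeFinset_mono (le_top : G ≤ ⊤))
  rw [card_edgeFinset_top_eq_card_choose_two, edgeFinset_card] at hle
  have hV4 : Fintype.card V = 4 := by
    have h3 : ¬ Fintype.card V ≤ 3 := fun h3 => by
      have hchoose := Nat.choose_le_choose 2 h3
      rw [(by rfl : Nat.choose 3 2 = 3)] at hchoose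
      omega
    omega
  have htop : G = ⊤ := by
    refine edgeFinset_inj.1 (eq_of_subset_of_card_le (edgeFinset_mono le_top) ?_)
    rw [card_edgeFinset_top_eq_card_choose_two, hV4, edgeFinset_card]
    exact (by omega : 6 ≤ Fintype.card G.edgeSet)
  exact htop ▸ ⟨Iso.completeGraph (Fintype.equivFinOfCardEq hV4)⟩

theorem cliqueFree_dualGraph [Finite Φ] [Finite V] (hT : IsTriangulation G T)
    (hG : G.Preconnected) (hK4 : ¬ Nonempty (G ≃g (⊤ : SimpleGraph (Fin 4)))) :
    (dualGraph T).CliqueFree 4 := by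
  classical
  have := Fintype.ofFinite Φ
  intro s hs
  have huniv :=
    eq_univ_of_isNClique_of_degree_le hT.preconnected_dualGraph hT.degree_dualGraph_le hs
  exact hK4 (hT.nonempty_iso_completeGraph hG (by rw [← card_univ, ← huniv, hs.card_eq]))

theorem card_faces_le_three_mul_nu [Fintype Φ] [Finite V] (hT : IsTriangulation G T)
    (hG : G.Preconnected) (hK4 : ¬ Nonempty (G ≃g (⊤ : SimpleGraph (Fin 4)))) :
    Fintype.card Φ ≤ 3 * nu G := by
  classical
  obtain ⟨I, hI, hcard⟩ := exists_isIndepSet_of_colorable <|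
    colorable_of_degree_le_of_cliqueFree le_rfl hT.degree_dualGraph_le
      (hT.cliqueFree_dualGraph hG hK4)
  calc Fintype.card Φ ≤ 3 * #I := hcard
    _ = 3 * #(I.image T) := by rw [card_image_of_injOn (hT.injOn_of_isIndepSet hI)]
    _ ≤ 3 * nu G := by gcongr; exact (hT.isTrianglePacking_image hI).card_le_nu

end IsTriangulation

end Triangulation

section Arc

open Set Topology

/-- `A` is a simple arc from `a` to `b`, the notion by which a `PlaneEmbedding` draws its edges. -/
def IsArc {X : Type*} [TopologicalSpace X] (a b : X) (A : Set X) : Prop :=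
  ∃ γ : ℝ → X, ContinuousOn γ (Icc 0 1) ∧ InjOn γ (Icc 0 1) ∧ γ 0 = a ∧ γ 1 = b ∧ A = γ '' Icc 0 1

theorem injOn_union_of_image_inter_image_subset {α β : Type*} {f : α → β} {s t : Set α}
    {c : β} (hs : InjOn f s) (ht : InjOn f t) (h : f '' s ∩ f '' t ⊆ {c})
    (hc : c ∈ f '' (s ∩ t)) : InjOn f (s ∪ t) := by
  obtain ⟨m, ⟨hms, hmt⟩, rfl⟩ := hc
  have key : ∀ x ∈ s, ∀ y ∈ t, f x = f y → x = y := fun x hx y hy hxy => by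
    have hxm : f x = f m := h ⟨mem_image_of_mem f hx, hxy ▸ mem_image_of_mem f hy⟩
    exact (hs hx hms hxm).trans (ht hy hmt (hxy.symm.trans hxm)).symm
  rintro x (hx | hx) y (hy | hy) hxy
  exacts [hs hx hy hxy, key x hx y hy hxy, (key y hy x hx hxy.symm).symm, ht hx hy hxy]

namespace IsArc

variable {X : Type*} [TopologicalSpace X] {a b c : X} {A B : Set X}

theorem union (hA : IsArc a b A) (hB : IsArc b c B) (h : A ∩ B ⊆ {b}) : IsArc a c (A ∪ B) := by
  obtain ⟨γ, hγ, hγi, rfl, rfl, rfl⟩ := hA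
  obtain ⟨δ, hδ, hδi, hδ0, rfl, rfl⟩ := hB
  set η : ℝ → X := fun t => if t ≤ 1 / 2 then γ (2 * t) else δ (2 * t - 1)
  have hl : EqOn η (γ ∘ (2 * ·)) (Icc 0 (1 / 2)) := fun t ht => if_pos ht.2
  have hr : EqOn η (δ ∘ (2 * · - 1)) (Icc (1 / 2) 1) := fun t ht => by
    rcases ht.1.eq_or_lt with rfl | h
    · simp [η, hδ0]
    · exact if_neg h.not_ge
  have imagel : (2 * · : ℝ → ℝ) '' Icc 0 (1 / 2) = Icc 0 1 := by
    simpa using image_affine_Icc' (two_pos : (0 : ℝ) < 2) 0 0 (1 / 2)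
  have imager : (2 * · - 1 : ℝ → ℝ) '' Icc (1 / 2) 1 = Icc 0 1 := by
    have := image_affine_Icc' (two_pos : (0 : ℝ) < 2) (-1) (1 / 2) 1
    norm_num [← sub_eq_add_neg] at this ⊢
    exact this
  have mapsl := imagel ▸ mapsTo_image (2 * · : ℝ → ℝ) (Icc 0 (1 / 2))
  have mapsr := imager ▸ mapsTo_image (2 * · - 1 : ℝ → ℝ) (Icc (1 / 2) 1)
  have hηl : η '' Icc 0 (1 / 2) = γ '' Icc 0 1 := by rw [hl.image_eq, image_comp, imagel]
  have hηr : η '' Icc (1 / 2) 1 = δ '' Icc 0 1 := by rw [hr.image_eq, image_comp, imager]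
  have hU : Icc (0 : ℝ) 1 = Icc 0 (1 / 2) ∪ Icc (1 / 2) 1 :=
    (Icc_union_Icc_eq_Icc (by norm_num) (by norm_num)).symm
  have hinjl : InjOn (2 * · : ℝ → ℝ) (Icc 0 (1 / 2)) := fun s _ t _ (h : 2 * s = 2 * t) => by
    linarith
  have hinjr : InjOn (2 * · - 1 : ℝ → ℝ) (Icc (1 / 2) 1) :=
    fun s _ t _ (h : 2 * s - 1 = 2 * t - 1) => by linarith
  refine ⟨η, ?_, ?_, by simp [η], by norm_num [η], ?_⟩
  · rw [hU]
    exact ((hγ.comp (by fun_prop) mapsl).congr hl).union_of_isClosed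
      ((hδ.comp (by fun_prop) mapsr).congr hr) isClosed_Icc isClosed_Icc
  · rw [hU]
    refine injOn_union_of_image_inter_image_subset ((hγi.comp hinjl mapsl).congr hl.symm)
      ((hδi.comp hinjr mapsr).congr hr.symm) (by rwa [hηl, hηr]) ⟨1 / 2, by norm_num, ?_⟩
    norm_num [η]
  · rw [← hηl, ← hηr, ← image_union, ← hU]

theorem segment {E : Type*} [NormedAddCommGroup E] [NormedSpace ℝ E] {a b : E} (h : a ≠ b) :
    IsArc a b (segment ℝ a b) :=
  ⟨AffineMap.lineMap a b, by fun_prop, (AffineMap.lineMap_injective ℝ h).injOn, by simp, by simp,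
    segment_eq_image_lineMap ℝ a b⟩

end IsArc

/-- Simple polygonal arcs, as point sets with two ends. -/
inductive PLArc {E : Type*} [AddCommGroup E] [Module ℝ E] (a : E) : E → Set E → Prop
  | seg {b : E} : a ≠ b → PLArc a b (segment ℝ a b)
  | snoc {b c : E} {A : Set E} : PLArc a b A → b ≠ c → A ∩ segment ℝ b c = {b} →
      PLArc a c (A ∪ segment ℝ b c)

section Module

variable {E : Type*} [AddCommGroup E] [Module ℝ E] {a b c p x y : E} {A : Set E}

theorem segment_subset_segment_left (h : p ∈ segment ℝ a b) : segment ℝ a p ⊆ segment ℝ a b :=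
  (convex_segment a b).segment_subset (left_mem_segment ℝ a b) h

theorem segment_subset_segment_right (h : p ∈ segment ℝ a b) : segment ℝ p b ⊆ segment ℝ a b :=
  (convex_segment a b).segment_subset h (right_mem_segment ℝ a b)

namespace PLArc

theorem left_mem (h : PLArc a b A) : a ∈ A := by
  induction h with
  | seg _ => exact left_mem_segment ℝ _ _
  | snoc _ _ _ ih => exact Or.inl ih

theorem right_mem (h : PLArc a b A) : b ∈ A := by
  cases h with
  | seg _ => exact right_mem_segment ℝ _ _
  | snoc _ _ _ => exact Or.inr (right_mem_segment ℝ _ _)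

theorem ne (h : PLArc a b A) : a ≠ b := by
  cases h with
  | seg h => exact h
  | snoc hA hne hinter =>
    rintro rfl
    exact hne (hinter.subset ⟨hA.left_mem, right_mem_segment ℝ _ _⟩).symm

theorem truncate (h : PLArc a b A) (hp : p ∈ A) (hpa : p ≠ a) : ∃ A' ⊆ A, PLArc a p A' := by
  induction h with
  | seg _ => exact ⟨_, segment_subset_segment_left hp, seg hpa.symm⟩
  | @snoc b c A hA _ hinter ih =>
    rcases hp with hp | hp
    · obtain ⟨A', hA', h⟩ := ih hp
      exact ⟨A', hA'.trans subset_union_left, h⟩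
    by_cases hpb : p = b
    · exact ⟨A, subset_union_left, hpb ▸ hA⟩
    have hsub := segment_subset_segment_left hp
    refine ⟨A ∪ segment ℝ b p, union_subset_union_right _ hsub, snoc hA (Ne.symm hpb) ?_⟩
    exact ((inter_subset_inter_right _ hsub).trans hinter.subset).antisymm
      (singleton_subset_iff.2 ⟨hA.right_mem, left_mem_segment ℝ _ _⟩)

theorem cons (h : PLArc b c A) (hab : a ≠ b) (hA : segment ℝ a b ∩ A = {b}) :
    PLArc a c (segment ℝ a b ∪ A) := by
  induction h with
  | seg h => exact snoc (seg hab) h hA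
  | @snoc d c A hA' hdc hinter ih =>
    have hsub : segment ℝ a b ∩ A = {b} :=
      ((inter_subset_inter_right _ subset_union_left).trans hA.subset).antisymm
        (singleton_subset_iff.2 ⟨right_mem_segment ℝ _ _, hA'.left_mem⟩)
    rw [← union_assoc]
    refine snoc (ih hsub) hdc (Subset.antisymm ?_ ?_)
    · rintro z ⟨hz | hz, hz'⟩
      · obtain rfl : z = b := hA.subset ⟨hz, Or.inr hz'⟩
        exact hinter.subset ⟨hA'.left_mem, hz'⟩
      · exact hinter.subset ⟨hz, hz'⟩
    · exact singleton_subset_iff.2 ⟨Or.inr hA'.right_mem, left_mem_segment ℝ _ _⟩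

theorem reverse (h : PLArc a b A) : PLArc b a A := by
  induction h with
  | seg h => rw [segment_symm]; exact seg h.symm
  | snoc _ hbc hinter ih =>
    rw [union_comm, segment_symm]
    exact cons ih hbc.symm (by rw [inter_comm, segment_symm, hinter])

end PLArc

end Module

section NormedSpace

variable {E : Type*} [NormedAddCommGroup E] [NormedSpace ℝ E] {a b x y : E} {A : Set E}

theorem isCompact_segment (a b : E) : IsCompact (segment ℝ a b) :=
  convexHull_pair (𝕜 := ℝ) a b ▸ (toFinite {a, b}).isCompact_convexHull ℝ

namespace PLArc

theorem isCompact (h : PLArc a b A) : IsCompact A := by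
  induction h with
  | seg _ => exact isCompact_segment _ _
  | snoc _ _ _ ih => exact ih.union (isCompact_segment _ _)

theorem isClosed (h : PLArc a b A) : IsClosed A := h.isCompact.isClosed

theorem isArc (h : PLArc a b A) : IsArc a b A := by
  induction h with
  | seg h => exact .segment h
  | snoc _ hbc hinter ih => exact ih.union (.segment hbc) hinter.subset

/-- The new arc leaves `A` at the point of `A ∩ [x, y]` closest to `y`. -/
theorem extend_segment (h : PLArc a x A) (hy : y ≠ a) :
    ∃ A' ⊆ A ∪ segment ℝ x y, PLArc a y A' := by
  by_cases hyA : y ∈ A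
  · obtain ⟨A', hA', h'⟩ := h.truncate hyA hy
    exact ⟨A', hA'.trans subset_union_left, h'⟩
  obtain ⟨m, ⟨hmA, hms⟩, hmin⟩ := (h.isCompact.inter (isCompact_segment x y)).exists_isMinOn
    ⟨x, h.right_mem, left_mem_segment ℝ _ _⟩ (f := fun z => dist z y) (by fun_prop)
  have hsub := segment_subset_segment_right hms
  have hmy : m ≠ y := fun e => hyA (e ▸ hmA)
  by_cases hma : m = a
  · exact ⟨_, hsub.trans subset_union_right, hma ▸ seg hmy⟩
  obtain ⟨A', hA', h'⟩ := h.truncate hmA hma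
  refine ⟨A' ∪ segment ℝ m y, union_subset_union hA' hsub, snoc h' hmy (Subset.antisymm ?_ ?_)⟩
  · rintro z ⟨hz, hz'⟩
    have hle : dist m y ≤ dist z y := hmin ⟨hA' hz, hsub hz'⟩
    have hadd := dist_add_dist_of_mem_segment hz'
    exact (dist_le_zero.1 (by linarith)).symm
  · exact singleton_subset_iff.2 ⟨h'.right_mem, left_mem_segment ℝ _ _⟩

theorem extend_isOpen {U : Set E} (hU : IsOpen U) (hU' : IsPreconnected U) (haU : a ∉ U)
    (h : PLArc a x A) (hx : x ∈ U) (hy : y ∈ U) : ∃ A' ⊆ A ∪ U, PLArc a y A' := by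
  let Reach (z : E) : Prop := ∃ A' ⊆ A ∪ U, PLArc a z A'
  have extend : ∀ z w, w ∈ U → segment ℝ z w ⊆ U → Reach z → Reach w := by
    rintro z w hw hzw ⟨A', hA', h'⟩
    obtain ⟨A'', hA'', h''⟩ := h'.extend_segment fun e => haU (e ▸ hw)
    exact ⟨A'', hA''.trans (union_subset hA' (hzw.trans subset_union_right)), h''⟩
  refine hU'.induction₂' (fun z w => Reach z → Reach w) (fun z hz => ?_)
    (fun z w v _ _ _ hzw hwv hz => hwv (hzw hz)) hx hy ⟨A, subset_union_left, h⟩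
  obtain ⟨r, hr, hball⟩ := Metric.isOpen_iff.1 hU z hz
  filter_upwards [mem_nhdsWithin_of_mem_nhds (Metric.ball_mem_nhds z hr)] with w hw
  have hseg : segment ℝ z w ⊆ U :=
    ((convex_ball z r).segment_subset (Metric.mem_ball_self hr) hw).trans hball
  exact ⟨extend z w (hball hw) hseg, extend w z hz (segment_symm ℝ z w ▸ hseg)⟩

end PLArc

end NormedSpace

end Arc

section Turn

open Set Topology

section Ray

variable {E : Type*} [AddCommGroup E] [Module ℝ E] {X Y : Set E} {p d e x y z : E}

/-- The open ray from `p` in direction `d` has an initial piece in `X`. -/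
def RayStartsIn (X : Set E) (p d : E) : Prop := ∀ᶠ s : ℝ in 𝓝[>] 0, p + s • d ∈ X

namespace RayStartsIn

theorem mono (h : RayStartsIn X p d) (hXY : X ⊆ Y) : RayStartsIn Y p d :=
  Filter.Eventually.mono h fun _ hs => hXY hs

theorem inter (h : RayStartsIn X p d) (h' : RayStartsIn Y p d) : RayStartsIn (X ∩ Y) p d :=
  Filter.Eventually.and h h'

theorem nonempty (h : RayStartsIn X p d) : X.Nonempty :=
  let ⟨_, hs⟩ := Filter.Eventually.exists h
  ⟨_, hs⟩

theorem of_mem_nhds [TopologicalSpace E] [ContinuousAdd E] [ContinuousSMul ℝ E] (h : X ∈ 𝓝 p) :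
    RayStartsIn X p d := by
  have : Continuous fun s : ℝ => p + s • d := by fun_prop
  exact nhdsWithin_le_nhds (this.continuousAt.preimage_mem_nhds (by simpa using h))

theorem ne (hd : d ≠ 0) : RayStartsIn {p}ᶜ p d := by
  filter_upwards [self_mem_nhdsWithin] with s (hs : 0 < s)
  simpa using ⟨hs.ne', hd⟩

end RayStartsIn

theorem rayStartsIn_segment (hd : d ≠ 0) (h : SameRay ℝ d e) :
    RayStartsIn (segment ℝ p (p + d)) p e := by
  obtain ⟨r, hr, rfl⟩ := h.exists_nonneg_left hd
  have hsmall : ∀ᶠ s : ℝ in 𝓝[>] 0, s * r < 1 := nhdsWithin_le_nhds <|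
    (continuous_mul_const r).continuousAt.eventually_lt continuousAt_const (by simp)
  filter_upwards [self_mem_nhdsWithin, hsmall] with s (hs : 0 < s) hsr
  rw [segment_eq_image']
  exact ⟨s * r, ⟨by positivity, hsr.le⟩, by simp [mul_smul]⟩

theorem RayStartsIn.not_sameRay (h : RayStartsIn (segment ℝ p (p + d))ᶜ p e) (hd : d ≠ 0) :
    ¬ SameRay ℝ d e := fun hde => by
  simpa using (h.inter (rayStartsIn_segment hd hde)).nonempty

theorem sameRay_sub_of_mem_segment (h : z ∈ segment ℝ p (p + d)) : SameRay ℝ d (z - p) := by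
  simpa using (mem_segment_iff_wbtw.1 h).sameRay_vsub_left.symm

theorem segment_eq_union_of_mem (hp : p ∈ segment ℝ x y) :
    segment ℝ x y = segment ℝ p x ∪ segment ℝ p y := by
  refine Subset.antisymm ?_ (union_subset ?_ (segment_subset_segment_right hp))
  · have hrange : p ∈ range (AffineMap.lineMap x y : ℝ → E) := by
      rw [segment_eq_image_lineMap] at hp
      exact image_subset_range _ _ hp
    rw [← insert_endpoints_openSegment, insert_subset_iff, insert_subset_iff]
    refine ⟨Or.inl (right_mem_segment ℝ p x), Or.inr (right_mem_segment ℝ p y), ?_⟩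
    refine (openSegment_subset_union x y hrange).trans
      (insert_subset (Or.inl (left_mem_segment ℝ p x)) (union_subset_union ?_ ?_))
    · rw [segment_symm]
      exact openSegment_subset_segment ℝ x p
    · exact openSegment_subset_segment ℝ p y
  · rw [segment_symm]
    exact segment_subset_segment_left hp

theorem not_sameRay_of_mem_segment (hp : p ∈ segment ℝ x y) (hx : p ≠ x) (hy : p ≠ y) :
    ¬ SameRay ℝ (x - p) (y - p) := fun h => by
  have h' : SameRay ℝ (x - p) (-(x - p)) :=
    h.trans (by simpa using (sameRay_of_mem_segment hp).symm)
      fun e => absurd (sub_eq_zero.1 e).symm hy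
  exact hx (sub_eq_zero.1 (eq_zero_of_sameRay_self_neg h')).symm

end Ray

section Complex

open Complex ComplexOrder

theorem neg_div_mem_slitPlane_iff {x y : ℂ} : -(x / y) ∈ slitPlane ↔ ¬ SameRay ℝ x y := by
  rw [mem_slitPlane_iff_not_le_zero, neg_nonpos, not_iff_not]
  constructor
  · intro h
    rcases eq_or_ne y 0 with rfl | hy
    · exact SameRay.zero_right x
    have hx : x = (x / y).re • y := by
      rw [real_smul, ← eq_re_of_ofReal_le (r := 0) (by simpa using h), div_mul_cancel₀ x hy]
    rw [hx]
    exact SameRay.sameRay_nonneg_smul_left y (nonneg_iff.1 h).1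
  · intro h
    rcases eq_or_ne y 0 with rfl | hy
    · simp
    obtain ⟨r, hr, rfl⟩ := h.exists_nonneg_right hy
    rw [real_smul, mul_div_cancel_right₀ _ hy]
    exact_mod_cast hr

/-- The oriented angle from `-y` to `x`, in `(-π, π]`. As a function of `x` or of `y` it is
continuous except for a jump by `2π` where the two directions agree. -/
noncomputable def turn (x y : ℂ) : ℝ := arg (-(x / y))

theorem turn_swap {x y : ℂ} (h : ¬ SameRay ℝ x y) : turn y x = -turn x y := by
  have hπ := (mem_slitPlane_iff_arg.1 (neg_div_mem_slitPlane_iff.2 h)).1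
  rw [turn, turn, ← inv_div, ← inv_neg, arg_inv, if_neg hπ]

theorem turn_cycle_ne_zero {x y z : ℂ} (hx : x ≠ 0) (hy : y ≠ 0) (hz : z ≠ 0) :
    turn x y + turn y z + turn z x ≠ 0 := by
  intro h
  have hprod : -(x / y) * -(y / z) * -(z / x) = -1 := by field_simp
  have hangle : ((turn x y + turn y z + turn z x : ℝ) : Real.Angle) = (Real.pi : ℝ) := by
    rw [← arg_neg_one, ← hprod, arg_mul_coe_angle, arg_mul_coe_angle] <;> simp [turn, *]
  rw [h, Real.Angle.coe_zero] at hangle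
  exact Real.Angle.pi_ne_zero hangle.symm

/-- Of three directions `b`, `c`, `d`, some two have `y` and the third on different sides. -/
theorem turn_sub_turn_ne {b c d y : ℂ} (hbc : ¬ SameRay ℝ b c) (hbd : ¬ SameRay ℝ b d)
    (hcd : ¬ SameRay ℝ c d) (h : turn b y - turn c y = turn b d - turn c d)
    (h' : turn b y - turn d y = turn b c - turn d c) :
    turn c y - turn d y ≠ turn c b - turn d b := by
  have ne_zero {x y : ℂ} (h : ¬ SameRay ℝ x y) : x ≠ 0 ∧ y ≠ 0 :=
    ⟨fun e => h (e ▸ SameRay.zero_left y), fun e => h (e ▸ SameRay.zero_right x)⟩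
  have hcycle := turn_cycle_ne_zero (ne_zero hbc).1 (ne_zero hbc).2 (ne_zero hbd).2
  rw [turn_swap hbd] at hcycle ⊢
  rw [turn_swap hbc]
  rw [turn_swap hcd] at h'
  exact fun h'' => hcycle (by linarith)

theorem continuousAt_turn {x y : ℂ} (h : ¬ SameRay ℝ x y) :
    ContinuousAt (fun z : ℂ × ℂ => turn z.1 z.2) (x, y) := by
  have hy : y ≠ 0 := fun e => h (e ▸ SameRay.zero_right x)
  exact ContinuousAt.comp (g := arg) (continuousAt_arg (neg_div_mem_slitPlane_iff.2 h))
    (continuousAt_fst.div continuousAt_snd hy).neg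

theorem turn_mul_of_im_pos {b z : ℂ} (hb : b ≠ 0) (hz : 0 < z.im) :
    turn b (b * z) = Real.pi - arg z := by
  have hπ : arg z ≠ Real.pi := fun e => hz.ne' (arg_eq_pi_iff.1 e).2
  have him : z⁻¹.im < 0 := by
    rw [inv_im]
    exact div_neg_of_neg_of_pos (neg_neg_of_pos hz) (normSq_pos.2 fun e => by simp [e] at hz)
  rw [turn, ← div_div, div_self hb, one_div, arg_neg_eq_arg_add_pi_of_im_neg him, arg_inv,
    if_neg hπ]
  ring

theorem turn_mul_of_im_neg {b z : ℂ} (hb : b ≠ 0) (hz : z.im < 0) :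
    turn b (b * z) = -Real.pi - arg z := by
  have hπ : arg z ≠ Real.pi := fun e => hz.ne (arg_eq_pi_iff.1 e).2
  have him : 0 < z⁻¹.im := by
    rw [inv_im]
    exact div_pos (neg_pos.2 hz) (normSq_pos.2 fun e => by simp [e] at hz)
  rw [turn, ← div_div, div_self hb, one_div, arg_neg_eq_arg_sub_pi_of_im_pos him, arg_inv,
    if_neg hπ]
  ring

/-- Two directions on either side of the ray `b` and close to it are told apart by the jump of
`turn b` across that ray. -/
theorem exists_turn_sub_turn_ne {b c : ℂ} {r : ℝ} (hr : 0 < r) (hbc : ¬ SameRay ℝ c b) :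
    ∃ᶠ τ : ℝ in 𝓝[>] 0, turn b (b * (r + τ * I)) - turn c (b * (r + τ * I)) ≠
      turn b (b * (r + (-τ : ℝ) * I)) - turn c (b * (r + (-τ : ℝ) * I)) := by
  have hb : b ≠ 0 := fun e => hbc (e ▸ SameRay.zero_right c)
  set F : ℝ → ℝ := fun τ => arg (r + τ * I) + turn c (b * (r + τ * I)) with hF
  have hFcont : ContinuousAt F 0 := by
    have hray : ¬ SameRay ℝ c (b * r) := fun h => hbc <| by
      simpa [mul_comm b, ← real_smul, smul_smul, hr.ne'] using h.pos_smul_right (inv_pos.2 hr)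
    have harg : ContinuousAt (fun τ : ℝ => arg (r + τ * I)) 0 :=
      ContinuousAt.comp (g := arg) (continuousAt_arg (by simpa using hr)) (by fun_prop)
    have hturn : ContinuousAt (fun τ : ℝ => turn c (b * (r + τ * I))) 0 :=
      ContinuousAt.comp (g := fun z : ℂ × ℂ => turn z.1 z.2)
        (f := fun τ : ℝ => (c, b * (r + τ * I))) (by simpa using continuousAt_turn hray)
        (by fun_prop)
    exact harg.add hturn
  have hdiff : Filter.Tendsto (fun τ => F τ - F (-τ)) (𝓝[>] 0) (𝓝 0) := by
    have : ContinuousAt (fun τ => F τ - F (-τ)) 0 :=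
      hFcont.sub (ContinuousAt.comp (g := F) (by simpa using hFcont) continuousAt_neg)
    simpa using this.tendsto.mono_left nhdsWithin_le_nhds
  intro hev
  obtain ⟨τ, ⟨heq, hlt⟩, hτ⟩ := ((Filter.Eventually.and hev
    (hdiff.eventually_lt_const Real.pi_pos)).and self_mem_nhdsWithin).exists
  have hτ : 0 < τ := hτ
  rw [not_not, turn_mul_of_im_pos hb (by simpa using hτ),
    turn_mul_of_im_neg hb (by simpa using hτ)] at heq
  simp only [hF] at hlt
  linarith [Real.pi_pos]

/-- Off `K` there is a continuous branch of the logarithm of `(y - z) / (x - z)`, so a closed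
curve off `K` winds around `x` as often as around `y`. -/
def HasLog (K : Set ℂ) (x y : ℂ) : Prop :=
  ∃ L : ℂ → ℂ, ContinuousOn L Kᶜ ∧ ∀ z ∉ K, exp (L z) = (y - z) / (x - z)

namespace HasLog

variable {K K' : Set ℂ} {x y z : ℂ}

theorem symm (h : HasLog K x y) : HasLog K y x := by
  obtain ⟨L, hL, hexp⟩ := h
  exact ⟨fun w => -L w, hL.neg, fun w hw => by rw [exp_neg, hexp w hw, inv_div]⟩

theorem trans (h : HasLog K x y) (h' : HasLog K' y z) (hy : y ∈ K) : HasLog (K ∪ K') x z := by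
  obtain ⟨L, hL, hexpL⟩ := h
  obtain ⟨M, hM, hexpM⟩ := h'
  refine ⟨fun w => L w + M w, ?_, fun w hw => ?_⟩
  · exact (hL.mono (compl_subset_compl.2 subset_union_left)).add
      (hM.mono (compl_subset_compl.2 subset_union_right))
  · rw [mem_union, not_or] at hw
    rw [exp_add, hexpL w hw.1, hexpM w hw.2, mul_comm,
      div_mul_div_cancel₀ (sub_ne_zero.2 fun e : y = w => hw.1 (e ▸ hy))]

end HasLog

section Segment

variable {x y z : ℂ}

theorem div_mem_slitPlane_of_notMem_segment (hz : z ∉ segment ℝ x y) :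
    (y - z) / (x - z) ∈ slitPlane := by
  rw [mem_segment_iff_sameRay, SameRay.sameRay_comm, ← neg_div_mem_slitPlane_iff, ← div_neg,
    neg_sub] at hz
  exact hz

theorem continuousOn_log_div (x y : ℂ) :
    ContinuousOn (fun z => log ((y - z) / (x - z))) (segment ℝ x y)ᶜ := by
  refine ContinuousOn.clog ?_ fun z hz => div_mem_slitPlane_of_notMem_segment hz
  exact ContinuousOn.div (by fun_prop) (by fun_prop) fun z hz =>
    sub_ne_zero.2 fun e => hz (e ▸ left_mem_segment ℝ x y)

theorem exp_log_div (hz : z ∉ segment ℝ x y) :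
    exp (log ((y - z) / (x - z))) = (y - z) / (x - z) :=
  exp_log (slitPlane_ne_zero (div_mem_slitPlane_of_notMem_segment hz))

theorem hasLog_segment (x y : ℂ) : HasLog (segment ℝ x y) x y :=
  ⟨_, continuousOn_log_div x y, fun _ hz => exp_log_div hz⟩

theorem tendsto_im_log_div {p b d : ℂ} (h : ¬ SameRay ℝ b d) :
    Filter.Tendsto (fun s : ℝ => (log ((p + b - (p + s • d)) / (p - (p + s • d)))).im)
      (𝓝[>] 0) (𝓝 (turn b d)) := by
  have hd : d ≠ 0 := fun e => h (e ▸ SameRay.zero_right b)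
  have hlim : ContinuousAt (fun s : ℝ => turn (b - s * d) d) 0 :=
    ContinuousAt.comp (g := fun z : ℂ × ℂ => turn z.1 z.2) (f := fun s : ℝ => (b - s * d, d))
      (by simpa using continuousAt_turn h) (by fun_prop)
  have hlim : Filter.Tendsto (fun s : ℝ => turn (b - s * d) d) (𝓝[>] 0) (𝓝 (turn b d)) := by
    simpa using hlim.tendsto.mono_left nhdsWithin_le_nhds
  refine hlim.congr' ?_
  filter_upwards [self_mem_nhdsWithin] with s (hs : 0 < s)
  have hs' : (s : ℂ) ≠ 0 := by exact_mod_cast hs.ne'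
  rw [log_im, turn, ← arg_real_mul _ (inv_pos.2 hs)]
  congr 1
  rw [real_smul, ofReal_inv, show p - (p + s * d) = -(s * d) by ring]
  field_simp
  ring

end Segment

theorem apply_eq_of_exp_eq_one {X : Type*} [TopologicalSpace X] {S : Set X} (hS : IsPreconnected S)
    {W : X → ℂ} (hW : ContinuousOn W S) (h1 : ∀ z ∈ S, exp (W z) = 1) {z w : X} (hz : z ∈ S)
    (hw : w ∈ S) : W z = W w := by
  let Λ : Set ℂ := (AddSubgroup.zmultiples (2 * Real.pi * I : ℂ) : AddSubgroup ℂ)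
  have hΛ : DiscreteTopology Λ :=
    inferInstanceAs (DiscreteTopology (AddSubgroup.zmultiples (2 * Real.pi * I : ℂ)))
  refine hS.constant_of_mapsTo (T := Λ) ⟨hΛ⟩ hW (fun x hx => ?_) hz hw
  obtain ⟨n, hn⟩ := exp_eq_one_iff.1 (h1 x hx)
  exact ⟨n, by simp [hn]⟩

/-- Along `X` the three branches of the logarithm add up to a constant in `2πiℤ`. Comparing its
values as `z` tends to `p` along the two rays gives the claim. -/
theorem HasLog.turn_sub_turn_eq {p b c d e : ℂ} {K X : Set ℂ} (hlog : HasLog K (p + b) (p + c))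
    (hK : IsClosed K) (hp : p ∉ K) (hb : p + b ∈ K) (hc : p + c ∈ K) (hX : IsPreconnected X)
    (hXb : Disjoint X (segment ℝ p (p + b))) (hXc : Disjoint X (segment ℝ p (p + c)))
    (hXK : Disjoint X K) (hd : RayStartsIn X p d) (he : RayStartsIn X p e) :
    turn b d - turn c d = turn b e - turn c e := by
  obtain ⟨M, hM, hexpM⟩ := hlog
  set W : ℂ → ℂ := fun z => log ((p + b - z) / (p - z)) + M z - log ((p + c - z) / (p - z))
  have hW : ContinuousOn W X :=
    (((continuousOn_log_div p (p + b)).mono hXb.subset_compl_right).add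
      (hM.mono hXK.subset_compl_right)).sub
      ((continuousOn_log_div p (p + c)).mono hXc.subset_compl_right)
  have hexp : ∀ z ∈ X, exp (W z) = 1 := fun z hz => by
    have hzb : z ∉ segment ℝ p (p + b) := hXb.notMem_of_mem_left hz
    have hzK : z ∉ K := hXK.notMem_of_mem_left hz
    have hzp : p - z ≠ 0 := sub_ne_zero.2 fun h => hzb (h ▸ left_mem_segment ℝ _ _)
    have hzb' : p + b - z ≠ 0 := sub_ne_zero.2 fun h => hzK (h ▸ hb)
    have hzc' : p + c - z ≠ 0 := sub_ne_zero.2 fun h => hzK (h ▸ hc)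
    rw [exp_sub, exp_add, exp_log_div hzb, exp_log_div (hXc.notMem_of_mem_left hz), hexpM z hzK]
    field_simp
  have hlim {f : ℂ} (hf : RayStartsIn X p f) :
      Filter.Tendsto (fun s : ℝ => (W (p + s • f)).im) (𝓝[>] 0)
        (𝓝 (turn b f + (M p).im - turn c f)) := by
    have ne_zero {g : ℂ} (hg : p + g ∈ K) : g ≠ 0 := by rintro rfl; exact hp (by simpa using hg)
    have hMlim : ContinuousAt (fun s : ℝ => (M (p + s • f)).im) 0 := by
      have : ContinuousAt M p := hM.continuousAt (hK.isOpen_compl.mem_nhds hp)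
      exact continuous_im.continuousAt.comp
        (ContinuousAt.comp (g := M) (by simpa using this) (by fun_prop))
    have hMlim := hMlim.tendsto.mono_left (nhdsWithin_le_nhds (s := Ioi 0))
    rw [zero_smul, add_zero] at hMlim
    exact ((tendsto_im_log_div ((hf.mono hXb.subset_compl_right).not_sameRay (ne_zero hb))).add
      hMlim).sub (tendsto_im_log_div ((hf.mono hXc.subset_compl_right).not_sameRay (ne_zero hc)))
  have heq : (fun s : ℝ => (W (p + s • d)).im) =ᶠ[𝓝[>] 0] fun s => (W (p + s • e)).im := by
    filter_upwards [hd, he] with s hsd hse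
    rw [apply_eq_of_exp_eq_one hX hW hexp hsd hse]
  linarith [tendsto_nhds_unique (hlim hd) ((hlim he).congr' heq.symm)]

/-- `A` is an arc from `a` to `b` that starts with the segment from `a` to `a + d` and continues
with `A'`, which does not come back to `a`. -/
structure IsStart (a b : ℂ) (A : Set ℂ) (d : ℂ) (A' : Set ℂ) : Prop where
  eq_union : A = segment ℝ a (a + d) ∪ A'
  isClosed : IsClosed A'
  notMem : a ∉ A'
  add_mem : a + d ∈ A'
  right_mem : b ∈ A'
  hasLog : HasLog A' (a + d) b

namespace IsStart

variable {a b d : ℂ} {A A' : Set ℂ}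

theorem ne_zero (h : IsStart a b A d A') : d ≠ 0 := by
  rintro rfl
  exact h.notMem (by simpa using h.add_mem)

theorem segment_subset (h : IsStart a b A d A') : segment ℝ a (a + d) ⊆ A :=
  h.eq_union ▸ subset_union_left

theorem subset (h : IsStart a b A d A') : A' ⊆ A := h.eq_union ▸ subset_union_right

end IsStart

theorem PLArc.exists_isStart {a b : ℂ} {A : Set ℂ} (h : PLArc a b A) :
    ∃ d A', IsStart a b A d A' := by
  induction h with
  | @seg b h =>
    have hb : HasLog {b} b b := by simpa using hasLog_segment b b
    refine ⟨b - a, {b}, ?_, isClosed_singleton, h, ?_, rfl, ?_⟩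
    · rw [add_sub_cancel, union_eq_self_of_subset_right]
      exact singleton_subset_iff.2 (right_mem_segment ℝ a b)
    · exact add_sub_cancel a b
    · rwa [add_sub_cancel]
  | @snoc b c A hA _ hinter ih =>
    obtain ⟨d, A', h⟩ := ih
    refine ⟨d, A' ∪ segment ℝ b c, by rw [← union_assoc, ← h.eq_union],
      h.isClosed.union (isCompact_segment b c).isClosed, ?_, Or.inl h.add_mem,
      Or.inr (right_mem_segment ℝ b c), h.hasLog.trans (hasLog_segment b c) h.right_mem⟩
    rintro (ha | ha)
    exacts [h.notMem ha, hA.ne (hinter.subset ⟨hA.left_mem, ha⟩)]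

theorem PLArc.hasLog {a b : ℂ} {A : Set ℂ} (h : PLArc a b A) : HasLog A a b := by
  obtain ⟨d, A', hd⟩ := h.exists_isStart
  exact hd.eq_union ▸ (hasLog_segment a (a + d)).trans hd.hasLog (right_mem_segment ℝ _ _)

theorem PLArc.exists_rays {a b p : ℂ} {A : Set ℂ} (h : PLArc a b A) (hp : p ∈ A) (hpa : p ≠ a)
    (hpb : p ≠ b) : ∃ d₁ d₂ : ℂ, ¬ SameRay ℝ d₁ d₂ ∧ ∃ A', IsClosed A' ∧ p ∉ A' ∧
      A = segment ℝ p (p + d₁) ∪ segment ℝ p (p + d₂) ∪ A' := by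
  induction h with
  | @seg b _ =>
    refine ⟨a - p, b - p, not_sameRay_of_mem_segment hp hpa hpb, ∅, isClosed_empty, by simp, ?_⟩
    rw [add_sub_cancel, add_sub_cancel, union_empty, segment_eq_union_of_mem hp]
  | @snoc b c A hA hbc hinter ih =>
    have hclosed : IsClosed (segment ℝ b c) := (isCompact_segment _ _).isClosed
    by_cases hpb' : p = b
    · subst hpb'
      obtain ⟨d, A', h⟩ := hA.reverse.exists_isStart
      refine ⟨d, c - p, ?_, A', h.isClosed, h.notMem, ?_⟩
      · have hc : c - p ≠ 0 := sub_ne_zero.2 hpb.symm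
        refine RayStartsIn.not_sameRay (p := p) ?_ h.ne_zero
        refine ((rayStartsIn_segment hc .rfl).inter (.ne hc)).mono fun z hz hz' => hz.2 ?_
        exact hinter.subset ⟨h.segment_subset hz', by simpa using hz.1⟩
      · rw [add_sub_cancel, union_right_comm, ← h.eq_union]
    · by_cases hpA : p ∈ A
      · obtain ⟨d₁, d₂, hd, A', hA', hpA', rfl⟩ := ih hpA hpb'
        refine ⟨d₁, d₂, hd, A' ∪ segment ℝ b c, hA'.union hclosed, ?_, union_assoc _ _ _⟩
        rintro (h | h)
        exacts [hpA' h, hpb' (hinter.subset ⟨hpA, h⟩)]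
      · have hp := hp.resolve_left hpA
        refine ⟨b - p, c - p, not_sameRay_of_mem_segment hp hpb' hpb, A, hA.isClosed, hpA, ?_⟩
        rw [add_sub_cancel, add_sub_cancel, union_comm, segment_eq_union_of_mem hp]

end Complex

end Turn

section Face

open Set Topology

theorem RayStartsIn.mem_closure {E : Type*} [AddCommGroup E] [Module ℝ E] [TopologicalSpace E]
    [ContinuousAdd E] [ContinuousSMul ℝ E] {X : Set E} {p d : E} (h : RayStartsIn X p d) :
    p ∈ closure X := by
  have hlim : Continuous fun s : ℝ => p + s • d := by fun_prop
  exact mem_closure_of_tendsto (tendsto_nhdsWithin_of_tendsto_nhds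
    (by simpa using hlim.tendsto 0)) h

section NormedSpace

variable {E : Type*} [NormedAddCommGroup E] [NormedSpace ℝ E] {D D' : Set E} {p z d : E}
  {ε t : ℝ}

/-- Inside the ball of radius `ε` around `p`, the set `D` is a cone with apex `p`. -/
def Conic (D : Set E) (p : E) (ε : ℝ) : Prop :=
  ∀ z ∈ Metric.ball p ε, ∀ t ∈ Ioc (0 : ℝ) 1, (p + t • (z - p) ∈ D ↔ z ∈ D)

theorem add_smul_sub_mem_ball (hz : z ∈ Metric.ball p ε) (ht : t ∈ Ioc (0 : ℝ) 1) :
    p + t • (z - p) ∈ Metric.ball p ε :=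
  (convex_ball p ε).add_smul_sub_mem (Metric.mem_ball_self (Metric.pos_of_mem_ball hz)) hz
    ⟨ht.1.le, ht.2⟩

theorem Conic.union (h : Conic D p ε) (h' : Conic D' p ε) : Conic (D ∪ D') p ε :=
  fun z hz t ht => or_congr (h z hz t ht) (h' z hz t ht)

theorem eventually_conic_of_notMem (hD : IsClosed D) (hp : p ∉ D) :
    ∀ᶠ ε in 𝓝[>] 0, Conic D p ε := by
  filter_upwards [nhdsWithin_le_nhds (eventually_ball_subset (hD.isOpen_compl.mem_nhds hp))]
    with ε hε z hz t ht
  exact iff_of_false (hε (add_smul_sub_mem_ball hz ht)) (hε hz)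

theorem eventually_conic_segment (p d : E) : ∀ᶠ ε in 𝓝[>] 0, Conic (segment ℝ p (p + d)) p ε := by
  rcases eq_or_ne d 0 with rfl | hd
  · refine Filter.Eventually.of_forall fun ε z _ t ht => ?_
    simp [ht.1.ne', sub_eq_zero]
  have hd' := norm_pos_iff.2 hd
  filter_upwards [Ioo_mem_nhdsGT hd'] with ε hε z hz t ht
  simp only [segment_eq_image', add_sub_cancel_left, mem_image]
  constructor
  · rintro ⟨r, hr, h⟩
    have hz' : z - p = (r / t) • d := by
      rw [div_eq_inv_mul, mul_smul, add_left_cancel h, inv_smul_smul₀ ht.1.ne']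
    have hrt : 0 ≤ r / t := div_nonneg hr.1 ht.1.le
    rw [mem_ball_iff_norm, hz', norm_smul, Real.norm_of_nonneg hrt] at hz
    exact ⟨r / t, ⟨hrt, le_of_mul_le_mul_right (by linarith [hε.2]) hd'⟩, by simp [← hz']⟩
  · rintro ⟨r, hr, rfl⟩
    exact ⟨t * r, ⟨mul_nonneg ht.1.le hr.1, mul_le_one₀ ht.2 hr.1 hr.2⟩, by simp [mul_smul]⟩

end NormedSpace

theorem PLArc.eventually_conic {a b : ℂ} {A : Set ℂ} (h : PLArc a b A) (p : ℂ) :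
    ∀ᶠ ε in 𝓝[>] 0, Conic A p ε := by
  have conic_left {a b : ℂ} (h : PLArc a b A) : ∀ᶠ ε in 𝓝[>] 0, Conic A a ε := by
    obtain ⟨d, A', hA'⟩ := h.exists_isStart
    rw [hA'.eq_union]
    filter_upwards [eventually_conic_segment a d,
      eventually_conic_of_notMem hA'.isClosed hA'.notMem] with ε h₁ h₂ using h₁.union h₂
  by_cases hp : p ∈ A
  · rcases eq_or_ne p a with rfl | hpa
    · exact conic_left h
    rcases eq_or_ne p b with rfl | hpb
    · exact conic_left h.reverse
    obtain ⟨d₁, d₂, -, A', hA', hpA', rfl⟩ := h.exists_rays hp hpa hpb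
    filter_upwards [eventually_conic_segment p d₁, eventually_conic_segment p d₂,
      eventually_conic_of_notMem hA' hpA'] with ε h₁ h₂ h₃ using (h₁.union h₂).union h₃
  · exact eventually_conic_of_notMem h.isClosed hp

/-- `f` is a face of the drawing `D`, that is, a connected component of its complement. -/
def IsFace {X : Type*} [TopologicalSpace X] (D f : Set X) : Prop :=
  ∃ x ∈ Dᶜ, f = connectedComponentIn Dᶜ x

namespace IsFace

section TopologicalSpace

variable {X : Type*} [TopologicalSpace X] {D f g S : Set X} {x : X}

theorem exists_of_notMem (hx : x ∉ D) : ∃ f, IsFace D f ∧ x ∈ f :=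
  ⟨_, ⟨x, hx, rfl⟩, mem_connectedComponentIn hx⟩

theorem isPreconnected (h : IsFace D f) : IsPreconnected f := by
  obtain ⟨x, -, rfl⟩ := h
  exact isPreconnected_connectedComponentIn

theorem nonempty (h : IsFace D f) : f.Nonempty := by
  obtain ⟨x, hx, rfl⟩ := h
  exact ⟨x, mem_connectedComponentIn hx⟩

theorem subset (h : IsFace D f) : f ⊆ Dᶜ := by
  obtain ⟨x, -, rfl⟩ := h
  exact connectedComponentIn_subset _ _

theorem subset_of_isPreconnected (h : IsFace D f) (hS : IsPreconnected S) (hSD : S ⊆ Dᶜ)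
    (hSf : (S ∩ f).Nonempty) : S ⊆ f := by
  obtain ⟨x, -, rfl⟩ := h
  obtain ⟨y, hyS, hy⟩ := hSf
  rw [connectedComponentIn_eq hy]
  exact hS.subset_connectedComponentIn hyS hSD

theorem eq_of_inter_nonempty (h : IsFace D f) (h' : IsFace D g) (hfg : (f ∩ g).Nonempty) :
    f = g :=
  Subset.antisymm (h'.subset_of_isPreconnected h.isPreconnected h.subset hfg)
    (h.subset_of_isPreconnected h'.isPreconnected h'.subset (inter_comm f g ▸ hfg))

variable [LocallyConnectedSpace X]

theorem isOpen (h : IsFace D f) (hD : IsClosed D) : IsOpen f := by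
  obtain ⟨x, -, rfl⟩ := h
  exact hD.isOpen_compl.connectedComponentIn

theorem mem_of_mem_closure (h : IsFace D f) (hD : IsClosed D) (hx : x ∈ closure f) (hxD : x ∉ D) :
    x ∈ f := by
  obtain ⟨g, hg, hxg⟩ := exists_of_notMem hxD
  have hgf := mem_closure_iff.1 hx g (hg.isOpen hD) hxg
  exact hg.eq_of_inter_nonempty h hgf ▸ hxg

end TopologicalSpace

section NormedSpace

variable {E : Type*} [NormedAddCommGroup E] [NormedSpace ℝ E] {D f : Set E} {p q z d e : E}
  {ε t : ℝ}

theorem add_smul_sub_mem (h : IsFace D f) (hc : Conic D p ε) (hz : z ∈ f)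
    (hzp : z ∈ Metric.ball p ε) (ht : t ∈ Ioc (0 : ℝ) 1) : p + t • (z - p) ∈ f := by
  have hS : IsPreconnected ((fun s : ℝ => p + s • (z - p)) '' Ioc (0 : ℝ) 1) :=
    isPreconnected_Ioc.image _ (by fun_prop)
  refine h.subset_of_isPreconnected hS ?_ ⟨z, ⟨1, by simp, by simp⟩, hz⟩ ⟨t, ht, rfl⟩
  rintro _ ⟨s, hs, rfl⟩ hmem
  exact h.subset hz ((hc z hzp s hs).1 hmem)

theorem add_smul_sub_mem_closure (h : IsFace D f) (hc : Conic D p ε) (hz : z ∈ closure f)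
    (hzp : z ∈ Metric.ball p ε) (ht : t ∈ Ioc (0 : ℝ) 1) : p + t • (z - p) ∈ closure f :=
  map_mem_closure (f := fun z => p + t • (z - p)) (by fun_prop)
    (Metric.isOpen_ball.inter_closure ⟨hzp, hz⟩)
    fun _ hw => h.add_smul_sub_mem hc hw.2 hw.1 ht

theorem rayStartsIn (h : IsFace D f) (hc : Conic D p ε) (hz : z ∈ f) (hzp : z ∈ Metric.ball p ε) :
    RayStartsIn f p (z - p) := by
  filter_upwards [Ioc_mem_nhdsGT one_pos] with s hs using h.add_smul_sub_mem hc hz hzp hs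

theorem exists_segment_subset_insert (h : IsFace D f) (hD : ∀ᶠ ε in 𝓝[>] 0, Conic D p ε)
    (hp : p ∈ closure f) : ∃ z ∈ f, segment ℝ p z ⊆ insert p f := by
  obtain ⟨ε, hc, hε⟩ := (hD.and self_mem_nhdsWithin).exists
  obtain ⟨z, hz, hzf⟩ := mem_closure_iff_nhds.1 hp _ (Metric.ball_mem_nhds p hε)
  refine ⟨z, hzf, ?_⟩
  rw [segment_eq_image']
  rintro _ ⟨t, ht, rfl⟩
  rcases ht.1.eq_or_lt with rfl | ht₀
  · simp
  · exact Or.inr (h.add_smul_sub_mem hc hzf hz ⟨ht₀, ht.2⟩)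

theorem exists_plArc (h : IsFace D f) (hD : IsClosed D) (hDc : ∀ p, ∀ᶠ ε in 𝓝[>] 0, Conic D p ε)
    (hp : p ∈ D) (hpq : p ≠ q) (hpf : p ∈ closure f) (hqf : q ∈ closure f) :
    ∃ A ⊆ f ∪ {p, q}, PLArc p q A := by
  obtain ⟨x, hxf, hx⟩ := h.exists_segment_subset_insert (hDc p) hpf
  obtain ⟨y, hyf, hy⟩ := h.exists_segment_subset_insert (hDc q) hqf
  have hpx : p ≠ x := fun e => h.subset hxf (e ▸ hp)
  obtain ⟨A, hA, hA'⟩ := (PLArc.seg hpx).extend_isOpen (h.isOpen hD) h.isPreconnected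
    (fun hpf => h.subset hpf hp) hxf hyf
  obtain ⟨B, hB, hB'⟩ := hA'.extend_segment hpq.symm
  refine ⟨B, hB.trans (union_subset (hA.trans (union_subset (hx.trans ?_) ?_)) ?_), hB'⟩
  · exact insert_subset (by simp) subset_union_left
  · exact subset_union_left
  · rw [segment_symm]
    exact hy.trans (insert_subset (by simp) subset_union_left)

end NormedSpace

end IsFace

theorem isPreconnected_ball_diff_ray {E : Type*} [NormedAddCommGroup E] [NormedSpace ℝ E]
    (p d : E) (ε : ℝ) :
    IsPreconnected (Metric.ball p ε ∩ {z | ¬ SameRay ℝ d (z - p)}) := by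
  rcases eq_or_ne d 0 with rfl | hd
  · simpa using isPreconnected_empty
  rcases le_or_gt ε 0 with hε | hε
  · simpa [Metric.ball_eq_empty.2 hε] using isPreconnected_empty
  obtain ⟨c, hc, hcε⟩ : ∃ c : ℝ, 0 < c ∧ ‖c • d‖ < ε := by
    have hcont : Continuous fun c : ℝ => ‖c • d‖ := by fun_prop
    have hsmall : ∀ᶠ c in 𝓝[>] (0 : ℝ), ‖c • d‖ < ε :=
      nhdsWithin_le_nhds (hcont.continuousAt.eventually_lt continuousAt_const (by simpa))
    obtain ⟨c, hcε, hc⟩ := (hsmall.and self_mem_nhdsWithin).exists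
    exact ⟨c, hc, hcε⟩
  have hmem : p - c • d ∈ {z | ¬ SameRay ℝ d (z - p)} := by
    have := (sameRay_smul_right_iff (R := ℝ) (v := d) (r := -c)).not.2 (by simp [hc, hd])
    simpa using this
  have hstar : StarConvex ℝ (p - c • d) {z | ¬ SameRay ℝ d (z - p)} := by
    intro z hz s t hs ht hst (hray : SameRay ℝ d _)
    rcases ht.eq_or_lt with rfl | ht
    · obtain rfl : s = 1 := by linarith
      exact hmem (by simpa using hray)
    refine hz ?_
    have htz := hray.add_right (SameRay.sameRay_nonneg_smul_right d (mul_nonneg hs hc.le))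
    have hsum : s • (p - c • d) + t • z - p + (s * c) • d = t • (z - p) := by
      obtain rfl : s = 1 - t := by linarith
      module
    rw [hsum] at htz
    simpa [smul_smul, ht.ne'] using htz.pos_smul_right (inv_pos.2 ht)
  have hball : p - c • d ∈ Metric.ball p ε := by simpa [mem_ball_iff_norm] using hcε
  exact ((((convex_ball p ε).starConvex hball).inter hstar).isPathConnected
    ⟨hball, hmem⟩).isConnected.isPreconnected

section Complex

open Complex

variable {D f g : Set ℂ} {p b d e z : ℂ} {ε : ℝ}

theorem dense_im_div_ne_zero (p : ℂ) (hb : b ≠ 0) : Dense {z : ℂ | ((z - p) / b).im ≠ 0} :=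
  ((dense_compl_singleton (0 : ℝ)).preimage isOpenMap_im).preimage
    ((Homeomorph.subRight p).trans (Homeomorph.mulRight₀ b⁻¹ (inv_ne_zero hb))).isOpenMap

theorem im_div_eq_zero_of_sameRay (hb : b ≠ 0) (h : SameRay ℝ b z) : (z / b).im = 0 := by
  obtain ⟨r, -, rfl⟩ := h.exists_nonneg_left hb
  rw [real_smul, mul_div_cancel_right₀ _ hb, ofReal_im]

theorem im_div_eq_zero_of_mem_segment {x y : ℂ} (h : z ∈ segment ℝ x y) :
    ((z - x) / (y - x)).im = 0 := by
  rw [segment_eq_image'] at h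
  obtain ⟨t, -, rfl⟩ := h
  rcases eq_or_ne x y with rfl | hxy
  · simp
  · rw [add_sub_cancel_left, real_smul, mul_div_cancel_right₀ _ (sub_ne_zero.2 hxy.symm),
      ofReal_im]

theorem dense_compl_segment {x y : ℂ} (h : x ≠ y) : Dense (segment ℝ x y)ᶜ :=
  (dense_im_div_ne_zero x (sub_ne_zero.2 h.symm)).mono fun _ (hz : _ ≠ _) hmem =>
    hz (im_div_eq_zero_of_mem_segment hmem)

theorem PLArc.dense_compl {a b : ℂ} {A : Set ℂ} (h : PLArc a b A) : Dense Aᶜ := by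
  induction h with
  | seg h => exact dense_compl_segment h
  | snoc hA h hAs ih =>
    rw [compl_union]
    exact ih.inter_of_isOpen_left (dense_compl_segment h) hA.isClosed.isOpen_compl

/-- The ray in direction `d` does not disconnect a small disc around its apex `p`, so a face
at `p` cannot be bounded there by that ray alone. -/
theorem IsFace.exists_mem_closure_not_sameRay (h : IsFace D f) (hD : IsClosed D)
    (hp : p ∈ closure f) (hε : 0 < ε) (hq : RayStartsIn D p e) (hde : ¬ SameRay ℝ d e) :
    ∃ x ∈ D, x ∈ closure f ∧ x ∈ Metric.ball p ε ∧ ¬ SameRay ℝ d (x - p) := by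
  have hd : d ≠ 0 := fun hd => hde (hd ▸ SameRay.zero_left e)
  by_contra! hno
  set S := Metric.ball p ε ∩ {z | ¬ SameRay ℝ d (z - p)}
  have hfS : (S ∩ f).Nonempty := by
    obtain ⟨w, hwp, hwf⟩ := mem_closure_iff_nhds.1 hp _ (Metric.ball_mem_nhds p hε)
    obtain ⟨z, ⟨hzp, hzf⟩, hz⟩ := (dense_im_div_ne_zero p hd).inter_open_nonempty _
      (Metric.isOpen_ball.inter (h.isOpen hD)) ⟨w, hwp, hwf⟩
    exact ⟨z, ⟨hzp, fun hray => hz (im_div_eq_zero_of_sameRay hd hray)⟩, hzf⟩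
  have hSf : S ⊆ f := by
    refine (isPreconnected_ball_diff_ray p d ε).subset_of_closure_inter_subset (h.isOpen hD)
      hfS ?_
    rintro x ⟨hx, hxp, hxd⟩
    exact h.mem_of_mem_closure hD hx fun hxD => hxd (hno x hxD hx hxp)
  have hray : RayStartsIn S p e := by
    refine (RayStartsIn.of_mem_nhds (Metric.ball_mem_nhds p hε)).inter ?_
    filter_upwards [self_mem_nhdsWithin] with s (hs : 0 < s) hse
    rw [add_sub_cancel_left] at hse
    exact hde (by simpa [smul_smul, hs.ne'] using hse.pos_smul_right (inv_pos.2 hs))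
  obtain ⟨q, hqD, hqS⟩ := (hq.inter hray).nonempty
  exact h.subset (hSf hqS) hqD

/-- The half of the disc of radius `ε` around `p` to the left of the direction `b`. The other half
is `halfDisc p (-b) ε`. -/
def halfDisc (p b : ℂ) (ε : ℝ) : Set ℂ := Metric.ball p ε ∩ {z | 0 < ((z - p) / b).im}

theorem convex_halfDisc (p b : ℂ) (ε : ℝ) : Convex ℝ (halfDisc p b ε) := by
  have hset : {z | 0 < ((z - p) / b).im} = {z | (p / b).im < (z / b).im} := by simp [sub_div]
  refine (convex_ball p ε).inter (hset ▸ convex_halfSpace_gt ⟨fun x y => ?_, fun r x => ?_⟩ _)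
  · rw [add_div, add_im]
  · rw [real_smul, mul_div_assoc, im_ofReal_mul, smul_eq_mul]

theorem rayStartsIn_halfDisc (hε : 0 < ε) (hd : 0 < (d / b).im) :
    RayStartsIn (halfDisc p b ε) p d := by
  refine (RayStartsIn.of_mem_nhds (Metric.ball_mem_nhds p hε)).inter ?_
  filter_upwards [self_mem_nhdsWithin] with s (hs : 0 < s)
  simpa [mul_div_assoc, hs] using hd

theorem IsFace.exists_halfDisc_subset (hb : b ≠ 0) (hε : 0 < ε)
    (h : Disjoint (halfDisc p b ε) D) :
    ∃ f, IsFace D f ∧ halfDisc p b ε ⊆ f ∧ p ∈ closure f := by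
  have hray : RayStartsIn (halfDisc p b ε) p (b * I) :=
    rayStartsIn_halfDisc hε (by simp [hb])
  obtain ⟨z, hz⟩ := hray.nonempty
  obtain ⟨f, hf, hzf⟩ := IsFace.exists_of_notMem (h.notMem_of_mem_left hz)
  have hsub := hf.subset_of_isPreconnected (convex_halfDisc p b ε).isPreconnected
    h.subset_compl_right ⟨z, hz, hzf⟩
  exact ⟨f, hf, hsub, closure_mono hsub hray.mem_closure⟩

theorem IsFace.eq_or_eq_of_halfDisc_subset {k : Set ℂ} (hD : IsClosed D) (hb : b ≠ 0) (hε : 0 < ε)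
    (hf : IsFace D f) (hg : IsFace D g) (hbf : halfDisc p b ε ⊆ f) (hbg : halfDisc p (-b) ε ⊆ g)
    (hk : IsFace D k) (hpk : p ∈ closure k) : k = f ∨ k = g := by
  obtain ⟨w, hwp, hwk⟩ := mem_closure_iff_nhds.1 hpk _ (Metric.ball_mem_nhds p hε)
  obtain ⟨z, ⟨hzp, hzk⟩, hz⟩ := (dense_im_div_ne_zero p hb).inter_open_nonempty _
    (Metric.isOpen_ball.inter (hk.isOpen hD)) ⟨w, hwp, hwk⟩
  rcases lt_or_gt_of_ne hz with hz | hz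
  · exact Or.inr (hk.eq_of_inter_nonempty hg ⟨z, hzk, hbg ⟨hzp, by simpa [div_neg] using hz⟩⟩)
  · exact Or.inl (hk.eq_of_inter_nonempty hf ⟨z, hzk, hbf ⟨hzp, hz⟩⟩)

end Complex

end Face

section Polygonalization

open Set Topology Metric Filter

namespace IsArc

section TopologicalSpace

variable {X : Type*} [TopologicalSpace X] {a b : X} {A : Set X}

theorem image_uIcc {γ : ℝ → X} {s t : ℝ} (hst : s ≠ t) (hγ : ContinuousOn γ (uIcc s t))
    (hγi : InjOn γ (uIcc s t)) : IsArc (γ s) (γ t) (γ '' uIcc s t) := by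
  have himage : AffineMap.lineMap s t '' Icc (0 : ℝ) 1 = uIcc s t := by
    rw [← segment_eq_image_lineMap, segment_eq_uIcc]
  have hmaps : MapsTo (AffineMap.lineMap s t) (Icc (0 : ℝ) 1) (uIcc s t) :=
    himage ▸ mapsTo_image _ _
  exact ⟨γ ∘ AffineMap.lineMap s t, hγ.comp (by fun_prop) hmaps,
    hγi.comp (AffineMap.lineMap_injective ℝ hst).injOn hmaps, by simp, by simp,
    by rw [image_comp, himage]⟩

theorem left_mem (hA : IsArc a b A) : a ∈ A := by
  obtain ⟨γ, -, -, rfl, -, rfl⟩ := hA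
  exact mem_image_of_mem γ (left_mem_Icc.2 zero_le_one)

theorem right_mem (hA : IsArc a b A) : b ∈ A := by
  obtain ⟨γ, -, -, -, rfl, rfl⟩ := hA
  exact mem_image_of_mem γ (right_mem_Icc.2 zero_le_one)

theorem symm (hA : IsArc a b A) : IsArc b a A := by
  obtain ⟨γ, hγ, hγi, rfl, rfl, rfl⟩ := hA
  have h10 : uIcc (1 : ℝ) 0 = Icc 0 1 := uIcc_of_ge zero_le_one
  rw [← h10] at hγ hγi ⊢
  exact image_uIcc one_ne_zero hγ hγi

theorem isCompact (hA : IsArc a b A) : IsCompact A := by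
  obtain ⟨γ, hγ, -, -, -, rfl⟩ := hA
  exact isCompact_Icc.image_of_continuousOn hγ

theorem isPreconnected (hA : IsArc a b A) : IsPreconnected A := by
  obtain ⟨γ, hγ, -, -, -, rfl⟩ := hA
  exact isPreconnected_Icc.image γ hγ

end TopologicalSpace

variable {X : Type*} [PseudoMetricSpace X] {a b c : X} {A : Set X} {ε : ℝ}

theorem exists_last_exit (hA : IsArc a b A) (ha : dist a c ≤ ε) (hb : ε < dist b c) :
    ∃ p, ∃ A' ⊆ A, IsArc p b A' ∧ dist p c = ε ∧ ∀ x ∈ A', x ∈ closedBall c ε → x = p := by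
  obtain ⟨γ, hγ, hγi, rfl, rfl, rfl⟩ := hA
  have hdist : ContinuousOn (fun t => dist (γ t) c) (Icc 0 1) := by fun_prop
  have exists_eq {s : ℝ} (hs : s ∈ Icc (0 : ℝ) 1) (hsε : dist (γ s) c ≤ ε) :
      ∃ t ∈ Icc s 1, dist (γ t) c = ε :=
    intermediate_value_Icc hs.2 (hdist.mono (Icc_subset_Icc_left hs.1)) ⟨hsε, hb.le⟩
  obtain ⟨t₀, ht₀, ht₀ε⟩ := exists_eq (left_mem_Icc.2 zero_le_one) ha
  have hcompact : IsCompact (Icc 0 1 ∩ (fun t => dist (γ t) c) ⁻¹' {ε}) :=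
    isCompact_Icc.of_isClosed_subset
      (hdist.preimage_isClosed_of_isClosed isClosed_Icc isClosed_singleton) inter_subset_left
  obtain ⟨t, ⟨ht, htε⟩, hmax⟩ := hcompact.exists_isGreatest ⟨t₀, ht₀, ht₀ε⟩
  have ht1 : t ≠ 1 := by
    rintro rfl
    exact hb.ne' htε
  have hu : uIcc t 1 = Icc t 1 := uIcc_of_le ht.2
  have hsub : uIcc t 1 ⊆ Icc 0 1 := hu ▸ Icc_subset_Icc_left ht.1
  refine ⟨γ t, γ '' uIcc t 1, image_mono hsub, image_uIcc ht1 (hγ.mono hsub) (hγi.mono hsub),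
    htε, ?_⟩
  rintro _ ⟨s, hs, rfl⟩ hsε
  obtain ⟨s', hs', hs'ε⟩ := exists_eq (hsub hs) hsε
  rw [hu] at hs
  have hle : s' ≤ t := hmax ⟨⟨(hsub (hu ▸ hs)).1.trans hs'.1, hs'.2⟩, hs'ε⟩
  rw [le_antisymm (hs'.1.trans hle) hs.1]

end IsArc

theorem eventually_disjoint_thickening {X : Type*} [PseudoEMetricSpace X] {K C : Set X}
    (hK : IsCompact K) (hC : IsClosed C) (h : Disjoint K C) :
    ∀ᶠ δ in 𝓝[>] 0, Disjoint (thickening δ K) (thickening δ C) := by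
  obtain ⟨δ, hδ, hd⟩ := h.exists_thickenings hK hC
  filter_upwards [Ioo_mem_nhdsGT hδ] with ε hε
  exact hd.mono (thickening_mono hε.2.le _) (thickening_mono hε.2.le _)

section NormedSpace

variable {F : Type*} [NormedAddCommGroup F] [NormedSpace ℝ F] {M : Set F} {v p p' x : F} {ε : ℝ}

theorem isPreconnected_thickening (h : IsPreconnected M) (δ : ℝ) :
    IsPreconnected (thickening δ M) := by
  rw [← add_ball_zero, ← image2_add, ← image_prod]
  exact (h.prod (convex_ball _ _).isPreconnected).image _ (by fun_prop)

theorem segment_subset_closedBall_of_dist_eq (h : dist p v = ε) :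
    segment ℝ v p ⊆ closedBall v ε :=
  (convex_closedBall v ε).segment_subset
    (mem_closedBall_self (h ▸ dist_nonneg)) (mem_closedBall.2 h.le)

theorem eq_of_mem_segment_of_mem_segment (h : dist p v = ε) (h' : dist p' v = ε) (hne : p ≠ p')
    (hx : x ∈ segment ℝ v p) (hx' : x ∈ segment ℝ v p') : x = v := by
  by_contra hxv
  have hpp : SameRay ℝ (p - v) (p' - v) :=
    (mem_segment_iff_wbtw.1 hx).sameRay_vsub_left.symm.trans
      (mem_segment_iff_wbtw.1 hx').sameRay_vsub_left fun h₀ => (hxv (sub_eq_zero.1 h₀)).elim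
  rw [dist_eq_norm] at h h'
  exact hne (sub_left_injective ((sameRay_iff_of_norm_eq (h.trans h'.symm)).1 hpp))

end NormedSpace

namespace PlaneEmbedding

variable {G : SimpleGraph V}

/-- All edges are drawn as simple polygonal arcs. -/
def IsPolygonal (E : PlaneEmbedding G) : Prop :=
  ∀ ⦃u v⦄, G.Adj u v → PLArc (E.vtx u) (E.vtx v) (E.arc u v)

theorem exists_isPolygonal_of_subset {f : V → ℂ} (hf : f.Injective) (N : Sym2 V → Set ℂ)
    (harc : ∀ u v, G.Adj u v → ∃ A ⊆ N s(u, v), PLArc (f u) (f v) A)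
    (hvtx : ∀ e ∈ G.edgeSet, ∀ w, f w ∈ N e → w ∈ e)
    (hinter : G.edgeSet.Pairwise fun e e' => ∀ x ∈ N e, x ∈ N e' → ∃ v ∈ e, v ∈ e' ∧ x = f v) :
    ∃ E : PlaneEmbedding G, E.IsPolygonal := by
  have exists_plArc (e : Sym2 V) :
      ∃ A, ∀ u v, G.Adj u v → s(u, v) = e → A ⊆ N e ∧ PLArc (f u) (f v) A := by
    induction e with | _ x y
    by_cases hxy : G.Adj x y
    · obtain ⟨A, hAN, hA⟩ := harc x y hxy
      refine ⟨A, fun u v _ huv => ⟨hAN, ?_⟩⟩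
      obtain ⟨rfl, rfl⟩ | ⟨rfl, rfl⟩ := Sym2.eq_iff.1 huv
      exacts [hA, hA.reverse]
    · exact ⟨∅, fun u v huv h => (hxy (G.mem_edgeSet.1 (h ▸ huv))).elim⟩
  choose A hA using exists_plArc
  have hsub {u v : V} (h : G.Adj u v) : A s(u, v) ⊆ N s(u, v) := (hA _ u v h rfl).1
  refine ⟨⟨f, fun u v => A s(u, v), hf, fun u v => by rw [Sym2.eq_swap],
    fun u v h => (hA _ u v h rfl).2.isArc, fun u v x y huv hxy hne z hz => ?_,
    fun u v h w hw => by simpa using hvtx _ h w (hsub h hw)⟩, fun u v h => (hA _ u v h rfl).2⟩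
  obtain ⟨w, hw, hw', rfl⟩ := hinter huv hxy hne z (hsub huv hz.1) (hsub hxy hz.2)
  simpa [hf.eq_iff] using And.intro hw hw'

variable (E : PlaneEmbedding G)

/-- The arc by which an edge is drawn, as a function of the unordered edge. -/
def edgeArc : Sym2 V → Set ℂ := Sym2.lift ⟨E.arc, E.arc_symm⟩

variable {E} in
theorem exists_eq_vtx_of_mem_edgeArc {e e' : Sym2 V} {x : ℂ} (he : e ∈ G.edgeSet)
    (he' : e' ∈ G.edgeSet) (hne : e ≠ e') (hx : x ∈ E.edgeArc e) (hx' : x ∈ E.edgeArc e') :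
    ∃ v ∈ e, v ∈ e' ∧ x = E.vtx v := by
  induction e with | _ a b
  induction e' with | _ c d
  obtain ⟨rfl | rfl, h⟩ := E.arc_inter he he' hne ⟨hx, hx'⟩
  exacts [⟨a, by simpa [E.vtx_inj.eq_iff] using h⟩, ⟨b, by simpa [E.vtx_inj.eq_iff] using h⟩]

variable {E} in
theorem mem_of_vtx_mem_edgeArc {e : Sym2 V} {w : V} (he : e ∈ G.edgeSet)
    (hw : E.vtx w ∈ E.edgeArc e) : w ∈ e := by
  induction e with | _ a b
  exact Sym2.mem_iff.2 (E.arc_vtx he w hw)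

/-- A radius for disjoint closed discs around the vertices that meet only the arcs of the incident
edges. -/
structure IsVertexRadius (ε : ℝ) : Prop where
  pos : 0 < ε
  eq_of_mem_closedBall : ∀ ⦃u v x⦄, x ∈ closedBall (E.vtx u) ε → x ∈ closedBall (E.vtx v) ε → u = v
  mem_of_mem_closedBall : ∀ ⦃e v x⦄, e ∈ G.edgeSet → x ∈ E.edgeArc e →
    x ∈ closedBall (E.vtx v) ε → v ∈ e

theorem exists_isVertexRadius [Finite V] : ∃ ε, E.IsVertexRadius ε := by
  have hdisj : ∀ᶠ ε in 𝓝[>] 0, ∀ u v, u ≠ v →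
      Disjoint (closedBall (E.vtx u) ε) (closedBall (E.vtx v) ε) := by
    simp only [eventually_all]
    intro u v huv
    filter_upwards [Ioo_mem_nhdsGT (half_pos (dist_pos.2 (E.vtx_inj.ne huv)))] with ε hε
    exact closedBall_disjoint_closedBall (by linarith [hε.2])
  have harc : ∀ᶠ ε in 𝓝[>] 0, ∀ u v w, G.Adj u v → w ∉ s(u, v) →
      closedBall (E.vtx w) ε ⊆ (E.arc u v)ᶜ := by
    simp only [eventually_all]
    intro u v w huv hw
    have hclosed : IsClosed (E.arc u v) := (IsArc.isCompact (E.arc_curve huv)).isClosed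
    refine nhdsWithin_le_nhds (eventually_closedBall_subset (hclosed.isOpen_compl.mem_nhds ?_))
    exact fun h => hw (Sym2.mem_iff.2 (E.arc_vtx huv w h))
  obtain ⟨ε, ⟨hdisj, harc⟩, hε⟩ := ((hdisj.and harc).and self_mem_nhdsWithin).exists
  refine ⟨ε, hε, fun u v x hu hv => ?_, fun e v x he hx hv => ?_⟩
  · exact not_imp_comm.1 (hdisj u v) fun h => h.notMem_of_mem_left hu hv
  · induction e with | _ a b
    exact not_imp_comm.1 (harc a b v he) fun h => h hv hx

/-- `M` is a piece of the arc of `e` leading from the disc of radius `ε` around one end of `e` to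
the disc around the other end; `p v` is the point where it meets the disc around `v`. -/
structure IsMiddle (ε : ℝ) (e : Sym2 V) (M : Set ℂ) (p : V → ℂ) : Prop where
  subset : M ⊆ E.edgeArc e
  isCompact : IsCompact M
  isPreconnected : IsPreconnected M
  mem : ∀ v ∈ e, p v ∈ M
  dist_eq : ∀ v ∈ e, dist (p v) (E.vtx v) = ε
  eq_of_mem_closedBall : ∀ v ∈ e, ∀ x ∈ M, x ∈ closedBall (E.vtx v) ε → x = p v

variable {E} {ε : ℝ}

theorem IsVertexRadius.exists_isMiddle (hε : E.IsVertexRadius ε) {u v : V} (h : G.Adj u v) :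
    ∃ M p, E.IsMiddle ε s(u, v) M p := by
  classical
  have hlt {x y : V} {z : ℂ} (hxy : x ≠ y) (hz : dist z (E.vtx x) ≤ ε) : ε < dist z (E.vtx y) :=
    not_le.1 fun hz' => hxy (hε.eq_of_mem_closedBall hz hz')
  obtain ⟨p, A, hA, hAarc, hp, hpA⟩ := IsArc.exists_last_exit (E.arc_curve h)
    (by simp [hε.pos.le]) (hlt h.ne' (by simp [hε.pos.le]))
  obtain ⟨q, M, hM, hMarc, hq, hqM⟩ := hAarc.symm.exists_last_exit
    (by simp [hε.pos.le]) (hlt h.ne hp.le)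
  refine ⟨M, Function.update (Function.const V q) u p, hM.trans hA, hMarc.isCompact,
    hMarc.isPreconnected, Sym2.ball.2 ?_, Sym2.ball.2 ?_, Sym2.ball.2 ?_⟩
  all_goals simp only [Function.update_self, Function.update_of_ne h.ne', Function.const_apply]
  exacts [⟨hMarc.right_mem, hMarc.left_mem⟩, ⟨hp, hq⟩, ⟨fun x hx => hpA x (hM hx), hqM⟩]

theorem IsMiddle.vtx_notMem {e : Sym2 V} {M : Set ℂ} {p : V → ℂ} (hM : E.IsMiddle ε e M p)
    (hε : E.IsVertexRadius ε) (he : e ∈ G.edgeSet) (w : V) : E.vtx w ∉ M := by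
  intro hw
  have hball : E.vtx w ∈ closedBall (E.vtx w) ε := mem_closedBall_self hε.pos.le
  have hwe := hε.mem_of_mem_closedBall he (hM.subset hw) hball
  have hd := hM.dist_eq w hwe
  rw [← hM.eq_of_mem_closedBall w hwe _ hw hball, _root_.dist_self] at hd
  exact hε.pos.ne hd

variable (E) in
/-- The radii along which the polygonal arc of `e` leaves and enters the discs around the two ends
of `e`. -/
def spokes (e : Sym2 V) (p : V → ℂ) : Set ℂ := ⋃ v ∈ e, segment ℝ (E.vtx v) (p v)

theorem mem_spokes {e : Sym2 V} {p : V → ℂ} {x : ℂ} :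
    x ∈ E.spokes e p ↔ ∃ v ∈ e, x ∈ segment ℝ (E.vtx v) (p v) := mem_iUnion₂.trans (by simp)

theorem isClosed_spokes [Finite V] (e : Sym2 V) (p : V → ℂ) : IsClosed (E.spokes e p) :=
  (toFinite {v | v ∈ e}).isClosed_biUnion fun _ _ => (isCompact_segment _ _).isClosed

section Pair

variable {e e' : Sym2 V} {M M' : Set ℂ} {p p' : V → ℂ}

theorem IsMiddle.exists_mem_closedBall_of_mem_spokes {x : ℂ} (hM : E.IsMiddle ε e M p)
    (hx : x ∈ E.spokes e p) :
    ∃ v ∈ e, x ∈ segment ℝ (E.vtx v) (p v) ∧ x ∈ closedBall (E.vtx v) ε := by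
  obtain ⟨v, hv, hx⟩ := mem_spokes.1 hx
  exact ⟨v, hv, hx, segment_subset_closedBall_of_dist_eq (hM.dist_eq v hv) hx⟩

theorem IsMiddle.mem_of_vtx_mem_spokes {w : V} (hε : E.IsVertexRadius ε)
    (hM : E.IsMiddle ε e M p) (hw : E.vtx w ∈ E.spokes e p) : w ∈ e := by
  obtain ⟨v, hv, -, hball⟩ := hM.exists_mem_closedBall_of_mem_spokes hw
  rwa [hε.eq_of_mem_closedBall (mem_closedBall_self hε.pos.le) hball]

theorem IsMiddle.disjoint (hε : E.IsVertexRadius ε) (hM : E.IsMiddle ε e M p)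
    (hM' : E.IsMiddle ε e' M' p') (he : e ∈ G.edgeSet) (he' : e' ∈ G.edgeSet) (hne : e ≠ e') :
    Disjoint M M' := by
  refine disjoint_left.2 fun x hx hx' => ?_
  obtain ⟨v, -, -, rfl⟩ :=
    exists_eq_vtx_of_mem_edgeArc he he' hne (hM.subset hx) (hM'.subset hx')
  exact hM.vtx_notMem hε he v hx

theorem IsMiddle.disjoint_spokes (hε : E.IsVertexRadius ε) (hM : E.IsMiddle ε e M p)
    (hM' : E.IsMiddle ε e' M' p') (he : e ∈ G.edgeSet) (he' : e' ∈ G.edgeSet) (hne : e ≠ e') :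
    Disjoint M (E.spokes e' p') := by
  refine disjoint_left.2 fun x hx hx' => ?_
  obtain ⟨v, hv', hseg, hball⟩ := hM'.exists_mem_closedBall_of_mem_spokes hx'
  have hv := hε.mem_of_mem_closedBall he (hM.subset hx) hball
  obtain rfl := hM.eq_of_mem_closedBall v hv x hx hball
  have hadd := dist_add_dist_of_mem_segment hseg
  rw [_root_.dist_comm, hM.dist_eq v hv, _root_.dist_comm (E.vtx v), hM'.dist_eq v hv'] at hadd
  have heq : p v = p' v := dist_eq_zero.1 (by linarith)
  exact (hM.disjoint hε hM' he he' hne).notMem_of_mem_left hx (heq ▸ hM'.mem v hv')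

theorem IsMiddle.exists_eq_vtx_of_mem_spokes {x : ℂ} (hε : E.IsVertexRadius ε)
    (hM : E.IsMiddle ε e M p) (hM' : E.IsMiddle ε e' M' p') (he : e ∈ G.edgeSet)
    (he' : e' ∈ G.edgeSet) (hne : e ≠ e')
    (hx : x ∈ E.spokes e p) (hx' : x ∈ E.spokes e' p') : ∃ v ∈ e, v ∈ e' ∧ x = E.vtx v := by
  obtain ⟨v, hv, hseg, hball⟩ := hM.exists_mem_closedBall_of_mem_spokes hx
  obtain ⟨v', hv', hseg', hball'⟩ := hM'.exists_mem_closedBall_of_mem_spokes hx'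
  obtain rfl := hε.eq_of_mem_closedBall hball hball'
  refine ⟨v, hv, hv', eq_of_mem_segment_of_mem_segment (hM.dist_eq v hv) (hM'.dist_eq v hv') ?_
    hseg hseg'⟩
  exact (hM.disjoint hε hM' he he' hne).ne_of_mem (hM.mem v hv) (hM'.mem v hv')

end Pair

theorem IsMiddle.exists_plArc {u v : V} {M : Set ℂ} {p : V → ℂ} {δ : ℝ}
    (hM : E.IsMiddle ε s(u, v) M p) (huv : u ≠ v) (hδ : 0 < δ) (hu : E.vtx u ∉ thickening δ M) :
    ∃ A ⊆ E.spokes s(u, v) p ∪ thickening δ M, PLArc (E.vtx u) (E.vtx v) A := by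
  have mem_thickening {w : V} (hw : w ∈ s(u, v)) : p w ∈ thickening δ M :=
    self_subset_thickening hδ M (hM.mem w hw)
  have hpu := mem_thickening (Sym2.mem_mk_left u v)
  have hpv := mem_thickening (Sym2.mem_mk_right u v)
  obtain ⟨A, hA, hAarc⟩ := (PLArc.seg (ne_of_mem_of_not_mem hpu hu).symm).extend_isOpen
    isOpen_thickening (isPreconnected_thickening hM.isPreconnected δ) hu hpu hpv
  obtain ⟨B, hB, hBarc⟩ := hAarc.extend_segment (E.vtx_inj.ne huv.symm)
  have hspoke {w : V} (hw : w ∈ s(u, v)) : segment ℝ (E.vtx w) (p w) ⊆ E.spokes s(u, v) p :=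
    fun x hx => mem_spokes.2 ⟨w, hw, hx⟩
  refine ⟨B, hB.trans (union_subset (hA.trans (union_subset_union_left _ ?_)) ?_), hBarc⟩
  · exact hspoke (Sym2.mem_mk_left u v)
  · rw [segment_symm]
    exact (hspoke (Sym2.mem_mk_right u v)).trans subset_union_left

theorem IsVertexRadius.exists_thickening [Finite V] (hε : E.IsVertexRadius ε)
    {M : Sym2 V → Set ℂ} {p : Sym2 V → V → ℂ}
    (hM : ∀ e ∈ G.edgeSet, E.IsMiddle ε e (M e) (p e)) :
    ∃ δ > 0, (∀ e ∈ G.edgeSet, ∀ w, E.vtx w ∉ thickening δ (M e)) ∧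
      G.edgeSet.Pairwise fun e e' => Disjoint (thickening δ (M e)) (thickening δ (M e')) ∧
        Disjoint (thickening δ (M e)) (E.spokes e' (p e')) := by
  have hvtx : ∀ᶠ δ in 𝓝[>] 0, ∀ e ∈ G.edgeSet, ∀ w,
      Disjoint (thickening δ (M e)) (thickening δ {E.vtx w}) := by
    simp only [eventually_all]
    exact fun e he w => eventually_disjoint_thickening (hM e he).isCompact isClosed_singleton
      (disjoint_singleton_right.2 ((hM e he).vtx_notMem hε he w))
  have hmiddle : ∀ᶠ δ in 𝓝[>] 0, ∀ e ∈ G.edgeSet, ∀ e' ∈ G.edgeSet, e ≠ e' →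
      Disjoint (thickening δ (M e)) (thickening δ (M e')) := by
    simp only [eventually_all]
    exact fun e he e' he' hne => eventually_disjoint_thickening (hM e he).isCompact
      (hM e' he').isCompact.isClosed ((hM e he).disjoint hε (hM e' he') he he' hne)
  have hspokes : ∀ᶠ δ in 𝓝[>] 0, ∀ e ∈ G.edgeSet, ∀ e' ∈ G.edgeSet, e ≠ e' →
      Disjoint (thickening δ (M e)) (thickening δ (E.spokes e' (p e'))) := by
    simp only [eventually_all]
    exact fun e he e' he' hne => eventually_disjoint_thickening (hM e he).isCompact
      (isClosed_spokes e' (p e')) ((hM e he).disjoint_spokes hε (hM e' he') he he' hne)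
  obtain ⟨δ, ⟨hvtx, hmiddle, hspokes⟩, hδ⟩ :=
    ((hvtx.and (hmiddle.and hspokes)).and self_mem_nhdsWithin).exists
  refine ⟨δ, hδ, fun e he w hw => ?_, fun e he e' he' hne => ⟨hmiddle e he e' he' hne, ?_⟩⟩
  · exact (hvtx e he w).notMem_of_mem_left hw (self_subset_thickening hδ _ rfl)
  · exact (hspokes e he e' he' hne).mono_right (self_subset_thickening hδ _)

theorem exists_isPolygonal [Finite V] (E : PlaneEmbedding G) :
    ∃ E' : PlaneEmbedding G, E'.IsPolygonal := by
  obtain ⟨ε, hε⟩ := E.exists_isVertexRadius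
  have exists_isMiddle (e : Sym2 V) : ∃ M p, e ∈ G.edgeSet → E.IsMiddle ε e M p := by
    by_cases he : e ∈ G.edgeSet
    · induction e with | _ u v
      obtain ⟨M, p, hM⟩ := hε.exists_isMiddle he
      exact ⟨M, p, fun _ => hM⟩
    · exact ⟨∅, 0, fun h => (he h).elim⟩
  choose M p hM using exists_isMiddle
  obtain ⟨δ, hδ, hvtx, hdisj⟩ := hε.exists_thickening hM
  refine exists_isPolygonal_of_subset E.vtx_inj (fun e => E.spokes e (p e) ∪ thickening δ (M e))
    (fun u v h => (hM _ h).exists_plArc h.ne hδ (hvtx _ h u)) (fun e he w hw => ?_)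
    fun e he e' he' hne x hx hx' => ?_
  · exact hw.elim ((hM e he).mem_of_vtx_mem_spokes hε) fun h => (hvtx e he w h).elim
  · obtain hx | hx := hx <;> obtain hx' | hx' := hx'
    · exact (hM e he).exists_eq_vtx_of_mem_spokes hε (hM e' he') he he' hne hx hx'
    · exact ((hdisj he' he hne.symm).2.notMem_of_mem_left hx' hx).elim
    · exact ((hdisj he he' hne).2.notMem_of_mem_left hx hx').elim
    · exact ((hdisj he he' hne).1.notMem_of_mem_left hx hx').elim

end PlaneEmbedding

end Polygonalization

section Drawing

open Set Topology Metric Filter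

namespace IsArc

variable {X : Type*} [TopologicalSpace X] {a b : X} {A : Set X}

theorem exists_diff_eq_image_Ioo (hA : IsArc a b A) :
    ∃ γ : ℝ → X, ContinuousOn γ (Icc 0 1) ∧ A = γ '' Icc 0 1 ∧ A \ {a, b} = γ '' Ioo 0 1 := by
  obtain ⟨γ, hγ, hγi, rfl, rfl, rfl⟩ := hA
  refine ⟨γ, hγ, rfl, ?_⟩
  rw [← image_pair, ← hγi.image_sdiff_subset, Icc_sdiff_both]
  exact pair_subset (left_mem_Icc.2 zero_le_one) (right_mem_Icc.2 zero_le_one)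

theorem isPreconnected_diff (hA : IsArc a b A) : IsPreconnected (A \ {a, b}) := by
  obtain ⟨γ, hγ, -, hdiff⟩ := hA.exists_diff_eq_image_Ioo
  exact hdiff ▸ isPreconnected_Ioo.image γ (hγ.mono Ioo_subset_Icc_self)

theorem subset_closure_diff (hA : IsArc a b A) : A ⊆ closure (A \ {a, b}) := by
  obtain ⟨γ, hγ, himage, hdiff⟩ := hA.exists_diff_eq_image_Ioo
  have hcl : closure (Ioo (0 : ℝ) 1) = Icc 0 1 := closure_Ioo zero_ne_one
  rw [hdiff, himage, ← hcl]
  exact (hcl.symm ▸ hγ).image_closure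

theorem isPreconnected_diff_left (hA : IsArc a b A) : IsPreconnected (A \ {a}) :=
  hA.isPreconnected_diff.subset_closure (sdiff_subset_sdiff_right (by simp))
    (sdiff_subset.trans hA.subset_closure_diff)

end IsArc

theorem eventually_mem_imp_mem {X : Type*} [TopologicalSpace X] {A : Set X} (hA : IsClosed A)
    (p : X) : ∀ᶠ x in 𝓝 p, x ∈ A → p ∈ A := by
  by_cases hp : p ∈ A
  · exact .of_forall fun _ _ => hp
  · filter_upwards [hA.isOpen_compl.mem_nhds hp] with x hx hxA using (hx hxA).elim

section NormedSpace

variable {F : Type*} [NormedAddCommGroup F] [NormedSpace ℝ F] {p : F}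

theorem eventually_conic_iUnion {ι : Sort*} [Finite ι] {D : ι → Set F}
    (h : ∀ i, ∀ᶠ ε in 𝓝[>] 0, Conic (D i) p ε) : ∀ᶠ ε in 𝓝[>] 0, Conic (⋃ i, D i) p ε := by
  filter_upwards [eventually_all.2 h] with ε hε z hz t ht
  simp only [mem_iUnion, hε _ z hz t ht]

theorem eventually_conic_singleton (p q : F) : ∀ᶠ ε in 𝓝[>] 0, Conic {q} p ε := by
  rcases eq_or_ne p q with rfl | hpq
  · simpa using eventually_conic_segment p 0
  · exact eventually_conic_of_notMem isClosed_singleton hpq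

end NormedSpace

theorem IsFace.eventually_mem_closure_of_mem_segment {D f : Set ℂ} {p d d' : ℂ} (hf : IsFace D f)
    (hD : IsClosed D) (hDc : ∀ᶠ ε in 𝓝[>] 0, Conic D p ε) (hp : p ∈ closure f)
    (hDp : ∀ᶠ x in 𝓝 p, x ∈ D → x ∈ segment ℝ p (p + d) ∪ segment ℝ p (p + d'))
    (hd' : segment ℝ p (p + d') ⊆ D) (hne : ¬ SameRay ℝ d d') :
    ∀ᶠ z in 𝓝 p, z ∈ segment ℝ p (p + d') → z ∈ closure f := by
  obtain ⟨ε, ⟨hc, hball⟩, hε : 0 < ε⟩ :=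
    ((hDc.and (nhdsWithin_le_nhds (eventually_ball_subset hDp))).and self_mem_nhdsWithin).exists
  have hd₀ : d' ≠ 0 := fun h => hne (h ▸ SameRay.zero_right d)
  obtain ⟨x, hxD, hxf, hxp, hx⟩ := hf.exists_mem_closure_not_sameRay hD hp hε
    ((rayStartsIn_segment hd₀ (SameRay.refl d')).mono hd') hne
  rcases hball hxp hxD with hxs | hxs
  · exact (hx (sameRay_sub_of_mem_segment hxs)).elim
  obtain ⟨r, hr, rfl⟩ : ∃ r ∈ Icc (0 : ℝ) 1, p + r • d' = x := by
    simpa [segment_eq_image'] using hxs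
  rw [add_sub_cancel_left] at hx
  have hr₀ : 0 < r := hr.1.lt_of_ne fun h => hx (by simp [← h])
  filter_upwards [ball_mem_nhds p (norm_pos_iff.2 (smul_ne_zero hr₀.ne' hd₀))] with z hz hzs
  obtain ⟨s, hs, rfl⟩ : ∃ s ∈ Icc (0 : ℝ) 1, p + s • d' = z := by
    simpa [segment_eq_image'] using hzs
  simp only [mem_ball_iff_norm, add_sub_cancel_left, norm_smul, Real.norm_of_nonneg hr.1,
    Real.norm_of_nonneg hs.1] at hz
  have hsr : s < r := lt_of_mul_lt_mul_right hz (norm_nonneg d')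
  rcases hs.1.eq_or_lt with rfl | hs₀
  · simpa using hp
  · have hmem := hf.add_smul_sub_mem_closure hc hxf hxp (t := s / r)
      ⟨div_pos hs₀ hr₀, (div_le_one hr₀).2 hsr.le⟩
    rwa [add_sub_cancel_left, smul_smul, div_mul_cancel₀ s hr₀.ne'] at hmem

namespace PlaneEmbedding

variable {G : SimpleGraph V} {u v w : V} {x p : ℂ} {f : Set ℂ}

section Basic

variable (E : PlaneEmbedding G)

theorem vtx_mem_drawing (u : V) : E.vtx u ∈ E.drawing := Or.inl (mem_range_self u)

theorem arc_subset_drawing (h : G.Adj u v) : E.arc u v ⊆ E.drawing :=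
  (subset_iUnion₂_of_subset u v (subset_iUnion (fun _ : G.Adj u v => _) h)).trans
    subset_union_right

theorem left_mem_arc (h : G.Adj u v) : E.vtx u ∈ E.arc u v := IsArc.left_mem (E.arc_curve h)

theorem right_mem_arc (h : G.Adj u v) : E.vtx v ∈ E.arc u v := IsArc.right_mem (E.arc_curve h)

theorem isCompact_arc (h : G.Adj u v) : IsCompact (E.arc u v) := IsArc.isCompact (E.arc_curve h)

theorem isCompact_drawing [Finite V] : IsCompact E.drawing :=
  (finite_range _).isCompact.union <| isCompact_iUnion fun _ => isCompact_iUnion fun _ =>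
    isCompact_iUnion E.isCompact_arc

theorem isClosed_drawing [Finite V] : IsClosed E.drawing := E.isCompact_drawing.isClosed

end Basic

variable {E : PlaneEmbedding G}

theorem mem_drawing_iff :
    x ∈ E.drawing ↔ (∃ u, x = E.vtx u) ∨ ∃ u v, G.Adj u v ∧ x ∈ E.arc u v := by
  simp [drawing, eq_comm]

theorem arc_eq_of_mem (h : G.Adj u v) (hx : x ∈ E.arc u v) (hxv : ∀ w, x ≠ E.vtx w) {u' v' : V}
    (h' : G.Adj u' v') (hx' : x ∈ E.arc u' v') : s(u, v) = s(u', v') := by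
  by_contra hne
  obtain ⟨w, -, -, hw⟩ := exists_eq_vtx_of_mem_edgeArc h h' hne hx hx'
  exact hxv w hw

section Finite

variable [Finite V]

theorem eventually_mem_arc_imp_mem_arc (E : PlaneEmbedding G) (p : ℂ) :
    ∀ᶠ x in 𝓝 p, ∀ u v, G.Adj u v → x ∈ E.arc u v → p ∈ E.arc u v := by
  simp only [eventually_all]
  exact fun u v h => eventually_mem_imp_mem (E.isCompact_arc h).isClosed p

theorem eventually_ne_vtx (E : PlaneEmbedding G) (p : ℂ) :
    ∀ᶠ x in 𝓝 p, x ≠ p → ∀ w, x ≠ E.vtx w := by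
  have hclosed : IsClosed (range E.vtx \ {p}) := ((finite_range _).subset sdiff_subset).isClosed
  filter_upwards [eventually_mem_imp_mem hclosed p] with x hx hxp w hxw
  exact (hx ⟨⟨w, hxw.symm⟩, hxp⟩).2 rfl

theorem eventually_exists_mem_arc (E : PlaneEmbedding G) (u : V) :
    ∀ᶠ x in 𝓝 (E.vtx u), x ∈ E.drawing → x ≠ E.vtx u →
      (∀ w, x ≠ E.vtx w) ∧ ∃ w, G.Adj u w ∧ x ∈ E.arc u w := by
  filter_upwards [E.eventually_mem_arc_imp_mem_arc (E.vtx u), E.eventually_ne_vtx (E.vtx u)]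
    with x harc hvtx hx hxu
  refine ⟨hvtx hxu, ?_⟩
  obtain ⟨w, hw⟩ | ⟨a, b, hab, hxab⟩ := mem_drawing_iff.1 hx
  · exact (hvtx hxu w hw).elim
  rcases E.arc_vtx hab u (harc a b hab hxab) with rfl | rfl
  · exact ⟨b, hab, hxab⟩
  · exact ⟨a, hab.symm, E.arc_symm a u ▸ hxab⟩

theorem eventually_mem_arc (h : G.Adj u v) (hp : p ∈ E.arc u v) (hpv : ∀ w, p ≠ E.vtx w) :
    ∀ᶠ x in 𝓝 p, x ∈ E.drawing → x ∈ E.arc u v := by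
  filter_upwards [E.eventually_mem_arc_imp_mem_arc p, E.eventually_ne_vtx p] with x harc hvtx hx
  rcases eq_or_ne x p with rfl | hxp
  · exact hp
  obtain ⟨w, hw⟩ | ⟨a, b, hab, hxab⟩ := mem_drawing_iff.1 hx
  · exact (hvtx hxp w hw).elim
  · rcases Sym2.eq_iff.1 (arc_eq_of_mem h hp hpv hab (harc a b hab hxab)) with
      ⟨rfl, rfl⟩ | ⟨rfl, rfl⟩
    exacts [hxab, E.arc_symm v u ▸ hxab]

namespace IsPolygonal

theorem eventually_conic (hE : E.IsPolygonal) (p : ℂ) :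
    ∀ᶠ ε in 𝓝[>] 0, Conic E.drawing p ε := by
  have hvtx : ∀ᶠ ε in 𝓝[>] 0, Conic (range E.vtx) p ε := by
    rw [← iUnion_singleton_eq_range]
    exact eventually_conic_iUnion fun u => eventually_conic_singleton p _
  have harc := eventually_conic_iUnion fun u => eventually_conic_iUnion fun v =>
    eventually_conic_iUnion fun h : G.Adj u v => (hE h).eventually_conic p
  filter_upwards [hvtx, harc] with ε h₁ h₂ using h₁.union h₂

theorem eventually_mem_closure (hE : E.IsPolygonal) (hf : IsFace E.drawing f) (h : G.Adj u v)
    (hp : p ∈ E.arc u v \ {E.vtx u, E.vtx v}) (hpf : p ∈ closure f) :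
    ∀ᶠ z in 𝓝 p, z ∈ E.arc u v → z ∈ closure f := by
  simp only [Set.mem_sdiff, mem_insert_iff, mem_singleton_iff, not_or] at hp
  obtain ⟨hp, hpu, hpv⟩ := hp
  obtain ⟨d, d', hne, A', hA', hpA', hA⟩ := (hE h).exists_rays hp hpu hpv
  have hvtx : ∀ w, p ≠ E.vtx w := by
    rintro w rfl
    rcases E.arc_vtx h w hp with rfl | rfl
    exacts [hpu rfl, hpv rfl]
  have hrays : ∀ᶠ x in 𝓝 p, x ∈ E.arc u v → x ∈ segment ℝ p (p + d) ∪ segment ℝ p (p + d') := by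
    rw [hA]
    filter_upwards [hA'.isOpen_compl.mem_nhds hpA'] with x hx using (Or.resolve_right · hx)
  have hdraw := (eventually_mem_arc h hp hvtx).and hrays |>.mono fun x hx => hx.2 ∘ hx.1
  have hsub := hA ▸ E.arc_subset_drawing h
  filter_upwards [hrays,
    hf.eventually_mem_closure_of_mem_segment E.isClosed_drawing (hE.eventually_conic p) hpf hdraw
      (fun x hx => hsub (Or.inl (Or.inr hx))) hne,
    hf.eventually_mem_closure_of_mem_segment E.isClosed_drawing (hE.eventually_conic p) hpf
      (by rwa [union_comm]) (fun x hx => hsub (Or.inl (Or.inl hx))) fun h => hne h.symm]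
    with z hz h₁ h₂ hzA
  exact (hz hzA).elim h₂ h₁

theorem arc_subset_closure (hE : E.IsPolygonal) (hf : IsFace E.drawing f) (h : G.Adj u v)
    (hx : x ∈ E.arc u v \ {E.vtx u, E.vtx v}) (hxf : x ∈ closure f) : E.arc u v ⊆ closure f := by
  have hA : IsArc (E.vtx u) (E.vtx v) (E.arc u v) := E.arc_curve h
  refine hA.subset_closure_diff.trans (closure_minimal (fun y hy => ?_) isClosed_closure)
  refine hA.isPreconnected_diff.induction₂' (fun x y => x ∈ closure f → y ∈ closure f)
    (fun p hp => ?_) (fun _ _ _ _ _ _ h h' => h' ∘ h) hx hy hxf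
  by_cases hpf : p ∈ closure f
  · filter_upwards [nhdsWithin_le_nhds (hE.eventually_mem_closure hf h hp hpf),
      self_mem_nhdsWithin] with z hz hzA using ⟨fun _ => hz hzA.1, fun _ => hpf⟩
  · filter_upwards [nhdsWithin_le_nhds (isClosed_closure.isOpen_compl.mem_nhds hpf)] with z hz
    exact ⟨fun h => (hpf h).elim, fun h => (hz h).elim⟩

end IsPolygonal

end Finite

end PlaneEmbedding

end Drawing

section FacesOfDrawings

open Set Topology Metric Filter

namespace PlaneEmbedding

variable {G : SimpleGraph V} {E : PlaneEmbedding G} {u v w : V} {p d d' : ℂ} {f A A' : Set ℂ}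

theorem edgeArc_subset_drawing (E : PlaneEmbedding G) {e : Sym2 V} (he : e ∈ G.edgeSet) :
    E.edgeArc e ⊆ E.drawing := by
  induction e with | _ a b
  exact E.arc_subset_drawing he

theorem IsPolygonal.planarGraph_sup_edge (hE : E.IsPolygonal) (hA : PLArc (E.vtx u) (E.vtx w) A)
    (hAD : A ∩ E.drawing ⊆ {E.vtx u, E.vtx w}) :
    PlanarGraph (G ⊔ fromEdgeSet {s(u, w)}) := by
  classical
  have mem_edgeSet {e : Sym2 V} (he : e ∈ (G ⊔ fromEdgeSet {s(u, w)}).edgeSet)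
      (hne : e ≠ s(u, w)) : e ∈ G.edgeSet := by
    rw [edgeSet_sup, edgeSet_fromEdgeSet] at he
    exact he.resolve_right fun h => hne h.1
  have exists_eq_vtx {x : ℂ} (hxA : x ∈ A) (hx : x ∈ E.drawing) : ∃ v ∈ s(u, w), x = E.vtx v := by
    simpa using hAD ⟨hxA, hx⟩
  have exists_common {e : Sym2 V} {x : ℂ} (he : e ∈ G.edgeSet) (hxA : x ∈ A)
      (hx : x ∈ E.edgeArc e) : ∃ v ∈ s(u, w), v ∈ e ∧ x = E.vtx v := by
    obtain ⟨v, hv, rfl⟩ := exists_eq_vtx hxA (E.edgeArc_subset_drawing he hx)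
    exact ⟨v, hv, mem_of_vtx_mem_edgeArc he hx, rfl⟩
  have mem_or_mem {e : Sym2 V} {x : ℂ} (hx : x ∈ Function.update E.edgeArc s(u, w) A e) :
      e = s(u, w) ∧ x ∈ A ∨ e ≠ s(u, w) ∧ x ∈ E.edgeArc e := by
    rw [Function.update_apply] at hx
    split_ifs at hx with h
    exacts [Or.inl ⟨h, hx⟩, Or.inr ⟨h, hx⟩]
  refine Exists.nonempty (exists_isPolygonal_of_subset E.vtx_inj
    (Function.update E.edgeArc s(u, w) A) (fun a b hab => ?_) (fun e he c hc => ?_)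
    fun e he e' he' hne x hx hx' => ?_)
  · by_cases h : s(a, b) = s(u, w)
    · rw [h, Function.update_self]
      obtain ⟨rfl, rfl⟩ | ⟨rfl, rfl⟩ := Sym2.eq_iff.1 h
      exacts [⟨A, subset_rfl, hA⟩, ⟨A, subset_rfl, hA.reverse⟩]
    · rw [Function.update_of_ne h]
      exact ⟨E.arc a b, subset_rfl, hE (mem_edgeSet hab h)⟩
  · rcases mem_or_mem hc with ⟨rfl, hcA⟩ | ⟨h, hc⟩
    · obtain ⟨v, hv, hcv⟩ := exists_eq_vtx hcA (E.vtx_mem_drawing c)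
      exact E.vtx_inj hcv ▸ hv
    · exact mem_of_vtx_mem_edgeArc (mem_edgeSet he h) hc
  · rcases mem_or_mem hx with ⟨rfl, hxA⟩ | ⟨h, hx⟩ <;>
      rcases mem_or_mem hx' with ⟨rfl, hxA'⟩ | ⟨h', hx'⟩
    · exact (hne rfl).elim
    · exact exists_common (mem_edgeSet he' h') hxA hx'
    · simpa only [and_left_comm] using exists_common (mem_edgeSet he h) hxA' hx
    · exact exists_eq_vtx_of_mem_edgeArc (mem_edgeSet he h) (mem_edgeSet he' h') hne hx hx'

theorem not_sameRay_of_isStart {A'' : Set ℂ} (huv : G.Adj u v) (huw : G.Adj u w) (hvw : v ≠ w)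
    (hd : IsStart (E.vtx u) (E.vtx v) (E.arc u v) d A')
    (hd' : IsStart (E.vtx u) (E.vtx w) (E.arc u w) d' A'') : ¬ SameRay ℝ d d' := by
  refine RayStartsIn.not_sameRay (p := E.vtx u) ?_ hd.ne_zero
  have hv : {E.vtx v}ᶜ ∈ 𝓝 (E.vtx u) := isOpen_compl_singleton.mem_nhds (E.vtx_inj.ne huv.ne)
  refine (((rayStartsIn_segment hd'.ne_zero (SameRay.refl d')).inter (.ne hd'.ne_zero)).inter
    (.of_mem_nhds hv)).mono ?_
  rintro x ⟨⟨hxw, hxu⟩, hxv⟩ hx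
  have hne : s(u, v) ≠ s(u, w) := Sym2.congr_right.not.2 hvw
  exact (E.arc_inter huv huw hne ⟨hd.segment_subset hx, hd'.segment_subset hxw⟩).1.elim hxu hxv

namespace IsPolygonal

variable [Finite V]

theorem dense_compl_drawing (hE : E.IsPolygonal) : Dense E.drawingᶜ := by
  have hcompl : E.drawingᶜ = (range E.vtx)ᶜ ∩ ⋂ e : {e : V × V // G.Adj e.1 e.2},
      (E.arc e.1.1 e.1.2)ᶜ := by
    ext x
    simp [mem_drawing_iff, eq_comm]
  rw [hcompl]
  refine Dense.inter_of_isOpen_left ((finite_range _).countable.dense_compl ℝ)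
    (dense_iInter_of_isOpen (fun e => ?_) fun e => (hE e.2).dense_compl)
    (finite_range _).isClosed.isOpen_compl
  exact (E.isCompact_arc e.2).isClosed.isOpen_compl

theorem exists_face (hE : E.IsPolygonal) (p : ℂ) : ∃ f, IsFace E.drawing f ∧ p ∈ closure f := by
  obtain ⟨ε, hc, hε⟩ := ((hE.eventually_conic p).and self_mem_nhdsWithin).exists
  obtain ⟨z, hz, hzD⟩ := hE.dense_compl_drawing.inter_open_nonempty _ isOpen_ball
    ⟨p, mem_ball_self hε⟩
  obtain ⟨f, hf, hzf⟩ := IsFace.exists_of_notMem hzD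
  exact ⟨f, hf, (hf.rayStartsIn hc hzf hz).mem_closure⟩

theorem exists_face_arc (hE : E.IsPolygonal) (h : G.Adj u v) :
    ∃ f, IsFace E.drawing f ∧ E.arc u v ⊆ closure f := by
  obtain ⟨p, hp⟩ := closure_nonempty_iff.1
    ⟨E.vtx u, IsArc.subset_closure_diff (E.arc_curve h) (E.left_mem_arc h)⟩
  obtain ⟨f, hf, hpf⟩ := hE.exists_face p
  exact ⟨f, hf, hE.arc_subset_closure hf h hp hpf⟩

theorem adj_of_mem_closure (hE : E.IsPolygonal) (hG : MaximalPlanar G) (hf : IsFace E.drawing f)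
    (huw : u ≠ w) (hu : E.vtx u ∈ closure f) (hw : E.vtx w ∈ closure f) : G.Adj u w := by
  by_contra hadj
  obtain ⟨A, hAf, hA⟩ := hf.exists_plArc E.isClosed_drawing hE.eventually_conic
    (E.vtx_mem_drawing u) (E.vtx_inj.ne huw) hu hw
  refine hG.2 u w huw hadj (hE.planarGraph_sup_edge hA ?_)
  rintro x ⟨hx, hxD⟩
  exact (hAf hx).resolve_left fun hxf => hf.subset hxf hxD

theorem exists_arc_subset_closure (hE : E.IsPolygonal) (hf : IsFace E.drawing f)
    (hu : E.vtx u ∈ closure f) (huv : G.Adj u v) (huw : G.Adj u w) (hvw : v ≠ w) :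
    ∃ w', G.Adj u w' ∧ w' ≠ v ∧ E.arc u w' ⊆ closure f := by
  obtain ⟨d, A', hd⟩ := (hE huv).exists_isStart
  obtain ⟨d', A'', hd'⟩ := (hE huw).exists_isStart
  obtain ⟨ε, hε, hball⟩ := Metric.eventually_nhds_iff_ball.1
    ((E.eventually_exists_mem_arc u).and (hd.isClosed.isOpen_compl.mem_nhds hd.notMem))
  have hray : RayStartsIn E.drawing (E.vtx u) d' :=
    (rayStartsIn_segment hd'.ne_zero (SameRay.refl d')).mono
      (hd'.segment_subset.trans (E.arc_subset_drawing huw))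
  obtain ⟨x, hxD, hxf, hxu, hx⟩ := hf.exists_mem_closure_not_sameRay E.isClosed_drawing hu hε hray
    (not_sameRay_of_isStart huv huw hvw hd hd')
  have hxvtx : x ≠ E.vtx u := fun h => hx (by simp [h])
  obtain ⟨hxw, w', huw', hxw'⟩ := (hball x hxu).1 hxD hxvtx
  refine ⟨w', huw', ?_, hE.arc_subset_closure hf huw' ⟨hxw', by simp [hxw]⟩ hxf⟩
  rintro rfl
  exact hx (sameRay_sub_of_mem_segment
    ((hd.eq_union ▸ hxw').resolve_right (hball x hxu).2))

end IsPolygonal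

end PlaneEmbedding

end FacesOfDrawings

section FacesOfTriangulations

open Set Topology Metric Filter

/-- The open segment between two closest points of `K` and `L` lies in one face. -/
theorem exists_isFace_of_disjoint {X : Type*} [NormedAddCommGroup X] [NormedSpace ℝ X]
    {K L : Set X} (hK : IsCompact K) (hL : IsCompact L) (hKne : K.Nonempty) (hLne : L.Nonempty)
    (hKL : Disjoint K L) :
    ∃ f, IsFace (K ∪ L) f ∧ (K ∩ closure f).Nonempty ∧ (L ∩ closure f).Nonempty := by
  obtain ⟨⟨x, y⟩, ⟨hx, hy⟩, hmin⟩ := (hK.prod hL).exists_isMinOn (hKne.prod hLne)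
    (f := fun z => dist z.1 z.2) continuous_dist.continuousOn
  have hle {x' y' : X} (hx' : x' ∈ K) (hy' : y' ∈ L) : dist x y ≤ dist x' y' :=
    hmin (a := (x', y')) ⟨hx', hy'⟩
  have hxy : x ≠ y := hKL.ne_of_mem hx hy
  have hsub : openSegment ℝ x y ⊆ (K ∪ L)ᶜ := by
    rintro z hz (hzK | hzL)
    · have hdist := dist_add_dist_of_mem_segment (openSegment_subset_segment ℝ x y hz)
      obtain rfl : x = z := dist_le_zero.1 (by linarith [hle hzK hy])
      exact hxy (left_mem_openSegment_iff.1 hz)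
    · have hdist := dist_add_dist_of_mem_segment (openSegment_subset_segment ℝ x y hz)
      obtain rfl : z = y := dist_le_zero.1 (by linarith [hle hx hzL])
      exact hxy (right_mem_openSegment_iff.1 hz)
  obtain ⟨z, hz⟩ : (openSegment ℝ x y).Nonempty := ⟨_, midpoint_mem_openSegment x y⟩
  obtain ⟨f, hf, hzf⟩ := IsFace.exists_of_notMem (hsub hz)
  have hclosure : segment ℝ x y ⊆ closure f := segment_subset_closure_openSegment.trans <|
    closure_mono <| hf.subset_of_isPreconnected (convex_openSegment x y).isPreconnected hsub
      ⟨z, hz, hzf⟩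
  exact ⟨f, hf, ⟨x, hx, hclosure (left_mem_segment ℝ x y)⟩,
    ⟨y, hy, hclosure (right_mem_segment ℝ x y)⟩⟩

namespace PlaneEmbedding

variable {G : SimpleGraph V} {E : PlaneEmbedding G} {f X : Set ℂ} {u v w : V}

/-- The part of the drawing made up of the vertices in `S` and the edges at these vertices. -/
def drawingAt (E : PlaneEmbedding G) (S : Set V) : Set ℂ :=
  E.vtx '' S ∪ ⋃ (u ∈ S) (v : V) (_ : G.Adj u v), E.arc u v

theorem mem_drawingAt_iff {S : Set V} {x : ℂ} :
    x ∈ E.drawingAt S ↔ (∃ u ∈ S, x = E.vtx u) ∨ ∃ u v, u ∈ S ∧ G.Adj u v ∧ x ∈ E.arc u v := by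
  simp only [drawingAt, mem_union, mem_image, mem_iUnion, exists_prop, eq_comm]
  grind

theorem drawing_eq_drawingAt_union (E : PlaneEmbedding G) (S : Set V) :
    E.drawing = E.drawingAt S ∪ E.drawingAt Sᶜ := by
  ext x
  simp only [mem_union, mem_drawing_iff, mem_drawingAt_iff, mem_compl_iff]
  grind

theorem disjoint_drawingAt_compl {S : Set V} (hS : ∀ ⦃u v⦄, G.Adj u v → (u ∈ S ↔ v ∈ S)) :
    Disjoint (E.drawingAt S) (E.drawingAt Sᶜ) := by
  have mem_iff {T : Set V} (hT : ∀ ⦃u v⦄, G.Adj u v → (u ∈ T ↔ v ∈ T)) {u : V}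
      (hu : E.vtx u ∈ E.drawingAt T) : u ∈ T := by
    obtain ⟨v, hv, h⟩ | ⟨v, w, hv, hvw, h⟩ := mem_drawingAt_iff.1 hu
    · exact E.vtx_inj h ▸ hv
    · obtain rfl | rfl := E.arc_vtx hvw u h
      exacts [hv, (hT hvw).1 hv]
  have hSc : ∀ ⦃u v⦄, G.Adj u v → (u ∈ Sᶜ ↔ v ∈ Sᶜ) := fun u v huv => not_congr (hS huv)
  refine disjoint_left.2 fun x hx hx' => ?_
  suffices ∃ w, x = E.vtx w by
    obtain ⟨w, rfl⟩ := this
    exact mem_iff hSc hx' (mem_iff hS hx)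
  obtain ⟨u, -, h⟩ | ⟨u, v, hu, huv, h⟩ := mem_drawingAt_iff.1 hx
  · exact ⟨u, h⟩
  obtain ⟨u', -, h'⟩ | ⟨u', v', hu', huv', h'⟩ := mem_drawingAt_iff.1 hx'
  · exact ⟨u', h'⟩
  by_contra! hxv
  obtain ⟨rfl, -⟩ | ⟨-, rfl⟩ := Sym2.eq_iff.1 (arc_eq_of_mem huv h hxv huv' h')
  exacts [hu' hu, hu' ((hS huv).1 hu)]

theorem turn_sub_turn_eq_of_cycle {b c d e : ℂ} {A A' : Set ℂ} (hE : E.IsPolygonal)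
    (huv : G.Adj u v) (huw : G.Adj u w) (hvw : G.Adj v w)
    (hb : IsStart (E.vtx u) (E.vtx v) (E.arc u v) b A)
    (hc : IsStart (E.vtx u) (E.vtx w) (E.arc u w) c A') (hX : IsPreconnected X)
    (hXuv : Disjoint X (E.arc u v)) (hXuw : Disjoint X (E.arc u w))
    (hXvw : Disjoint X (E.arc v w)) (hd : RayStartsIn X (E.vtx u) d)
    (he : RayStartsIn X (E.vtx u) e) :
    turn b d - turn c d = turn b e - turn c e := by
  have hlog : HasLog (A ∪ E.arc v w ∪ A') (E.vtx u + b) (E.vtx u + c) :=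
    (hb.hasLog.trans (hE hvw).hasLog hb.right_mem).trans hc.hasLog.symm
      (Or.inr (E.right_mem_arc hvw))
  have hu : E.vtx u ∉ A ∪ E.arc v w ∪ A' := by
    rintro ((h | h) | h)
    exacts [hb.notMem h, (E.arc_vtx hvw u h).elim huv.ne huw.ne, hc.notMem h]
  exact hlog.turn_sub_turn_eq
    ((hb.isClosed.union (E.isCompact_arc hvw).isClosed).union hc.isClosed) hu
    (Or.inl (Or.inl hb.add_mem)) (Or.inr hc.add_mem) hX (hXuv.mono_right hb.segment_subset)
    (hXuw.mono_right hc.segment_subset)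
    (((hXuv.mono_right hb.subset).union_right hXvw).union_right (hXuw.mono_right hc.subset)) hd he

/-- The face `f` and the arc from `a` to `d` lie on the same side of the cycle `abc`. -/
theorem IsPolygonal.turn_sub_turn_eq_of_mem_closure {a b c d : V} {x y z e : ℂ}
    {A₁ A₂ A₃ : Set ℂ} (hE : E.IsPolygonal) (hf : IsFace E.drawing f) (hab : G.Adj a b)
    (hac : G.Adj a c) (had : G.Adj a d) (hbc : G.Adj b c) (hbd : b ≠ d) (hcd : c ≠ d)
    (hx : IsStart (E.vtx a) (E.vtx b) (E.arc a b) x A₁)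
    (hy : IsStart (E.vtx a) (E.vtx c) (E.arc a c) y A₂)
    (hz : IsStart (E.vtx a) (E.vtx d) (E.arc a d) z A₃) (hd : E.vtx d ∈ closure f)
    (he : RayStartsIn f (E.vtx a) e) :
    turn x e - turn y e = turn x z - turn y z := by
  set X : Set ℂ := insert (E.vtx d) f ∪ E.arc a d \ {E.vtx a}
  have hX : IsPreconnected X :=
    (hf.isPreconnected.subset_closure (subset_insert _ _)
      (insert_subset hd subset_closure)).union (E.vtx d) (mem_insert _ _)
      ⟨E.right_mem_arc had, E.vtx_inj.ne had.ne.symm⟩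
      (IsArc.isPreconnected_diff_left (E.arc_curve had))
  have hdisj {u v : V} (huv : G.Adj u v) (hu : u ≠ d) (hv : v ≠ d) : Disjoint X (E.arc u v) := by
    have hdarc : E.vtx d ∉ E.arc u v := fun h => (E.arc_vtx huv d h).elim hu.symm hv.symm
    refine disjoint_left.2 ?_
    rintro p ((rfl | hp) | ⟨hp, hpa⟩) hpuv
    · exact hdarc hpuv
    · exact hf.subset hp (E.arc_subset_drawing huv hpuv)
    · have hne : s(a, d) ≠ s(u, v) := fun h => by
        have : d ∈ s(u, v) := h ▸ Sym2.mem_mk_right a d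
        exact (Sym2.mem_iff.1 this).elim hu.symm hv.symm
      obtain rfl | rfl := (E.arc_inter had huv hne ⟨hp, hpuv⟩).1
      exacts [hpa rfl, hdarc hpuv]
  have hzX : RayStartsIn X (E.vtx a) z := by
    have hza : RayStartsIn {E.vtx a}ᶜ (E.vtx a) z := by
      filter_upwards [self_mem_nhdsWithin] with s (hs : 0 < s)
      simp [hs.ne', hz.ne_zero]
    exact (((rayStartsIn_segment hz.ne_zero (SameRay.refl z)).inter hza).mono
      (inter_subset_inter_left _ hz.segment_subset)).mono subset_union_right
  exact turn_sub_turn_eq_of_cycle hE hab hac hbc hx hy hX (hdisj hab had.ne hbd)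
    (hdisj hac had.ne hcd) (hdisj hbc hbd hcd)
    (he.mono ((subset_insert _ _).trans subset_union_left)) hzX

variable [Finite V]

theorem isCompact_drawingAt (E : PlaneEmbedding G) (S : Set V) : IsCompact (E.drawingAt S) :=
  (S.toFinite.image _).isCompact.union <| S.toFinite.isCompact_biUnion fun _ _ =>
    isCompact_iUnion fun _ => isCompact_iUnion E.isCompact_arc

namespace IsPolygonal

theorem exists_vtx_mem_closure (hE : E.IsPolygonal) (hf : IsFace E.drawing f) {S : Set V}
    (hS : ∀ ⦃u v⦄, G.Adj u v → u ∈ S → v ∈ S) {x : ℂ} (hx : x ∈ E.drawingAt S)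
    (hxf : x ∈ closure f) : ∃ u ∈ S, E.vtx u ∈ closure f := by
  obtain ⟨u, hu, rfl⟩ | ⟨u, v, hu, huv, h⟩ := mem_drawingAt_iff.1 hx
  · exact ⟨u, hu, hxf⟩
  by_cases hxuv : x ∈ ({E.vtx u, E.vtx v} : Set ℂ)
  · obtain rfl | rfl := hxuv
    exacts [⟨u, hu, hxf⟩, ⟨v, hS huv hu, hxf⟩]
  · exact ⟨u, hu, hE.arc_subset_closure hf huv ⟨h, hxuv⟩ hxf (E.left_mem_arc huv)⟩

theorem preconnected (hE : E.IsPolygonal) (hG : MaximalPlanar G) : G.Preconnected := by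
  intro a b
  by_contra hab
  set S : Set V := {v | G.Reachable a v}
  have hS : ∀ ⦃u v⦄, G.Adj u v → (u ∈ S ↔ v ∈ S) := fun u v huv =>
    ⟨fun h => h.trans huv.reachable, fun h => h.trans huv.symm.reachable⟩
  obtain ⟨f, hf, ⟨x, hx, hxf⟩, y, hy, hyf⟩ := exists_isFace_of_disjoint
    (E.isCompact_drawingAt S) (E.isCompact_drawingAt Sᶜ)
    ⟨E.vtx a, Or.inl ⟨a, Reachable.refl a, rfl⟩⟩ ⟨E.vtx b, Or.inl ⟨b, hab, rfl⟩⟩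
    (disjoint_drawingAt_compl hS)
  rw [← E.drawing_eq_drawingAt_union] at hf
  obtain ⟨u, hu, huf⟩ := hE.exists_vtx_mem_closure hf (fun _ _ h => (hS h).1) hx hxf
  obtain ⟨v, hv, hvf⟩ := hE.exists_vtx_mem_closure hf (fun _ _ h => mt (hS h).2) hy hyf
  have huv : u ≠ v := fun h => hv (h ▸ hu)
  exact hv ((hS (hE.adj_of_mem_closure hG hf huv huf hvf)).1 hu)

theorem exists_adj_ne (hE : E.IsPolygonal) (hG : MaximalPlanar G) (hV : 3 ≤ Nat.card V)
    (huv : G.Adj u v) : ∃ w, G.Adj u w ∧ w ≠ v := by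
  obtain ⟨x, hx⟩ : ∃ x, x ∉ ({u, v} : Set V) := by
    by_contra! h
    have := ncard_pair huv.ne
    rw [eq_univ_of_forall h, ncard_univ] at this
    omega
  obtain ⟨p⟩ := hE.preconnected hG u x
  obtain ⟨e, -, he, hx'⟩ := p.exists_boundary_dart {u, v} (mem_insert u _) hx
  obtain ⟨⟨a, w⟩, haw⟩ := e
  simp only [mem_insert_iff, mem_singleton_iff, not_or] at he hx'
  obtain rfl | rfl := he
  · exact ⟨w, haw, hx'.2⟩
  obtain ⟨f, hf, hsub⟩ := hE.exists_face_arc huv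
  obtain ⟨w', hvw', hne, hsub'⟩ := hE.exists_arc_subset_closure hf (hsub (E.right_mem_arc huv))
    huv.symm haw (Ne.symm hx'.1)
  exact ⟨w', hE.adj_of_mem_closure hG hf hne.symm (hsub (E.left_mem_arc huv))
    (hsub' (E.right_mem_arc hvw')), hvw'.ne.symm⟩

theorem not_four_mem_closure (hE : E.IsPolygonal) (hG : MaximalPlanar G)
    (hf : IsFace E.drawing f) {a b c d : V} (hab : a ≠ b) (hac : a ≠ c) (had : a ≠ d)
    (hbc : b ≠ c) (hbd : b ≠ d) (hcd : c ≠ d) (ha : E.vtx a ∈ closure f)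
    (hb : E.vtx b ∈ closure f) (hc : E.vtx c ∈ closure f) : E.vtx d ∉ closure f := fun hd => by
  have adj {u v : V} (huv : u ≠ v) (hu : E.vtx u ∈ closure f) (hv : E.vtx v ∈ closure f) :
      G.Adj u v := hE.adj_of_mem_closure hG hf huv hu hv
  have hab' := adj hab ha hb
  have hac' := adj hac ha hc
  have had' := adj had ha hd
  obtain ⟨x, _, hx⟩ := (hE hab').exists_isStart
  obtain ⟨y, _, hy⟩ := (hE hac').exists_isStart
  obtain ⟨z, _, hz⟩ := (hE had').exists_isStart
  obtain ⟨ε, hconic, hε⟩ := ((hE.eventually_conic (E.vtx a)).and self_mem_nhdsWithin).exists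
  obtain ⟨q, hq, hqf⟩ := mem_closure_iff_nhds.1 ha _ (ball_mem_nhds _ hε)
  have hray := hf.rayStartsIn hconic hqf hq
  exact turn_sub_turn_ne (not_sameRay_of_isStart hab' hac' hbc hx hy)
    (not_sameRay_of_isStart hab' had' hbd hx hz) (not_sameRay_of_isStart hac' had' hcd hy hz)
    (hE.turn_sub_turn_eq_of_mem_closure hf hab' hac' had' (adj hbc hb hc) hbd hcd hx hy hz hd hray)
    (hE.turn_sub_turn_eq_of_mem_closure hf hab' had' hac' (adj hbd hb hd) hbc hcd.symm hx hz hy hc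
      hray)
    (hE.turn_sub_turn_eq_of_mem_closure hf hac' had' hab' (adj hcd hc hd) hbc.symm hbd.symm hy hz
      hx hb hray)

end IsPolygonal

end PlaneEmbedding

end FacesOfTriangulations

section TwoSides

open Set Topology Metric Filter

theorem disjoint_halfDisc {D : Set ℂ} {a b p : ℂ} {ε : ℝ} (hp : p ∈ segment ℝ a (a + b))
    (h : ball p ε ∩ D ⊆ segment ℝ a (a + b)) :
    Disjoint (halfDisc p b ε) D ∧ Disjoint (halfDisc p (-b) ε) D := by
  have him {z : ℂ} (hzp : z ∈ ball p ε) (hz : z ∈ D) : ((z - p) / b).im = 0 := by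
    have h₁ := im_div_eq_zero_of_mem_segment (h ⟨hzp, hz⟩)
    have h₂ := im_div_eq_zero_of_mem_segment hp
    rw [add_sub_cancel_left] at h₁ h₂
    rw [← sub_sub_sub_cancel_right z p a, sub_div, Complex.sub_im, h₁, h₂, sub_zero]
  constructor <;> refine Set.disjoint_left.2 fun z ⟨hzp, hz⟩ hzD => ?_
  · exact (him hzp hzD).not_gt hz
  · rw [mem_ofPred_eq, div_neg, Complex.neg_im, him hzp hzD, neg_zero] at hz
    exact lt_irrefl _ hz

namespace PlaneEmbedding

variable {G : SimpleGraph V} {E : PlaneEmbedding G} {f : Set ℂ} {u v w : V}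

namespace IsPolygonal

/-- Otherwise directions on either side of `b` would start in the same face, without being
separated by the cycle `uvw`. -/
theorem not_halfDisc_subset (hE : E.IsPolygonal) (hf : IsFace E.drawing f) (huv : G.Adj u v)
    (huw : G.Adj u w) (hvw : G.Adj v w) {b : ℂ} {A : Set ℂ} {r ε η : ℝ}
    (hb : IsStart (E.vtx u) (E.vtx v) (E.arc u v) b A) (hr : 0 < r) (hη : 0 < η)
    (hconic : Conic E.drawing (E.vtx u) ε) (hp : E.vtx u + r • b ∈ Metric.ball (E.vtx u) ε)
    (hsub : halfDisc (E.vtx u + r • b) b η ⊆ f) :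
    ¬ halfDisc (E.vtx u + r • b) (-b) η ⊆ f := fun hsub' => by
  obtain ⟨c, A', hc⟩ := (hE huw).exists_isStart
  have hray {y : ℂ} (h : RayStartsIn f (E.vtx u + r • b) (b * y)) :
      ∀ᶠ τ : ℝ in 𝓝[>] 0, RayStartsIn f (E.vtx u) (b * (r + τ * y)) := by
    filter_upwards [h, RayStartsIn.of_mem_nhds (isOpen_ball.mem_nhds hp)] with τ hτ hτε
    have := hf.rayStartsIn hconic hτ hτε
    rwa [show E.vtx u + r • b + τ • (b * y) - E.vtx u = b * (r + τ * y) by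
      simp only [Complex.real_smul]; ring] at this
  have hleft := hray ((rayStartsIn_halfDisc hη (by simp [hb.ne_zero])).mono hsub)
    (y := Complex.I)
  have him : 0 < (b * -Complex.I / -b).im := by
    rw [mul_neg, neg_div_neg_eq, mul_div_cancel_left₀ _ hb.ne_zero]
    simp
  have hright := hray ((rayStartsIn_halfDisc hη him).mono hsub')
  have hdisj {x y : V} (hxy : G.Adj x y) : Disjoint f (E.arc x y) :=
    (subset_compl_iff_disjoint_right.1 hf.subset).mono_right (E.arc_subset_drawing hxy)
  obtain ⟨τ, hne, hl, hr⟩ := ((exists_turn_sub_turn_ne hr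
    (not_sameRay_of_isStart huw huv hvw.ne.symm hc hb)).and_eventually (hleft.and hright)).exists
  refine hne (turn_sub_turn_eq_of_cycle hE huv huw hvw hb hc hf.isPreconnected (hdisj huv)
    (hdisj huw) (hdisj hvw) hl ?_)
  simpa using hr

variable [Finite V]

theorem exists_third_vertex (hE : E.IsPolygonal) (hG : MaximalPlanar G) (hV : 3 ≤ Nat.card V)
    (hf : IsFace E.drawing f) (huv : G.Adj u v) (h : E.arc u v ⊆ closure f) :
    ∃ w, G.Adj u w ∧ G.Adj v w ∧ E.arc u w ⊆ closure f ∧ E.arc v w ⊆ closure f ∧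
      ∀ x, E.vtx x ∈ closure f ↔ x = u ∨ x = v ∨ x = w := by
  have hu := h (E.left_mem_arc huv)
  have hv := h (E.right_mem_arc huv)
  obtain ⟨a, hua, hav⟩ := hE.exists_adj_ne hG hV huv
  obtain ⟨w, huw, hwv, hw⟩ := hE.exists_arc_subset_closure hf hu huv hua hav.symm
  obtain ⟨b, hvb, hbu⟩ := hE.exists_adj_ne hG hV huv.symm
  obtain ⟨w', hvw', hwu', hw'⟩ := hE.exists_arc_subset_closure hf hv huv.symm hvb hbu.symm
  have hwf := hw (E.right_mem_arc huw)
  have hall {x : V} (hx : E.vtx x ∈ closure f) (hxu : x ≠ u) (hxv : x ≠ v) : x = w := by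
    by_contra hxw
    exact hE.not_four_mem_closure hG hf huv.ne huw.ne hxu.symm hwv.symm hxv.symm (Ne.symm hxw)
      hu hv hwf hx
  obtain rfl := hall (hw' (E.right_mem_arc hvw')) hwu' hvw'.ne.symm
  refine ⟨w', huw, hvw', hw, hw', fun x => ⟨fun hx => ?_, ?_⟩⟩
  · by_contra! hne
    exact hne.2.2 (hall hx hne.1 hne.2.1)
  · rintro (rfl | rfl | rfl)
    exacts [hu, hv, hwf]

theorem exists_arc (hE : E.IsPolygonal) (hG : MaximalPlanar G) (hV : 3 ≤ Nat.card V)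
    (hf : IsFace E.drawing f) : ∃ u v, G.Adj u v ∧ E.arc u v ⊆ closure f := by
  have : Nontrivial V := Finite.one_lt_card_iff_nontrivial.1 (by omega)
  have of_vtx_mem {u : V} (hu : E.vtx u ∈ closure f) :
      ∃ u v, G.Adj u v ∧ E.arc u v ⊆ closure f := by
    obtain ⟨v, huv⟩ := (hE.preconnected hG).exists_adj_of_nontrivial u
    obtain ⟨w, huw, hwv⟩ := hE.exists_adj_ne hG hV huv
    obtain ⟨w', huw', -, h⟩ := hE.exists_arc_subset_closure hf hu huv huw hwv.symm
    exact ⟨u, w', huw', h⟩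
  obtain ⟨x, hx, hxf⟩ : ∃ x ∈ E.drawing, x ∈ closure f := by
    by_contra! h
    have hclosed : IsClosed f := closure_subset_iff_isClosed.1 fun x hx =>
      hf.mem_of_mem_closure E.isClosed_drawing hx fun hxD => h x hxD hx
    have huniv : f = univ :=
      IsClopen.eq_univ ⟨hclosed, hf.isOpen E.isClosed_drawing⟩ hf.nonempty
    obtain ⟨u⟩ : Nonempty V := inferInstance
    exact hf.subset (huniv ▸ mem_univ (E.vtx u)) (E.vtx_mem_drawing u)
  obtain ⟨u, rfl⟩ | ⟨u, v, huv, hxuv⟩ := mem_drawing_iff.1 hx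
  · exact of_vtx_mem hxf
  by_cases hends : x ∈ ({E.vtx u, E.vtx v} : Set ℂ)
  · obtain rfl | rfl := hends <;> exact of_vtx_mem hxf
  · exact ⟨u, v, huv, hE.arc_subset_closure hf huv ⟨hxuv, hends⟩ hxf⟩

theorem arc_subset_closure_of_vtx_mem (hE : E.IsPolygonal) (hG : MaximalPlanar G)
    (hV : 3 ≤ Nat.card V) (hf : IsFace E.drawing f) (huv : u ≠ v) (hu : E.vtx u ∈ closure f)
    (hv : E.vtx v ∈ closure f) : E.arc u v ⊆ closure f := by
  obtain ⟨a, b, hab, h⟩ := hE.exists_arc hG hV hf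
  obtain ⟨c, -, -, hac, hbc, hall⟩ := hE.exists_third_vertex hG hV hf hab h
  have hba := E.arc_symm a b ▸ h
  have hca := E.arc_symm a c ▸ hac
  have hcb := E.arc_symm b c ▸ hbc
  rcases (hall u).1 hu with rfl | rfl | rfl <;> rcases (hall v).1 hv with rfl | rfl | rfl <;>
    first | assumption | exact (huv rfl).elim

theorem exists_point_of_isStart (hE : E.IsPolygonal) (huv : G.Adj u v) {b : ℂ} {A : Set ℂ}
    (hb : IsStart (E.vtx u) (E.vtx v) (E.arc u v) b A) :
    ∃ r > (0 : ℝ), E.vtx u + r • b ∈ segment ℝ (E.vtx u) (E.vtx u + b) ∧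
      E.vtx u + r • b ∈ E.arc u v \ {E.vtx u, E.vtx v} ∧
      (∃ ε, Conic E.drawing (E.vtx u) ε ∧ E.vtx u + r • b ∈ Metric.ball (E.vtx u) ε) ∧
      ∃ η > 0, Metric.ball (E.vtx u + r • b) η ∩ E.drawing ⊆ segment ℝ (E.vtx u) (E.vtx u + b) := by
  obtain ⟨ε, hconic, hε⟩ := ((hE.eventually_conic (E.vtx u)).and self_mem_nhdsWithin).exists
  have hA : Aᶜ ∈ 𝓝 (E.vtx u) := hb.isClosed.isOpen_compl.mem_nhds hb.notMem
  obtain ⟨r, ⟨hrb, hrA, hrε⟩, hr : 0 < r⟩ := (((rayStartsIn_segment hb.ne_zero (.refl b)).inter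
    ((RayStartsIn.of_mem_nhds hA).inter (.of_mem_nhds (ball_mem_nhds _ hε)))).and
    self_mem_nhdsWithin).exists
  set p := E.vtx u + r • b
  have hpu : p ≠ E.vtx u := by simp [p, hr.ne', hb.ne_zero]
  have hpv : p ≠ E.vtx v := fun h => hrA (h ▸ hb.right_mem)
  have hpw (w : V) : p ≠ E.vtx w := fun h => by
    obtain rfl | rfl := E.arc_vtx huv w (h ▸ hb.segment_subset hrb)
    exacts [hpu h, hpv h]
  have hnhds : ∀ᶠ x in 𝓝 p, x ∈ E.drawing → x ∈ segment ℝ (E.vtx u) (E.vtx u + b) := by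
    filter_upwards [eventually_mem_arc huv (hb.segment_subset hrb) hpw,
      hb.isClosed.isOpen_compl.mem_nhds hrA] with x hx hxA hxD
    exact (hb.eq_union ▸ hx hxD).resolve_right hxA
  obtain ⟨η, hη, hball⟩ := eventually_nhds_iff_ball.1 hnhds
  exact ⟨r, hr, hrb, ⟨hb.segment_subset hrb, not_or.2 ⟨hpu, hpv⟩⟩, ⟨ε, hconic, hrε⟩, η, hη,
    fun x hx => hball x hx.1 hx.2⟩

theorem ncard_faces (hE : E.IsPolygonal) (hG : MaximalPlanar G) (hV : 3 ≤ Nat.card V)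
    (huv : G.Adj u v) : {f | IsFace E.drawing f ∧ E.arc u v ⊆ closure f}.ncard = 2 := by
  obtain ⟨b, A, hb⟩ := (hE huv).exists_isStart
  obtain ⟨r, hr, hpb, hp, ⟨ε, hconic, hpε⟩, η, hη, hball⟩ := hE.exists_point_of_isStart huv hb
  have hD := E.isClosed_drawing
  obtain ⟨hleft, hright⟩ := disjoint_halfDisc hpb hball
  obtain ⟨f, hf, hfb, hpf⟩ := IsFace.exists_halfDisc_subset hb.ne_zero hη hleft
  obtain ⟨g, hg, hgb, hpg⟩ := IsFace.exists_halfDisc_subset (neg_ne_zero.2 hb.ne_zero) hη hright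
  have hset : {f | IsFace E.drawing f ∧ E.arc u v ⊆ closure f} = {f, g} := by
    ext k
    refine ⟨fun ⟨hk, hsub⟩ => IsFace.eq_or_eq_of_halfDisc_subset hD hb.ne_zero hη hf hg hfb hgb
      hk (hsub hp.1), ?_⟩
    rintro (rfl | rfl)
    exacts [⟨hf, hE.arc_subset_closure hf huv hp hpf⟩, ⟨hg, hE.arc_subset_closure hg huv hp hpg⟩]
  have hfg : f ≠ g := by
    rintro rfl
    obtain ⟨w, huw, hvw, -⟩ := hE.exists_third_vertex hG hV hf huv
      (hE.arc_subset_closure hf huv hp hpf)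
    exact hE.not_halfDisc_subset hf huv huw hvw hb hr hη hconic hpε hfb hgb
  rw [hset, ncard_pair hfg]

theorem finite_faces (hE : E.IsPolygonal) (hG : MaximalPlanar G) (hV : 3 ≤ Nat.card V) :
    {f | IsFace E.drawing f}.Finite := by
  have hfin : (⋃ (u : V) (v : V) (_ : G.Adj u v),
      {f | IsFace E.drawing f ∧ E.arc u v ⊆ closure f}).Finite :=
    finite_iUnion fun u => finite_iUnion fun v => finite_iUnion fun huv =>
      finite_of_ncard_pos (by simp [hE.ncard_faces hG hV huv])
  refine hfin.subset fun f hf => ?_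
  obtain ⟨u, v, huv, h⟩ := hE.exists_arc hG hV hf
  simp only [mem_iUnion]
  exact ⟨u, v, huv, hf, h⟩

/-- The plane minus the vertices is connected and covered by the closures of the faces, so the
closures of the faces in `S` meet those of the remaining faces outside the vertices. -/
theorem exists_arc_subset_closure_of_notMem (hE : E.IsPolygonal) (hG : MaximalPlanar G)
    (hV : 3 ≤ Nat.card V) {S : Set (Set ℂ)} {g : Set ℂ} (hf : IsFace E.drawing f) (hfS : f ∈ S)
    (hg : IsFace E.drawing g) (hgS : g ∉ S) :
    ∃ f ∈ S, ∃ g ∉ S, IsFace E.drawing f ∧ IsFace E.drawing g ∧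
      ∃ u v, G.Adj u v ∧ E.arc u v ⊆ closure f ∧ E.arc u v ⊆ closure g := by
  have hconn : IsPreconnected (range E.vtx)ᶜ :=
    ((finite_range _).countable.isConnected_compl_of_one_lt_rank (by simp)).isPreconnected
  have hclosed (T : Set (Set ℂ)) : IsClosed (⋃ k ∈ {f | IsFace E.drawing f} ∩ T, closure k) :=
    ((hE.finite_faces hG hV).inter_of_left T).isClosed_biUnion fun _ _ => isClosed_closure
  have hcover : (range E.vtx)ᶜ ⊆ (⋃ k ∈ {f | IsFace E.drawing f} ∩ S, closure k) ∪
      ⋃ k ∈ {f | IsFace E.drawing f} ∩ Sᶜ, closure k := fun x _ => by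
    obtain ⟨k, hk, hxk⟩ := hE.exists_face x
    exact (em (k ∈ S)).imp (fun h => mem_biUnion ⟨hk, h⟩ hxk) (fun h => mem_biUnion ⟨hk, h⟩ hxk)
  have nonempty {T : Set (Set ℂ)} {k : Set ℂ} (hk : IsFace E.drawing k) (hkT : k ∈ T) :
      ((range E.vtx)ᶜ ∩ ⋃ k ∈ {f | IsFace E.drawing f} ∩ T, closure k).Nonempty := by
    obtain ⟨x, hx⟩ := hk.nonempty
    exact ⟨x, fun hxv => hk.subset hx (Or.inl hxv), mem_biUnion ⟨hk, hkT⟩ (subset_closure hx)⟩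
  obtain ⟨x, hxv, hxS, hxSc⟩ := isPreconnected_closed_iff.1 hconn _ _ (hclosed S) (hclosed Sᶜ)
    hcover (nonempty hf hfS) (nonempty hg hgS)
  obtain ⟨k, ⟨hk, hkS⟩, hxk⟩ := mem_iUnion₂.1 hxS
  obtain ⟨l, ⟨hl, hlS⟩, hxl⟩ := mem_iUnion₂.1 hxSc
  have hxD : x ∈ E.drawing := by
    by_contra hxD
    have hD := E.isClosed_drawing
    exact hlS (hk.eq_of_inter_nonempty hl
      ⟨x, hk.mem_of_mem_closure hD hxk hxD, hl.mem_of_mem_closure hD hxl hxD⟩ ▸ hkS)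
  obtain ⟨u, v, huv, hx⟩ := (mem_drawing_iff.1 hxD).resolve_left fun ⟨u, h⟩ => hxv ⟨u, h.symm⟩
  have hx' : x ∈ E.arc u v \ {E.vtx u, E.vtx v} :=
    ⟨hx, by rintro (rfl | rfl) <;> exact hxv (mem_range_self _)⟩
  exact ⟨k, hkS, l, hlS, hk, hl, u, v, huv, hE.arc_subset_closure hk huv hx' hxk,
    hE.arc_subset_closure hl huv hx' hxl⟩

end IsPolygonal

end PlaneEmbedding

end TwoSides

section FacialTriangles

namespace PlaneEmbedding

variable [Fintype V] {G : SimpleGraph V} {E : PlaneEmbedding G} {v : V}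

open Classical in
/-- The vertices on the boundary of a face; the faces of `E`, as a type, index the triangles of a
triangulation. -/
noncomputable def faceVertices (E : PlaneEmbedding G) (f : {f | IsFace E.drawing f}) : Finset V :=
  Finset.univ.filter fun v => E.vtx v ∈ closure f.1

theorem mem_faceVertices {f : {f | IsFace E.drawing f}} :
    v ∈ E.faceVertices f ↔ E.vtx v ∈ closure f.1 := by
  simp [faceVertices]

namespace IsPolygonal

theorem isNClique_faceVertices (hE : E.IsPolygonal) (hG : MaximalPlanar G) (hV : 3 ≤ Nat.card V)
    (f : {f | IsFace E.drawing f}) : G.IsNClique 3 (E.faceVertices f) := by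
  classical
  obtain ⟨u, v, huv, h⟩ := hE.exists_arc hG hV f.2
  obtain ⟨w, huw, hvw, -, -, hall⟩ := hE.exists_third_vertex hG hV f.2 huv h
  refine is3Clique_iff.2 ⟨u, v, w, huv, huw, hvw, ?_⟩
  ext x
  simpa [mem_faceVertices] using hall x

theorem preconnected_dualGraph (hE : E.IsPolygonal) (hG : MaximalPlanar G)
    (hV : 3 ≤ Nat.card V) : (dualGraph E.faceVertices).Preconnected := by
  intro f g
  by_contra hg
  obtain ⟨_, ⟨k, hfk, rfl⟩, l, hlR, -, hl, u, v, huv, huvk, huvl⟩ :=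
    hE.exists_arc_subset_closure_of_notMem hG hV
      (S := Subtype.val '' {k | (dualGraph E.faceVertices).Reachable f k}) f.2
      ⟨f, Reachable.refl f, rfl⟩ g.2 fun ⟨_, hgR, h⟩ => hg (Subtype.ext h ▸ hgR)
  have hkl : k ≠ ⟨l, hl⟩ := fun h => hlR ⟨k, hfk, congrArg Subtype.val h⟩
  have hadj : (dualGraph E.faceVertices).Adj k ⟨l, hl⟩ :=
    ⟨hkl, u, v, huv.ne, mem_faceVertices.2 (huvk (E.left_mem_arc huv)),
      mem_faceVertices.2 (huvk (E.right_mem_arc huv)),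
      mem_faceVertices.2 (huvl (E.left_mem_arc huv)),
      mem_faceVertices.2 (huvl (E.right_mem_arc huv))⟩
  exact hlR ⟨⟨l, hl⟩, hfk.trans hadj.reachable, rfl⟩

theorem isTriangulation (hE : E.IsPolygonal) (hG : MaximalPlanar G) (hV : 3 ≤ Nat.card V) :
    IsTriangulation G E.faceVertices where
  isNClique := hE.isNClique_faceVertices hG hV
  ncard_faces u v huv := by
    rw [← hE.ncard_faces hG hV huv, ← Set.ncard_image_of_injective _ Subtype.val_injective]
    congr 1
    ext f
    simp only [mem_faceVertices, Set.mem_image, Subtype.exists]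
    constructor
    · rintro ⟨f, hf, ⟨hu, hv⟩, rfl⟩
      exact ⟨hf, hE.arc_subset_closure_of_vtx_mem hG hV hf huv.ne hu hv⟩
    · rintro ⟨hf, h⟩
      exact ⟨f, hf, ⟨h (E.left_mem_arc huv), h (E.right_mem_arc huv)⟩, rfl⟩
  preconnected_dualGraph := hE.preconnected_dualGraph hG hV

end IsPolygonal

end PlaneEmbedding

end FacialTriangles

/-- If `G` is a planar triangulation on `n` vertices different from `K₄`,
then `ν(G) ≥ (2/3)(n - 2)`. -/
theorem nu_ge_of_planar_triangulation (V : Type) [Fintype V] (G : SimpleGraph V)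
    (hG : MaximalPlanar G)
    (hK4 : ¬ Nonempty (G ≃g (⊤ : SimpleGraph (Fin 4)))) :
    2 * (Fintype.card V - 2) ≤ 3 * nu G := by
  rcases Nat.lt_or_ge (Fintype.card V) 3 with hlt | hV
  · omega
  rw [← Nat.card_eq_fintype_card] at hV
  obtain ⟨E⟩ := hG.1
  obtain ⟨E, hE : E.IsPolygonal⟩ := E.exists_isPolygonal
  have := (hE.finite_faces hG hV).fintype
  have hT := hE.isTriangulation hG hV
  have hG' := hE.preconnected hG
  have := hT.two_mul_card_vertices_le hG'
  have := hT.card_faces_le_three_mul_nu hG' hK4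
  omega
end

section
/- If G is a 3-tree on 4 vertices, then τ(G) = 2 and ν(G) = 1; if G is a 3-tree on 5 vertices, then τ(G) = 3 and ν(G) = 2; and if G is a 3-tree on 6 vertices, then τ(G) ≤ 4 and ν(G) = 3. In particular, every 3-tree G with at most 6 vertices satisfies τ(G) ≤ (9/5)·ν(G) + 1/5. -/
open SimpleGraph

variable {V : Type*}

/-- `G` is a 3-tree: it can be built from `K₃` by repeatedly adding a new vertex adjacent
to the three vertices of an existing triangle.  This is expressed via a construction
ordering `e : Fin (n+3) ≃ V`: the first three vertices form a triangle, and every later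
vertex is adjacent, among earlier vertices, to exactly the vertices of a triangle. -/
def Is3Tree (G : SimpleGraph V) : Prop :=
  ∃ (n : ℕ) (e : Fin (n + 3) ≃ V),
    (∀ i j : Fin (n + 3), (i : ℕ) < 3 → (j : ℕ) < 3 → i ≠ j → G.Adj (e i) (e j)) ∧
    ∀ j : Fin (n + 3), 3 ≤ (j : ℕ) →
      ∃ s : Finset V, G.IsNClique 3 s ∧
        (∀ v ∈ s, ∃ i : Fin (n + 3), (i : ℕ) < (j : ℕ) ∧ e i = v) ∧
        ∀ i : Fin (n + 3), (i : ℕ) < (j : ℕ) → (G.Adj (e j) (e i) ↔ e i ∈ s)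

/-!
Let `G` be a 3-tree on `n + 3` vertices, built from a triangle by stacking vertices on triangles
`n` times.

* Each stacking creates three triangles, one for each edge of the triangle stacked on, and these
  can be hit by one new edge because a transversal already hits the latter. Hence `τ(G) ≤ n + 1`.
* `G` has `3 n + 1` triangles, and an edge lies in at most `n + 1` of them, so
  `3 n + 1 ≤ τ(G) (n + 1)`. For `n = 1, 2` this already forces `τ(G) = n + 1`.
* Two new triangles at a stacked vertex share an edge, so a packing uses at most one of them. As
  `ν(K₄) = 1`, this gives `ν(G) ≤ n` for `n ≥ 1`.
* Conversely, a new triangle can be added to a packing that leaves an edge of the triangle stacked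
  on unused. When a vertex is stacked on `K₄`, any edge of that `K₄` can be avoided by a packing of
  size two. Every triangle of the resulting graph has an edge in the `K₄`, so a further stacked
  vertex yields a third triangle.
-/

section

open Finset

variable {G : SimpleGraph V}

/-! ### Transversals and packings -/

namespace IsTriangleTransversal

variable {X : Finset (Sym2 V)}

theorem tau_le (hX : IsTriangleTransversal G X) : tau G ≤ #X :=
  Nat.sInf_le ⟨X, hX, rfl⟩

theorem exists_card_eq_tau (hX : IsTriangleTransversal G X) :
    ∃ Z, IsTriangleTransversal G Z ∧ #Z = tau G :=
  Nat.sInf_mem (s := {n | ∃ Z, IsTriangleTransversal G Z ∧ #Z = n}) ⟨_, X, hX, rfl⟩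

end IsTriangleTransversal

theorem card_triangles_containing_le [Fintype V] [DecidableEq V] [DecidableRel G.Adj] {e : Sym2 V}
    (he : e ∈ G.edgeSet) :
    #{t ∈ G.cliqueFinset 3 | e.toFinset ⊆ t} ≤ Fintype.card V - 2 := by
  have he2 : #e.toFinset = 2 := e.card_toFinset_of_not_isDiag (G.not_isDiag_of_mem_edgeSet he)
  calc #{t ∈ G.cliqueFinset 3 | e.toFinset ⊆ t}
      ≤ #((e.toFinsetᶜ).image fun c => insert c e.toFinset) := card_le_card fun t ht => by
        obtain ⟨ht, het⟩ := mem_filter.1 ht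
        obtain ⟨c, hc, rfl⟩ : ∃ c ∉ e.toFinset, insert c e.toFinset = t :=
          exists_eq_insert_iff.2 ⟨het, by rw [he2, (mem_cliqueFinset_iff.1 ht).card_eq]⟩
        exact mem_image_of_mem _ (mem_compl.2 hc)
    _ ≤ #(e.toFinsetᶜ) := card_image_le
    _ = Fintype.card V - 2 := by rw [card_compl, he2]

theorem IsTriangleTransversal.card_cliqueFinset_three_le [Fintype V] [DecidableEq V]
    [DecidableRel G.Adj] {X : Finset (Sym2 V)} (hX : IsTriangleTransversal G X) :
    #(G.cliqueFinset 3) ≤ #X * (Fintype.card V - 2) := by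
  have hcover : G.cliqueFinset 3 ⊆
      X.biUnion fun e => {t ∈ G.cliqueFinset 3 | e.toFinset ⊆ t} := fun t ht => by
    obtain ⟨e, heX, het⟩ := hX.2 t (mem_cliqueFinset_iff.1 ht)
    exact mem_biUnion.2 ⟨e, heX, mem_filter.2 ⟨ht, fun v hv => het v (Sym2.mem_toFinset.1 hv)⟩⟩
  exact (card_le_card hcover).trans
    (card_biUnion_le_card_mul _ _ _ fun e he => card_triangles_containing_le (hX.1 he))

theorem isTrianglePacking_empty : IsTrianglePacking G ∅ :=
  ⟨by simp, by simp⟩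

theorem isTrianglePacking_singleton {t : Finset V} (ht : G.IsNClique 3 t) :
    IsTrianglePacking G {t} :=
  ⟨by simpa using ht, fun r hr s hs hrs =>
    absurd ((mem_singleton.1 hr).trans (mem_singleton.1 hs).symm) hrs⟩

theorem nu_le {k : ℕ} (h : ∀ Y, IsTrianglePacking G Y → #Y ≤ k) : nu G ≤ k :=
  csSup_le ⟨0, ∅, isTrianglePacking_empty, rfl⟩ fun _ ⟨Y, hY, hcard⟩ => hcard ▸ h Y hY

namespace IsTrianglePacking

variable {Y Z : Finset (Finset V)}

theorem le_nu [Finite V] (hY : IsTrianglePacking G Y) : #Y ≤ nu G := by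
  cases nonempty_fintype V
  exact le_csSup ⟨Fintype.card (Finset V), fun _ ⟨Z, _, hcard⟩ => hcard ▸ card_le_univ Z⟩
    ⟨Y, hY, rfl⟩

theorem mono (hY : IsTrianglePacking G Y) (hZ : Z ⊆ Y) : IsTrianglePacking G Z :=
  ⟨fun t ht => hY.1 t (hZ ht), fun s hs t ht => hY.2 s (hZ hs) t (hZ ht)⟩

theorem eq_of_mem_of_mem (hY : IsTrianglePacking G Y) {s t : Finset V} (hs : s ∈ Y) (ht : t ∈ Y)
    {a b : V} (hab : a ≠ b) (has : a ∈ s) (hbs : b ∈ s) (hat : a ∈ t) (hbt : b ∈ t) : s = t := by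
  by_contra hst
  refine hY.2 s hs t ht hst s(a, b) ((hY.1 s hs).isClique has hbs hab) ⟨?_, ?_⟩ <;>
    simp [*]

theorem eq_of_erase_subset [DecidableEq V] (hY : IsTrianglePacking G Y) {s t N : Finset V}
    {v : V} (hs : s ∈ Y) (ht : t ∈ Y) (hvs : v ∈ s) (hvt : v ∈ t) (hN : #N ≤ 3)
    (hsN : s.erase v ⊆ N) (htN : t.erase v ⊆ N) : s = t := by
  have hcard : #N < #(s.erase v) + #(t.erase v) := by
    rw [card_erase_of_mem hvs, card_erase_of_mem hvt, (hY.1 s hs).card_eq, (hY.1 t ht).card_eq]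
    omega
  obtain ⟨a, ha⟩ := inter_nonempty_of_card_lt_card_add_card hsN htN hcard
  obtain ⟨has, hat⟩ := mem_inter.1 ha
  exact hY.eq_of_mem_of_mem hs ht (ne_of_mem_erase has) (mem_of_mem_erase has) hvs
    (mem_of_mem_erase hat) hvt

theorem card_le_one (hY : IsTrianglePacking G Y) {S : Finset V} (hS : #S ≤ 4)
    (hYS : ∀ t ∈ Y, t ⊆ S) : #Y ≤ 1 := by
  classical
  refine card_le_one_iff.2 fun {s t} hs ht => ?_
  have hcard : #S < #s + #t := by rw [(hY.1 s hs).card_eq, (hY.1 t ht).card_eq]; omega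
  obtain ⟨v, hv⟩ := inter_nonempty_of_card_lt_card_add_card (hYS s hs) (hYS t ht) hcard
  obtain ⟨hvs, hvt⟩ := mem_inter.1 hv
  refine hY.eq_of_erase_subset hs ht hvs hvt (N := S.erase v) ?_
    (erase_subset_erase v (hYS s hs)) (erase_subset_erase v (hYS t ht))
  rw [card_erase_of_mem (hYS s hs hvs)]
  omega

theorem insert_triangle [DecidableEq V] (hY : IsTrianglePacking G Y) {v a b : V}
    (ht : G.IsNClique 3 {v, a, b}) (hv : ∀ t ∈ Y, v ∉ t)
    (hab : ∀ t ∈ Y, a ∈ t → b ∉ t) : IsTrianglePacking G (insert {v, a, b} Y) := by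
  have hdisj : ∀ t ∈ Y, ∀ e ∈ G.edgeSet,
      ¬ ((∀ w ∈ e, w ∈ ({v, a, b} : Finset V)) ∧ ∀ w ∈ e, w ∈ t) := by
    rintro t htY ⟨x, y⟩ hxy ⟨hnew, hold⟩
    have hne : x ≠ y := G.ne_of_adj hxy
    have hmem : ∀ w ∈ s(x, y), (w = a ∨ w = b) ∧ w ∈ t := fun w hw =>
      ⟨by simpa [ne_of_mem_of_not_mem (hold w hw) (hv t htY)] using hnew w hw, hold w hw⟩
    obtain ⟨hx, hxt⟩ := hmem x (Sym2.mem_mk_left x y)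
    obtain ⟨hy, hyt⟩ := hmem y (Sym2.mem_mk_right x y)
    rcases hx with rfl | rfl <;> rcases hy with rfl | rfl
    · exact hne rfl
    · exact hab t htY hxt hyt
    · exact hab t htY hyt hxt
    · exact hne rfl
  refine ⟨forall_mem_insert _ _ _ |>.2 ⟨ht, hY.1⟩, fun r hr s hs hrs e he => ?_⟩
  rcases mem_insert.1 hr with rfl | hrY <;> rcases mem_insert.1 hs with rfl | hsY
  · exact absurd rfl hrs
  · exact hdisj s hsY e he
  · exact fun h => hdisj r hrY e he h.symm
  · exact hY.2 r hrY s hsY hrs e he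

end IsTrianglePacking

/-! ### Construction orderings -/

/-- The set of the first `k` vertices in the ordering `e`. -/
def firstVertices {m : ℕ} (e : Fin m ≃ V) (k : ℕ) : Finset V :=
  ({i : Fin m | (i : ℕ) < k} : Finset (Fin m)).map e.toEmbedding

section firstVertices

variable {m k : ℕ} (e : Fin m ≃ V)

theorem mem_firstVertices {v : V} : v ∈ firstVertices e k ↔ (e.symm v : ℕ) < k := by
  simp [firstVertices, mem_map_equiv]

theorem card_firstVertices (hk : k ≤ m) : #(firstVertices e k) = k := by
  rw [firstVertices, card_map, Fin.card_filter_val_lt, min_eq_right hk]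

theorem firstVertices_succ [DecidableEq V] (hk : k < m) :
    firstVertices e (k + 1) = insert (e ⟨k, hk⟩) (firstVertices e k) := by
  ext v
  rw [mem_insert, mem_firstVertices, mem_firstVertices, ← e.symm_apply_eq, Fin.ext_iff]
  exact Nat.lt_succ_iff_lt_or_eq.trans or_comm

theorem firstVertices_eq_univ [Fintype V] : firstVertices e m = univ :=
  eq_univ_of_forall fun v => (mem_firstVertices e).2 (e.symm v).isLt

end firstVertices

/-! ### Stacking a vertex on a triangle -/

variable [DecidableEq V]

/-- The vertex `v` lies outside `T` and its neighbours in `T` are the three vertices of the triangle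
`s ⊆ T`; this is the construction step of a 3-tree. -/
structure IsStackedOn (G : SimpleGraph V) (v : V) (s T : Finset V) : Prop where
  notMem : v ∉ T
  isNClique : G.IsNClique 3 s
  subset : s ⊆ T
  adj_iff : ∀ u ∈ T, G.Adj v u ↔ u ∈ s

namespace IsStackedOn

variable {v : V} {s T p t : Finset V}

theorem isNClique_insert_iff (h : IsStackedOn G v s T) (hp : p ⊆ T) :
    G.IsNClique 3 (insert v p) ↔ p ∈ s.powersetCard 2 := by
  have hvp : v ∉ p := fun hv => h.notMem (hp hv)
  rw [isNClique_iff, card_insert_of_notMem hvp, mem_powersetCard, coe_insert, isClique_insert]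
  constructor
  · rintro ⟨⟨-, hadj⟩, hcard⟩
    exact ⟨fun u hu => (h.adj_iff u (hp hu)).1 (hadj u hu (ne_of_mem_of_not_mem hu hvp).symm),
      by omega⟩
  · rintro ⟨hps, hcard⟩
    exact ⟨⟨h.isNClique.isClique.subset (coe_subset.2 hps),
      fun u hu _ => (h.adj_iff u (hp hu)).2 (hps hu)⟩, by omega⟩

theorem erase_mem_powersetCard (h : IsStackedOn G v s T) (ht : G.IsNClique 3 t)
    (htT : t ⊆ insert v T) (hvt : v ∈ t) : t.erase v ∈ s.powersetCard 2 :=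
  (h.isNClique_insert_iff (subset_insert_iff.1 htT)).1 (by rwa [insert_erase hvt])

theorem isNClique_triple (h : IsStackedOn G v s T) {a b : V} (ha : a ∈ s) (hb : b ∈ s)
    (hab : a ≠ b) : G.IsNClique 3 {v, a, b} := by
  have hpair : {a, b} ⊆ s := insert_subset ha (singleton_subset_iff.2 hb)
  exact (h.isNClique_insert_iff (hpair.trans h.subset)).2
    (mem_powersetCard.2 ⟨hpair, card_pair hab⟩)

theorem card_triangles_insert [DecidableRel G.Adj] (h : IsStackedOn G v s T) :
    #{t ∈ (insert v T).powerset | G.IsNClique 3 t} =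
      #{t ∈ T.powerset | G.IsNClique 3 t} + 3 := by
  have hnew : {p ∈ T.powerset | G.IsNClique 3 (insert v p)} = s.powersetCard 2 := by
    ext p
    rw [mem_filter, mem_powerset]
    exact ⟨fun ⟨hpT, hp⟩ => (h.isNClique_insert_iff hpT).1 hp, fun hp =>
      have hpT := (mem_powersetCard.1 hp).1.trans h.subset
      ⟨hpT, (h.isNClique_insert_iff hpT).2 hp⟩⟩
  have hinj : Set.InjOn (insert v) (s.powersetCard 2 : Set (Finset V)) :=
    insert_erase_invOn.2.injOn.mono fun p hp hvp =>
      h.notMem (h.subset ((mem_powersetCard.1 hp).1 hvp))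
  have hdisj : Disjoint {t ∈ T.powerset | G.IsNClique 3 t} ((s.powersetCard 2).image (insert v)) :=
    disjoint_left.2 fun t htT htv => by
      obtain ⟨p, -, rfl⟩ := mem_image.1 htv
      exact h.notMem (mem_powerset.1 (mem_filter.1 htT).1 (mem_insert_self v p))
  rw [powerset_insert, filter_union, filter_image, hnew, card_union_of_disjoint hdisj,
    card_image_of_injOn hinj, card_powersetCard, h.isNClique.card_eq]
  rfl

/-- Stacking `v` on a triangle `s` that already has an edge `e` in the transversal costs one edge:
the edge from `v` to the vertex of `s` off `e` meets the two new triangles that avoid `e`. -/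
theorem exists_transversal_insert (h : IsStackedOn G v s T) {X : Finset (Sym2 V)}
    (hXG : ↑X ⊆ G.edgeSet)
    (hX : ∀ t ⊆ T, G.IsNClique 3 t → ∃ e ∈ X, ∀ w ∈ e, w ∈ t) :
    ∃ c, ↑(insert s(v, c) X) ⊆ G.edgeSet ∧ ∀ t ⊆ insert v T, G.IsNClique 3 t →
      ∃ e ∈ insert s(v, c) X, ∀ w ∈ e, w ∈ t := by
  obtain ⟨e, heX, hes⟩ := hX s h.subset h.isNClique
  obtain ⟨c, hcs, hce⟩ : ∃ c ∈ s, c ∉ e.toFinset := by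
    refine exists_mem_notMem_of_card_lt_card ?_
    rw [e.card_toFinset_of_not_isDiag (G.not_isDiag_of_mem_edgeSet (hXG heX)),
      h.isNClique.card_eq]
    norm_num
  rw [Sym2.mem_toFinset] at hce
  refine ⟨c, ?_, fun t htT ht => ?_⟩
  · rw [coe_insert, Set.insert_subset_iff]
    exact ⟨(h.adj_iff c (h.subset hcs)).2 hcs, hXG⟩
  by_cases hvt : v ∈ t
  swap
  · obtain ⟨f, hf, hft⟩ := hX t ((subset_insert_iff_of_notMem hvt).1 htT) ht
    exact ⟨f, mem_insert_of_mem hf, hft⟩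
  by_cases hct : c ∈ t
  · exact ⟨s(v, c), mem_insert_self _ _, by simp [hvt, hct]⟩
  refine ⟨e, mem_insert_of_mem heX, fun w hw => ?_⟩
  obtain ⟨hts, hcard⟩ := mem_powersetCard.1 (h.erase_mem_powersetCard ht htT hvt)
  have hlink : t.erase v = s.erase c := by
    refine eq_of_subset_of_card_le (subset_erase.2 ⟨hts, fun hc => hct (mem_of_mem_erase hc)⟩) ?_
    rw [hcard, card_erase_of_mem hcs, h.isNClique.card_eq]
  exact mem_of_mem_erase
    (hlink ▸ mem_erase.2 ⟨ne_of_mem_of_not_mem hw hce, hes w hw⟩ : w ∈ t.erase v)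

theorem card_filter_mem_packing_le_one (h : IsStackedOn G v s T) {Y : Finset (Finset V)}
    (hY : IsTrianglePacking G Y) (hYT : ∀ t ∈ Y, t ⊆ insert v T) :
    #{t ∈ Y | v ∈ t} ≤ 1 := by
  have hlink : ∀ t ∈ Y, v ∈ t → t.erase v ⊆ s := fun t ht hvt =>
    (mem_powersetCard.1 (h.erase_mem_powersetCard (hY.1 t ht) (hYT t ht) hvt)).1
  refine card_le_one_iff.2 fun {r t} hr ht => ?_
  obtain ⟨hr, hvr⟩ := mem_filter.1 hr
  obtain ⟨ht, hvt⟩ := mem_filter.1 ht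
  exact hY.eq_of_erase_subset hr ht hvr hvt h.isNClique.card_eq.le (hlink r hr hvr)
    (hlink t ht hvt)

theorem isTrianglePacking_insert_and_card_eq (h : IsStackedOn G v s T) {Y : Finset (Finset V)}
    (hY : IsTrianglePacking G Y) (hYT : ∀ t ∈ Y, t ⊆ T) {a b : V} (ha : a ∈ s) (hb : b ∈ s)
    (hab : a ≠ b) (hYab : ∀ t ∈ Y, a ∈ t → b ∉ t) :
    IsTrianglePacking G (insert {v, a, b} Y) ∧ #(insert {v, a, b} Y) = #Y + 1 := by
  have hvY : ∀ t ∈ Y, v ∉ t := fun t ht hvt => h.notMem (hYT t ht hvt)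
  exact ⟨hY.insert_triangle (h.isNClique_triple ha hb hab) hvY hYab,
    card_insert_of_notMem fun hmem => hvY _ hmem (mem_insert_self _ _)⟩

theorem exists_packing_card_two_avoiding (h : IsStackedOn G v s T) (hT : G.IsNClique 4 T) {a b : V}
    (ha : a ∈ T) (hb : b ∈ T) (hab : a ≠ b) :
    ∃ Y, IsTrianglePacking G Y ∧ #Y = 2 ∧ (∀ t ∈ Y, t ⊆ insert v T) ∧
      ∀ t ∈ Y, a ∈ t → b ∉ t := by
  wlog has : a ∈ s generalizing a b
  · have hbs : b ∈ s := by
      by_contra hbs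
      have hcard : #(T \ s) ≤ 1 := by
        rw [card_sdiff_of_subset h.subset, hT.card_eq, h.isNClique.card_eq]
      exact hab (card_le_one.1 hcard a (mem_sdiff.2 ⟨ha, has⟩) b (mem_sdiff.2 ⟨hb, hbs⟩))
    obtain ⟨Y, hY, hcard, hYT, hYba⟩ := this hb ha hab.symm hbs
    exact ⟨Y, hY, hcard, hYT, fun t ht hat hbt => hYba t ht hbt hat⟩
  -- With `c` a vertex of `s` off `a` and `b`, the packing is `{T \ {a}, {v, a, c}}`.
  obtain ⟨c, hcs, hc⟩ : ∃ c ∈ s, c ∉ ({a, b} : Finset V) :=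
    exists_mem_notMem_of_card_lt_card (by rw [card_pair hab, h.isNClique.card_eq]; norm_num)
  obtain ⟨hca, hcb⟩ : c ≠ a ∧ c ≠ b := by simpa using hc
  obtain ⟨hY, hcard⟩ := h.isTrianglePacking_insert_and_card_eq
    (isTrianglePacking_singleton (hT.erase_of_mem ha)) (by simp [erase_subset]) has hcs hca.symm
    (by simp)
  have hbv : b ≠ v := ne_of_mem_of_not_mem hb h.notMem
  refine ⟨_, hY, hcard, ?_, ?_⟩
  · have := h.subset hcs
    simp [insert_subset_iff, (erase_subset a T).trans (subset_insert v T), *]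
  · simp [*, hab.symm, hcb.symm]

end IsStackedOn

/-! ### 3-trees inside a graph -/

/-- `Is3TreeOn G n S`: the subgraph of `G` induced on `S` is a 3-tree, obtained from a triangle by
stacking `n` vertices. Keeping the ambient graph fixed lets inductions run over subsets of `V`
rather than over vertex types. -/
inductive Is3TreeOn (G : SimpleGraph V) : ℕ → Finset V → Prop
  | triangle {S : Finset V} (hS : G.IsNClique 3 S) : Is3TreeOn G 0 S
  | stack {n : ℕ} {v : V} {s T : Finset V} (hT : Is3TreeOn G n T) (h : IsStackedOn G v s T) :
      Is3TreeOn G (n + 1) (insert v T)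

namespace Is3TreeOn

variable {n : ℕ} {S : Finset V}

theorem card_eq (h : Is3TreeOn G n S) : #S = n + 3 := by
  induction h with
  | triangle hS => exact hS.card_eq
  | stack _ h ih => rw [card_insert_of_notMem h.notMem, ih]

theorem isNClique_four (h : Is3TreeOn G 1 S) : G.IsNClique 4 S := by
  obtain _ | @⟨_, v, s, T, hT, hv⟩ := h
  obtain ⟨hT⟩ := hT
  obtain rfl : s = T := eq_of_subset_of_card_le hv.subset (by rw [hT.card_eq, hv.isNClique.card_eq])
  exact hT.insert fun u hu => (hv.adj_iff u hu).2 hu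

theorem card_triangles [DecidableRel G.Adj] (h : Is3TreeOn G n S) :
    #{t ∈ S.powerset | G.IsNClique 3 t} = 3 * n + 1 := by
  induction h with
  | @triangle S hS =>
    refine card_eq_one.2 ⟨S, ?_⟩
    ext t
    rw [mem_filter, mem_powerset, mem_singleton]
    constructor
    · rintro ⟨htS, ht⟩
      exact eq_of_subset_of_card_le htS (by rw [hS.card_eq, ht.card_eq])
    · rintro rfl
      exact ⟨Subset.rfl, hS⟩
  | stack _ h ih => rw [h.card_triangles_insert, ih]; ring

theorem exists_transversal (h : Is3TreeOn G n S) :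
    ∃ X : Finset (Sym2 V), ↑X ⊆ G.edgeSet ∧ #X ≤ n + 1 ∧
      ∀ t ⊆ S, G.IsNClique 3 t → ∃ e ∈ X, ∀ w ∈ e, w ∈ t := by
  induction h with
  | @triangle S hS =>
    obtain ⟨a, b, c, hab, -, -, rfl⟩ := is3Clique_iff.1 hS
    refine ⟨{s(a, b)}, by simpa using hab, by simp, fun t htS ht => ?_⟩
    obtain rfl := eq_of_subset_of_card_le htS (by rw [hS.card_eq, ht.card_eq])
    exact ⟨s(a, b), by simp⟩
  | stack _ h ih =>
    obtain ⟨X, hXG, hcard, hX⟩ := ih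
    obtain ⟨c, hcG, hc⟩ := h.exists_transversal_insert hXG hX
    exact ⟨_, hcG, (card_insert_le _ X).trans (by omega), hc⟩

theorem card_packing_le (h : Is3TreeOn G (n + 1) S) {Y : Finset (Finset V)}
    (hY : IsTrianglePacking G Y) (hYS : ∀ t ∈ Y, t ⊆ S) : #Y ≤ n + 1 := by
  induction n generalizing S Y with
  | zero => exact hY.card_le_one h.card_eq.le hYS
  | succ n ih =>
    obtain _ | @⟨_, v, s, T, hT, hv⟩ := h
    have hold : #{t ∈ Y | v ∉ t} ≤ n + 1 := ih hT (hY.mono (filter_subset _ Y)) fun t ht =>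
      have ⟨htY, hvt⟩ := mem_filter.1 ht
      (subset_insert_iff_of_notMem hvt).1 (hYS t htY)
    calc #Y = #{t ∈ Y | v ∈ t} + #{t ∈ Y | v ∉ t} := (card_filter_add_card_filter_not _).symm
      _ ≤ 1 + (n + 1) := add_le_add (hv.card_filter_mem_packing_le_one hY hYS) hold
      _ = n + 1 + 1 := add_comm _ _

theorem two_le_nu [Finite V] (h : Is3TreeOn G 2 S) : 2 ≤ nu G := by
  obtain _ | @⟨_, v, s, T, hT, hv⟩ := h
  have hT4 := hT.isNClique_four
  obtain ⟨a, ha, b, hb, hab⟩ := one_lt_card.1 (by rw [hT4.card_eq]; norm_num : 1 < #T)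
  obtain ⟨Y, hY, hcard, -⟩ := hv.exists_packing_card_two_avoiding hT4 ha hb hab
  exact hcard ▸ hY.le_nu

theorem three_le_nu [Finite V] (h : Is3TreeOn G 3 S) : 3 ≤ nu G := by
  obtain _ | @⟨_, w, r, _, hT, hw⟩ := h
  obtain _ | @⟨_, v, s, T, hT, hv⟩ := hT
  have hr : 1 < #(r.erase v) := by
    have := pred_card_le_card_erase (a := v) (s := r)
    rw [hw.isNClique.card_eq] at this
    omega
  obtain ⟨a, ha, b, hb, hab⟩ := one_lt_card.1 hr
  have hrT : r.erase v ⊆ T := subset_insert_iff.1 hw.subset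
  obtain ⟨Y, hY, hcard, hYT, hYab⟩ :=
    hv.exists_packing_card_two_avoiding hT.isNClique_four (hrT ha) (hrT hb) hab
  obtain ⟨hY', hcard'⟩ := hw.isTrianglePacking_insert_and_card_eq hY hYT (mem_of_mem_erase ha)
    (mem_of_mem_erase hb) hab hYab
  calc 3 = #(insert {w, a, b} Y) := by rw [hcard', hcard]
    _ ≤ nu G := hY'.le_nu

theorem one_le_nu [Finite V] (h : Is3TreeOn G n S) : 1 ≤ nu G := by
  induction h with
  | triangle hS => exact (isTrianglePacking_singleton hS).le_nu
  | stack _ _ ih => exact ih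

section Univ

variable [Fintype V]

theorem exists_isTriangleTransversal (h : Is3TreeOn G n univ) :
    ∃ X, IsTriangleTransversal G X ∧ #X ≤ n + 1 :=
  have ⟨X, hXG, hcard, hX⟩ := h.exists_transversal
  ⟨X, ⟨hXG, fun t ht => hX t (subset_univ t) ht⟩, hcard⟩

theorem tau_le (h : Is3TreeOn G n univ) : tau G ≤ n + 1 :=
  have ⟨_, hX, hcard⟩ := h.exists_isTriangleTransversal
  hX.tau_le.trans hcard

theorem three_mul_add_one_le_tau_mul (h : Is3TreeOn G n univ) : 3 * n + 1 ≤ tau G * (n + 1) := by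
  classical
  obtain ⟨X, hX, -⟩ := h.exists_isTriangleTransversal
  obtain ⟨Z, hZ, hcard⟩ := hX.exists_card_eq_tau
  calc 3 * n + 1 = #(G.cliqueFinset 3) := by rw [← h.card_triangles, powerset_univ]; rfl
    _ ≤ #Z * (Fintype.card V - 2) := hZ.card_cliqueFinset_three_le
    _ = tau G * (n + 1) := by rw [hcard, ← card_univ, h.card_eq]; rfl

theorem nu_le (h : Is3TreeOn G (n + 1) univ) : nu G ≤ n + 1 :=
  _root_.nu_le fun _ hY => h.card_packing_le hY fun t _ => subset_univ t

theorem tau_eq_two_and_nu_eq_one (h : Is3TreeOn G 1 univ) : tau G = 2 ∧ nu G = 1 := by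
  have := h.tau_le
  have := h.three_mul_add_one_le_tau_mul
  exact ⟨by omega, h.nu_le.antisymm h.one_le_nu⟩

theorem tau_eq_three_and_nu_eq_two (h : Is3TreeOn G 2 univ) : tau G = 3 ∧ nu G = 2 := by
  have := h.tau_le
  have := h.three_mul_add_one_le_tau_mul
  exact ⟨by omega, h.nu_le.antisymm h.two_le_nu⟩

theorem tau_le_four_and_nu_eq_three (h : Is3TreeOn G 3 univ) : tau G ≤ 4 ∧ nu G = 3 :=
  ⟨h.tau_le, h.nu_le.antisymm h.three_le_nu⟩

end Univ

end Is3TreeOn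

theorem Is3Tree.exists_is3TreeOn_univ [Fintype V] (h : Is3Tree G) : ∃ n, Is3TreeOn G n univ := by
  obtain ⟨n, e, hbase, hstep⟩ := h
  suffices hprefix : ∀ k ≤ n, Is3TreeOn G k (firstVertices e (k + 3)) from
    ⟨n, firstVertices_eq_univ e ▸ hprefix n le_rfl⟩
  intro k hk
  induction k with
  | zero =>
    refine .triangle ⟨fun u hu w hw huw => ?_, card_firstVertices e (by omega)⟩
    rw [mem_coe, mem_firstVertices] at hu hw
    simpa using hbase _ _ hu hw (e.symm.injective.ne huw)
  | succ k ih =>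
    obtain ⟨s, hs, hsub, hadj⟩ := hstep ⟨k + 3, by omega⟩ (by simp)
    rw [show k + 1 + 3 = k + 3 + 1 by rfl, firstVertices_succ e (by omega)]
    refine .stack (ih (by omega)) ⟨by simp [mem_firstVertices], hs, fun u hu => ?_, fun u hu => ?_⟩
    · obtain ⟨i, hi, rfl⟩ := hsub u hu
      simpa [mem_firstVertices] using hi
    · simpa using hadj (e.symm u) ((mem_firstVertices e).1 hu)

end

/-- Small 3-trees: if `G` is a 3-tree on `4` vertices then `τ(G) = 2` and `ν(G) = 1`;
on `5` vertices `τ(G) = 3` and `ν(G) = 2`; on `6` vertices `τ(G) ≤ 4` and `ν(G) = 3`.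
In particular every 3-tree on at most `6` vertices satisfies `τ(G) ≤ (9/5)·ν(G) + 1/5`. -/
theorem small_three_trees (V : Type) [Fintype V] (G : SimpleGraph V) (h3 : Is3Tree G) :
    (Fintype.card V = 4 → tau G = 2 ∧ nu G = 1) ∧
    (Fintype.card V = 5 → tau G = 3 ∧ nu G = 2) ∧
    (Fintype.card V = 6 → tau G ≤ 4 ∧ nu G = 3) ∧
    (Fintype.card V ≤ 6 → 5 * tau G ≤ 9 * nu G + 1) := by
  classical
  obtain ⟨n, hn⟩ := h3.exists_is3TreeOn_univ
  have hcard : Fintype.card V = n + 3 := hn.card_eq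
  rw [hcard]
  refine ⟨fun h => ?_, fun h => ?_, fun h => ?_, fun h => ?_⟩
  · obtain rfl : n = 1 := by omega
    exact hn.tau_eq_two_and_nu_eq_one
  · obtain rfl : n = 2 := by omega
    exact hn.tau_eq_three_and_nu_eq_two
  · obtain rfl : n = 3 := by omega
    exact hn.tau_le_four_and_nu_eq_three
  · obtain rfl | rfl | rfl | rfl : n = 0 ∨ n = 1 ∨ n = 2 ∨ n = 3 := by omega
    · linarith [hn.tau_le, hn.one_le_nu]
    · linarith [hn.tau_eq_two_and_nu_eq_one]
    · linarith [hn.tau_eq_three_and_nu_eq_two]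
    · linarith [hn.tau_le_four_and_nu_eq_three]
end
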